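/- For each r ∈ {5,6,7} (corresponding to split del Pezzo surfaces of degree e = 8−r ≤ 3) there exists a constant C_r ≥ 1 with the following property. Let q be a prime power with q > C_r, and fix pairwise distinct c₁,…,c_r ∈ 𝔽_q and pairwise distinct c₁′,…,c_r′ ∈ 𝔽_q. Then there exists a rational ε > 0 such that, with 𝒞_ε ⊆ N_r⊗ℝ the cone of nef classes α = (a,a′,k₁,…,k_r) satisfying 2a − Σk_i ≥ εh(α), 2a′ − Σk_i ≥ εh(α), and k_i ≥ εh(α) for all i, and with N(𝒞_ε,d) = (q−1)^{−2} Σ #M̃(a,a′,𝐤) summed over lattice points α ∈ 𝒞_ε ∩ N_r with 0 < h(α) ≤ d: the limit α(𝒞_ε) := lim_{d→∞} q^{−d} d^{−(r+1)} Σ_{α ∈ 𝒞_ε ∩ N_r, 0 < h(α) ≤ d} q^{h(α)} exists and is positive, and N(𝒞_ε, d)/(q^d d^{r+1}) → α(𝒞_ε) · τ_r(q) as d → ∞, where τ_r(q) = q²(1−q^{−1})^{−r−2} ∏_c (1−q^{−|c|})^{r+2}(1 + (r+2)q^{−|c|} + q^{−2|c|}). In particular the counting function N(𝒞_ε, d)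 has lower and upper bounds of the correct magnitude q^d d^{9−e}. -/

import Mathlib

/-!
Let `q` be the number of elements of the field, `S = ∑ kᵢ`, `u = 2a - S` and `w = 2a' - S`.

**Lattices.** Each point of `M̃(a, a', 𝐤)` has exactly `(q - 1) ^ r` choices of the greatest common
divisors `gᵢ` of `s₁ - cᵢ s₂` and `t₁ - cᵢ' t₂` (`Val_ncard`), and the `gᵢ` are pairwise coprime.
For fixed `g`, the pairs `s` with `gᵢ ∣ s₁ - cᵢ s₂` for all `i` form a graded module `Lat`, free of
rank two with basis vectors of degrees `μ ≤ ν`, `μ + ν = S` (`exists_basis`, `range_comb`). If `Lat`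
contains no short vector (`Balanced`), its elements of degree `a` are `p s₀ + p' s₁` with
`deg p, deg p' ≥ T` (`lat_param`), where `T` is proportional to the height.

**Equidistribution.** Forms of degree `≥ T` take independent uniformly distributed values at closed
points of total degree at most `T + 1` (`indep`). So for a finite set `P` of places and a balanced
`g`, the number of `(s, t)` without obstruction at `P` is exactly `q ^ (u + w + 4)` times a product
of local proportions (`count_good`), and averaging over `g` turns each proportion into the local
factor of `τ_r(q)` (`sum_W`, `sum_Wt`).

**Errors.** The local factor at `c` is `1 - O(q ^ (-2 |c|))`, so the places outside `P` of degree at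
most `T` are controlled by a union bound (`AP_diff`), uniformly small once `P` is large. Obstructions
at places of degree larger than `T`, and unbalanced families, are counted crudely by choosing one
form freely and bounding the number of divisors of the others by `q * 2 ^ deg`
(`crude_bad`, `crude_iii` and their variants). Every error is `O(2 ^ (504 T) q ^ (-T))` relative to
the main term, which is why `q > 2 ^ 504` is assumed. The result is `Val_main` and `Val_limit`.

**The cone.** The coordinates `u, w, k₁, …, k_r` of a class add up to its height, so `1 / (r + 2)` is
the largest `ε` with a nonempty cone. For `ε` equal to `999 / 1000` of that value all coordinates are
nearly equal: they lie in a window `[8T, 9T]`, as the error bounds require (`InCone.narrow`), and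
every such class is nef (`InCone.nef`). Classes of height `n` in the cone are the lattice points of
the dilate by `n` of a compact convex body of dimension `r + 1`, so their number is asymptotic to
`V n ^ (r + 1)` with `V > 0` (`slice_ncard`, `lattice_count`). Since the normalized counts tend to
`τ_r(q)` uniformly on the slices (`nrm_limit`), summation against `q ^ n` (`geom_weight_limit`,
`sum_limit`) gives both limits, with `α(𝒞_ε) = V / (1 - q⁻¹)`.
-/

open scoped BigOperators
open Filter

noncomputable section

/-- Binary forms live in the polynomial ring in two variables. -/
abbrev BForm (K : Type) [Field K] := MvPolynomial (Fin 2) K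

/-- The counting set `M̃(a, a', 𝐤)`: quadruples `(s₁, s₂, t₁, t₂)` of binary forms with
`s₁, s₂` homogeneous of degree `a` and `t₁, t₂` homogeneous of degree `a'`, such that
`gcd (s₁, s₂)` and `gcd (t₁, t₂)` are nonzero constants and, for each `i`, the nonzero
forms `s₁ − cᵢ s₂` and `t₁ − cᵢ′ t₂` have a gcd which is homogeneous of degree exactly
`kᵢ`. -/
def MtildeSet (K : Type) [Field K] (r : ℕ) (c c' : Fin r → K) (a a' : ℕ)
    (k : Fin r → ℕ) : Set (BForm K × BForm K × BForm K × BForm K) :=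
  {x | MvPolynomial.IsHomogeneous x.1 a ∧ MvPolynomial.IsHomogeneous x.2.1 a ∧
       MvPolynomial.IsHomogeneous x.2.2.1 a' ∧ MvPolynomial.IsHomogeneous x.2.2.2 a' ∧
       (∀ d : BForm K, d ∣ x.1 → d ∣ x.2.1 → IsUnit d) ∧
       (∀ d : BForm K, d ∣ x.2.2.1 → d ∣ x.2.2.2 → IsUnit d) ∧
       ∀ i : Fin r,
         x.1 - MvPolynomial.C (c i) * x.2.1 ≠ 0 ∧
         x.2.2.1 - MvPolynomial.C (c' i) * x.2.2.2 ≠ 0 ∧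
         ∃ g : BForm K, MvPolynomial.IsHomogeneous g (k i) ∧
           (g ∣ x.1 - MvPolynomial.C (c i) * x.2.1) ∧
           (g ∣ x.2.2.1 - MvPolynomial.C (c' i) * x.2.2.2) ∧
           ∀ d : BForm K, d ∣ x.1 - MvPolynomial.C (c i) * x.2.1 →
             d ∣ x.2.2.1 - MvPolynomial.C (c' i) * x.2.2.2 → d ∣ g}

/-- Closed points of ℙ¹ over a field: monic irreducible polynomials together with the
point at infinity. -/
def ClosedPoint (K : Type) [Field K] : Type :=
  {p : Polynomial K // p.Monic ∧ Irreducible p} ⊕ Unit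

/-- The degree `|c|` of a closed point. -/
def cpDeg {K : Type} [Field K] : ClosedPoint K → ℕ
  | Sum.inl p => p.1.natDegree
  | Sum.inr _ => 1

/-- The local Euler factor `(1 − q^{−n})^{r+2} (1 + (r+2) q^{−n} + q^{−2n})` of the
Tamagawa number at a closed point of degree `n`. -/
def tauFactor (q r n : ℕ) : ℝ :=
  (1 - ((q : ℝ)⁻¹) ^ n) ^ (r + 2) *
    (1 + (r + 2) * ((q : ℝ)⁻¹) ^ n + ((q : ℝ)⁻¹) ^ (2 * n))

/-- Peyre's Tamagawa number
`τ_r(q) = q² (1−q^{−1})^{−r−2} ∏_c (1−q^{−|c|})^{r+2} (1 + (r+2) q^{−|c|} + q^{−2|c|})`. -/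
def tauNumber (K : Type) [Field K] [Fintype K] (r : ℕ) : ℝ :=
  (Fintype.card K : ℝ) ^ 2 * ((1 - (Fintype.card K : ℝ)⁻¹) ^ (r + 2))⁻¹ *
    ∏' cp : ClosedPoint K, tauFactor (Fintype.card K) r (cpDeg cp)

/-- The intersection form on `N_r = ℤf ⊕ ℤf′ ⊕ ℤe₁ ⊕ ⋯ ⊕ ℤe_r` (coordinates
`(f, f′, e₁, …, e_r)`): `f·f = f′·f′ = 0`, `f·f′ = 1`, `f·eᵢ = f′·eᵢ = 0`,
`eᵢ·eⱼ = −δᵢⱼ`. -/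
def inter (r : ℕ) (x y : Fin (r + 2) → ℤ) : ℤ :=
  x 0 * y 1 + x 1 * y 0 -
    ∑ i ∈ Finset.univ.filter fun i : Fin (r + 2) => 2 ≤ (i : ℕ), x i * y i

/-- The anticanonical class `−K = 2f + 2f′ − (e₁ + ⋯ + e_r)`. -/
def antiK (r : ℕ) : Fin (r + 2) → ℤ := fun i => if (i : ℕ) < 2 then 2 else -1

/-- A `(−1)`-class: `v·v = −1` and `v·(−K) = 1`. -/
def minusOneClass (r : ℕ) (v : Fin (r + 2) → ℤ) : Prop :=
  inter r v v = -1 ∧ inter r v (antiK r) = 1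

/-- A class is nef if it pairs nonnegatively with every `(−1)`-class. -/
def nefVec (r : ℕ) (α : Fin (r + 2) → ℤ) : Prop :=
  ∀ v : Fin (r + 2) → ℤ, minusOneClass r v → 0 ≤ inter r α v

/-- The class `α = a′f + af′ − Σᵢ kᵢeᵢ` with invariants `(a, a′, 𝐤)`. -/
def vecOf (r : ℕ) (a a' : ℕ) (k : Fin r → ℕ) : Fin (r + 2) → ℤ := fun i =>
  if h0 : (i : ℕ) = 0 then (a' : ℤ)
  else if h1 : (i : ℕ) = 1 then (a : ℤ)
  else -(k ⟨(i : ℕ) - 2, by have := i.isLt; omega⟩ : ℤ)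

/-- The height `h(α) = 2a + 2a′ − Σᵢ kᵢ` of the class with invariants
`x = (a, a′, 𝐤)`, as a rational number. -/
def hQ (r : ℕ) (x : ℕ × ℕ × (Fin r → ℕ)) : ℚ :=
  2 * x.1 + 2 * x.2.1 - ∑ i, (x.2.2 i : ℚ)

/-- The height `h(α) = 2a + 2a′ − Σᵢ kᵢ` of the class with invariants
`x = (a, a′, 𝐤)`, as a natural number. -/
def hN (r : ℕ) (x : ℕ × ℕ × (Fin r → ℕ)) : ℕ :=
  2 * x.1 + 2 * x.2.1 - ∑ i, x.2.2 i

/-- Lattice points of the cone of nef classes `α = (a, a′, 𝐤)` with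
`2a − Σkᵢ ≥ ε₁ h(α)`, `2a′ − Σkᵢ ≥ ε₁ h(α)`, `kᵢ ≥ ε₂ h(α)` for all `i`,
together with the counting condition `0 < h(α) ≤ d`. -/
def coneSet (r : ℕ) (ε₁ ε₂ : ℚ) (d : ℕ) : Set (ℕ × ℕ × (Fin r → ℕ)) :=
  {x | nefVec r (vecOf r x.1 x.2.1 x.2.2) ∧
    ε₁ * hQ r x ≤ 2 * x.1 - ∑ i, (x.2.2 i : ℚ) ∧
    ε₁ * hQ r x ≤ 2 * x.2.1 - ∑ i, (x.2.2 i : ℚ) ∧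
    (∀ i, ε₂ * hQ r x ≤ (x.2.2 i : ℚ)) ∧
    0 < hQ r x ∧ hQ r x ≤ d}


set_option linter.unusedSectionVars false

/-! ### Binary forms and dehomogenization -/

namespace ManinDP
open MvPolynomial

section Forms
variable {K : Type} [Field K]

/-- The space of binary forms of degree `n`. -/
abbrev V (K : Type) [Field K] (n : ℕ) : Submodule K (BForm K) :=
  homogeneousSubmodule (Fin 2) K n

/-- Dehomogenization `f(u, v) ↦ f(X, 1)`. -/
def deh : BForm K →ₐ[K] Polynomial K := aeval ![Polynomial.X, 1]

lemma deh_homogenize (p : Polynomial K) {n : ℕ} (hn : p.natDegree ≤ n) :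
    deh (p.homogenize n) = p := Polynomial.aeval_homogenize_X_one p hn

lemma homogenize_deh {f : BForm K} {n : ℕ} (hf : f.IsHomogeneous n) :
    (deh f).homogenize n = f := Polynomial.homogenize_eq_of_isHomogeneous hf rfl

lemma natDegree_deh {f : BForm K} {n : ℕ} (hf : f.IsHomogeneous n) :
    (deh f).natDegree ≤ n := by
  rw [deh, f.as_sum, map_sum]
  refine Polynomial.natDegree_sum_le_of_forall_le _ _ ?_
  intro m hm
  rw [aeval_monomial]
  have h1 : m.weight 1 = n := hf (by simpa using hm)
  simp only [Finsupp.weight_apply, Finsupp.sum_fintype, Fin.sum_univ_two, Pi.one_apply,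
    smul_eq_mul, mul_one, implies_true] at h1
  rw [Finsupp.prod_fintype _ _ (by simp), Fin.prod_univ_two]
  simp only [Matrix.cons_val_zero, Matrix.cons_val_one, one_pow, mul_one]
  rw [Polynomial.algebraMap_eq]
  exact (Polynomial.natDegree_C_mul_X_pow_le _ _).trans (by omega)

lemma deh_eq_zero_iff {f : BForm K} {n : ℕ} (hf : f.IsHomogeneous n) : deh f = 0 ↔ f = 0 := by
  constructor
  · intro h
    rw [← homogenize_deh hf, h, Polynomial.homogenize_zero]
  · rintro rfl; simp

/-- Forms of degree `n` correspond to polynomials of degree at most `n`. -/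
def VequivDegreeLT (K : Type) [Field K] (n : ℕ) : V K n ≃ₗ[K] Polynomial.degreeLT K (n + 1) where
  toFun f := ⟨deh f.1, by
    rw [Polynomial.mem_degreeLT]
    have := natDegree_deh (n := n) (f := f.1) f.2
    exact lt_of_le_of_lt Polynomial.degree_le_natDegree (by exact_mod_cast Nat.lt_succ_of_le this)⟩
  map_add' f g := by ext1; simp
  map_smul' a f := by ext1; simp
  invFun p := ⟨p.1.homogenize n, Polynomial.isHomogeneous_homogenize _⟩
  left_inv f := by ext1; exact homogenize_deh f.2
  right_inv p := by
    ext1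
    refine deh_homogenize _ ?_
    have := p.2
    rw [Polynomial.mem_degreeLT] at this
    by_cases h : p.1 = 0
    · simp [h]
    · rw [Polynomial.degree_eq_natDegree h] at this
      have : p.1.natDegree < n + 1 := by exact_mod_cast this
      omega

instance V_finite (K : Type) [Field K] (n : ℕ) : Module.Finite K (V K n) :=
  Module.Finite.equiv ((VequivDegreeLT K n).trans (Polynomial.degreeLTEquiv K (n+1))).symm

lemma finrank_V (n : ℕ) : Module.finrank K (V K n) = n + 1 := by
  rw [((VequivDegreeLT K n).trans (Polynomial.degreeLTEquiv K (n+1))).finrank_eq]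
  simp

instance V_fin (K : Type) [Field K] [Finite K] (n : ℕ) : Finite (V K n) :=
  Module.finite_of_finite K

lemma card_V [Finite K] (n : ℕ) : Nat.card (V K n) = Nat.card K ^ (n + 1) := by
  rw [Module.natCard_eq_pow_finrank (K := K), finrank_V]

/-- A one-parameter scaling of the variables; it detects homogeneity. -/
def scale : BForm K →ₐ[K] Polynomial (BForm K) := aeval fun i => Polynomial.C (X i) * Polynomial.X

lemma scale_homog {f : BForm K} {n : ℕ} (hf : f.IsHomogeneous n) :
    scale f = Polynomial.C f * Polynomial.X ^ n := by
  rw [scale, f.as_sum, map_sum, map_sum, Finset.sum_mul]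
  refine Finset.sum_congr rfl fun m hm => ?_
  have h1 : m.weight 1 = n := hf (by simpa using hm)
  rw [Finsupp.weight_apply, Finsupp.sum_fintype _ _ (by simp), Fin.sum_univ_two] at h1
  simp only [Pi.one_apply, smul_eq_mul, mul_one] at h1
  rw [aeval_monomial, monomial_eq, Finsupp.prod_fintype _ _ (by simp),
    Finsupp.prod_fintype _ _ (by simp), Fin.prod_univ_two, Fin.prod_univ_two]
  simp only [map_mul, map_pow]
  rw [← h1, pow_add, mul_pow, mul_pow]
  have : algebraMap K (Polynomial (BForm K)) (coeff m f) =
      Polynomial.C (C (coeff m f)) := rfl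
  rw [this]; ring

lemma scale_coeff (f : BForm K) (m : ℕ) :
    (scale f).coeff m = homogeneousComponent m f := by
  conv_lhs => rw [← sum_homogeneousComponent f]
  rw [map_sum, Polynomial.finsetSum_coeff]
  simp only [scale_homog (homogeneousComponent_isHomogeneous _ f), Polynomial.coeff_C_mul,
    Polynomial.coeff_X_pow, mul_ite, mul_one, mul_zero]
  rw [Finset.sum_ite_eq]
  split_ifs with h
  · rfl
  · rw [homogeneousComponent_eq_zero]
    simp at h; omega

/-- A divisor of a nonzero form is a form. -/
lemma isHomogeneous_of_dvd {f g : BForm K} {n : ℕ} (hf : f.IsHomogeneous n) (hf0 : f ≠ 0)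
    (hg : g ∣ f) : ∃ m, m ≤ n ∧ g.IsHomogeneous m := by
  obtain ⟨h, rfl⟩ := hg
  have hg0 : g ≠ 0 := left_ne_zero_of_mul hf0
  have hh0 : h ≠ 0 := right_ne_zero_of_mul hf0
  have e := scale_homog hf
  rw [map_mul] at e
  have key : ∀ f : BForm K, f ≠ 0 → scale f ≠ 0 := by
    intro f hf h0
    apply hf
    rw [← sum_homogeneousComponent f]
    refine Finset.sum_eq_zero fun m _ => ?_
    rw [← scale_coeff, h0, Polynomial.coeff_zero]
  have hd : (scale g).natDegree + (scale h).natDegree = n := by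
    rw [← Polynomial.natDegree_mul (key g hg0) (key h hh0), e,
      Polynomial.natDegree_C_mul_X_pow _ _ hf0]
  have ht : (scale g).natTrailingDegree + (scale h).natTrailingDegree = n := by
    rw [← Polynomial.natTrailingDegree_mul (key g hg0) (key h hh0), e,
      Polynomial.C_mul_X_pow_eq_monomial, Polynomial.natTrailingDegree_monomial hf0]
  have h1 := Polynomial.natTrailingDegree_le_natDegree (scale g)
  have h2 := Polynomial.natTrailingDegree_le_natDegree (scale h)
  refine ⟨(scale g).natDegree, by omega, ?_⟩
  have : g = homogeneousComponent (scale g).natDegree g := by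
    conv_lhs => rw [← sum_homogeneousComponent g]
    by_cases hm : (scale g).natDegree ∈ Finset.range (g.totalDegree + 1)
    · refine Finset.sum_eq_single_of_mem _ hm fun b _ hb => ?_
      rw [← scale_coeff]
      rcases lt_or_gt_of_ne hb with hb | hb
      · exact Polynomial.coeff_eq_zero_of_lt_natTrailingDegree (by omega)
      · exact Polynomial.coeff_eq_zero_of_natDegree_lt hb
    · exfalso
      have h3 : (scale g).coeff (scale g).natDegree = 0 := by
        rw [scale_coeff, homogeneousComponent_eq_zero]
        simp at hm; omega
      exact key g hg0 (by simpa using h3)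
  have h4 := homogeneousComponent_isHomogeneous (scale g).natDegree g
  rwa [← this] at h4

lemma isHomogeneous_cofactor {f g h : BForm K} {n m : ℕ} (hf : f.IsHomogeneous n)
    (hf0 : f ≠ 0) (hg : g.IsHomogeneous m) (e : f = g * h) :
    m ≤ n ∧ h.IsHomogeneous (n - m) := by
  obtain ⟨l, hl, hh⟩ := isHomogeneous_of_dvd hf hf0 (Dvd.intro_left g e.symm)
  have := IsHomogeneous.inj_right (e ▸ hf) (hg.mul hh) (e ▸ hf0)
  have h2 : n - m = l := by omega
  exact ⟨by omega, h2 ▸ hh⟩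

/-- Cofactor of a form, in a version that allows the zero form. -/
lemma exists_cofactor {f g : BForm K} {n m : ℕ} (hf : f.IsHomogeneous n)
    (hg : g.IsHomogeneous m) (hd : g ∣ f) :
    ∃ h : BForm K, h.IsHomogeneous (n - m) ∧ f = g * h := by
  by_cases hf0 : f = 0
  · exact ⟨0, isHomogeneous_zero _ _ _, by simp [hf0]⟩
  · obtain ⟨h, e⟩ := hd
    exact ⟨h, (isHomogeneous_cofactor hf hf0 hg e).2, e⟩

/-- A form divisible by a form of larger degree vanishes. -/
lemma eq_zero_of_dvd_of_lt {f g : BForm K} {n m : ℕ} (hf : f.IsHomogeneous n)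
    (hg : g.IsHomogeneous m) (hd : g ∣ f) (h : n < m) : f = 0 := by
  by_contra hf0
  obtain ⟨k, e⟩ := hd
  have := (isHomogeneous_cofactor hf hf0 hg e).1
  omega

lemma isUnit_of_degree_zero {f : BForm K} (hf : f.IsHomogeneous 0) (h0 : f ≠ 0) : IsUnit f := by
  have : f.totalDegree = 0 := hf.totalDegree h0
  rw [totalDegree_eq_zero_iff_eq_C] at this
  rw [this]
  refine IsUnit.map (C : K →+* BForm K) (isUnit_iff_ne_zero.2 fun h => h0 ?_)
  rw [this, h, C_0]

lemma degree_zero_of_isUnit {f : BForm K} {n : ℕ} (hf : f.IsHomogeneous n) (h : IsUnit f) :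
    n = 0 := by
  have := eq_zero_of_dvd_of_lt (isHomogeneous_one (Fin 2) K) hf h.dvd
  by_contra h0
  exact one_ne_zero (this (by omega))

end Forms
end ManinDP

/-! ### Closed points of the projective line and evaluation -/

namespace ManinDP
open MvPolynomial

section Places
variable {K : Type} [Field K]

/-- The local equation of a closed point in a standard affine chart containing it. -/
def cpoly : ClosedPoint K → Polynomial K
  | Sum.inl p => p.1
  | Sum.inr _ => Polynomial.X

lemma cpoly_monic (c : ClosedPoint K) : (cpoly c).Monic := by
  rcases c with p | _
  · exact p.2.1
  · exact Polynomial.monic_X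

lemma cpoly_irreducible (c : ClosedPoint K) : Irreducible (cpoly c) := by
  rcases c with p | _
  · exact p.2.2
  · exact Polynomial.irreducible_X

lemma natDegree_cpoly (c : ClosedPoint K) : (cpoly c).natDegree = cpDeg c := by
  rcases c with p | _
  · rfl
  · exact Polynomial.natDegree_X

lemma cpDeg_pos (c : ClosedPoint K) : 0 < cpDeg c := by
  rw [← natDegree_cpoly]; exact (cpoly_irreducible c).natDegree_pos

instance cpoly_fact (c : ClosedPoint K) : Fact (Irreducible (cpoly c)) := ⟨cpoly_irreducible c⟩

/-- The residue field of a closed point. -/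
abbrev Fc (c : ClosedPoint K) : Type := AdjoinRoot (cpoly c)

instance Fc_fin [Finite K] (c : ClosedPoint K) : Finite (Fc c) := by
  have : Module.Finite K (Fc c) := (AdjoinRoot.powerBasis (cpoly_irreducible c).ne_zero).finite
  exact Module.finite_of_finite K

lemma card_Fc [Finite K] (c : ClosedPoint K) : Nat.card (Fc c) = Nat.card K ^ cpDeg c := by
  have : Module.Finite K (Fc c) := (AdjoinRoot.powerBasis (cpoly_irreducible c).ne_zero).finite
  rw [Module.natCard_eq_pow_finrank (K := K),
    (AdjoinRoot.powerBasis (cpoly_irreducible c).ne_zero).finrank, AdjoinRoot.powerBasis_dim,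
    natDegree_cpoly]

/-- Dehomogenization in the chart used for the closed point `c`. -/
def dehc : ClosedPoint K → (BForm K →ₐ[K] Polynomial K)
  | Sum.inl _ => deh
  | Sum.inr _ => aeval ![1, Polynomial.X]

/-- Evaluation of forms at a closed point, with values in the residue field. -/
def ev (c : ClosedPoint K) : BForm K →ₐ[K] Fc c := (AdjoinRoot.mkₐ (cpoly c)).comp (dehc c)

/-- The irreducible form cutting out a closed point. -/
def Phi : ClosedPoint K → BForm K
  | Sum.inl p => p.1.homogenize p.1.natDegree
  | Sum.inr _ => X 1

lemma Phi_homog (c : ClosedPoint K) : (Phi c).IsHomogeneous (cpDeg c) := by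
  rcases c with p | _
  · exact Polynomial.isHomogeneous_homogenize _
  · exact isHomogeneous_X _ _

lemma Phi_ne_zero (c : ClosedPoint K) : Phi c ≠ 0 := by
  rcases c with p | _
  · intro h
    exact p.2.2.ne_zero (Polynomial.eq_zero_of_homogenize_eq_zero le_rfl h)
  · exact X_ne_zero _

lemma ev_eq_zero_iff_dvd (c : ClosedPoint K) (f : BForm K) :
    ev c f = 0 ↔ cpoly c ∣ dehc c f := by
  change AdjoinRoot.mk (cpoly c) (dehc c f) = 0 ↔ _
  exact AdjoinRoot.mk_eq_zero

lemma X_dvd_form {f : BForm K} {n : ℕ} (hf : f.IsHomogeneous n)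
    (h : Polynomial.X ∣ (aeval ![1, Polynomial.X] f : Polynomial K)) : X 1 ∣ f := by
  have h1 : eval ![1, 0] f = 0 := by
    rw [Polynomial.X_dvd_iff, Polynomial.coeff_zero_eq_eval_zero] at h
    have h0 : (Polynomial.evalRingHom (0 : K)).comp
        (aeval ![1, Polynomial.X] : BForm K →ₐ[K] Polynomial K).toRingHom = eval ![1, 0] := by
      ext i
      · simp
      · fin_cases i <;> simp
    exact (congrArg (fun φ : BForm K →+* K => φ f) h0).symm.trans h
  have h2 : eval ![1, 0] f = (deh f).coeff n := by
    conv_lhs => rw [← homogenize_deh hf]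
    rw [Polynomial.homogenize, map_sum]
    rw [Finset.sum_eq_single (n, 0)]
    · simp [eval_monomial, Finsupp.update_eq_add_single, Finsupp.prod_fintype, Fin.prod_univ_two]
    · rintro ⟨k, l⟩ hkl hne
      have hl : l ≠ 0 := by
        rintro rfl
        simp at hkl; simp [hkl] at hne
      rw [eval_monomial, Finsupp.prod_fintype _ _ (by simp), Fin.prod_univ_two]
      simp [hl]
    · intro h; simp at h
  rw [h2] at h1
  rcases n with _ | n
  · have : deh f = 0 := by
      have := natDegree_deh hf
      rw [Polynomial.eq_C_of_natDegree_le_zero this, h1, Polynomial.C_0]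
    rw [(deh_eq_zero_iff hf).1 this]; exact dvd_zero _
  · have hd : (deh f).natDegree ≤ n := by
      have h3 := natDegree_deh hf
      by_contra h4
      have h5 : (deh f).natDegree = n + 1 := by omega
      rw [← h5, Polynomial.coeff_natDegree, Polynomial.leadingCoeff_eq_zero] at h1
      rw [h1] at h5; simp at h5
    have e := Polynomial.homogenize_mul (deh f) 1 hd (n := 1) (by simp)
    rw [mul_one, homogenize_deh hf, Polynomial.homogenize_one, pow_one] at e
    exact Dvd.intro_left _ e.symm

lemma dehc_Phi (c : ClosedPoint K) : dehc c (Phi c) = cpoly c := by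
  rcases c with p | _
  · exact deh_homogenize _ le_rfl
  · simp [dehc, Phi, cpoly]

/-- Vanishing of a form at a closed point is divisibility by the irreducible form cutting it out. -/
lemma ev_eq_zero_iff (c : ClosedPoint K) {f : BForm K} {n : ℕ} (hf : f.IsHomogeneous n) :
    ev c f = 0 ↔ Phi c ∣ f := by
  rw [ev_eq_zero_iff_dvd]
  constructor
  · intro h
    rcases c with p | _
    · change p.1 ∣ deh f at h
      by_cases hf0 : f = 0
      · simp [hf0]
      have h0 : deh f ≠ 0 := fun h => hf0 ((deh_eq_zero_iff hf).1 h)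
      obtain ⟨q, hq⟩ := h
      have hd := natDegree_deh hf
      rw [hq] at h0
      rw [hq, Polynomial.natDegree_mul (left_ne_zero_of_mul h0) (right_ne_zero_of_mul h0)] at hd
      have e := Polynomial.homogenize_mul p.1 q (m := p.1.natDegree)
        (n := n - p.1.natDegree) le_rfl (by omega)
      rw [← hq, Nat.add_sub_cancel' (by omega), homogenize_deh hf] at e
      exact Dvd.intro _ e.symm
    · exact X_dvd_form hf h
  · intro h
    rw [← dehc_Phi]
    exact map_dvd (dehc c) h

lemma ev_Phi_ne {c c' : ClosedPoint K} (h : c ≠ c') : ev c' (Phi c) ≠ 0 := by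
  intro h0
  rw [ev_eq_zero_iff_dvd] at h0
  rcases c with p | u <;> rcases c' with p' | u'
  · change p'.1 ∣ deh (Phi (Sum.inl p)) at h0
    have e : deh (Phi (Sum.inl p)) = p.1 := dehc_Phi (Sum.inl p)
    rw [e] at h0
    have h1 := (p'.2.2.dvd_irreducible_iff_associated p.2.2).1 h0
    have := Polynomial.eq_of_monic_of_associated p'.2.1 p.2.1 h1
    exact h (congrArg Sum.inl (Subtype.ext this.symm))
  · have h1 := X_dvd_form (Phi_homog (Sum.inl p)) h0
    obtain ⟨g, hg⟩ := h1
    have hd := (isHomogeneous_cofactor (Phi_homog _) (Phi_ne_zero (Sum.inl p))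
      (isHomogeneous_X K 1) hg).2
    have e : deh (Phi (Sum.inl p)) = p.1 := dehc_Phi (Sum.inl p)
    rw [hg, map_mul] at e
    have e1 : deh (X 1 : BForm K) = 1 := by simp [deh]
    rw [e1, one_mul] at e
    have h2 := natDegree_deh hd
    rw [e] at h2
    have h3 : cpDeg (Sum.inl p : ClosedPoint K) = p.1.natDegree := rfl
    have := p.2.2.natDegree_pos
    omega
  · change p'.1 ∣ deh (X 1) at h0
    have e1 : deh (X 1 : BForm K) = 1 := by simp [deh]
    rw [e1] at h0
    exact p'.2.2.not_isUnit (isUnit_of_dvd_one h0)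
  · exact h rfl

/-- A form of positive degree vanishes at some closed point. -/
lemma exists_ev_eq_zero {f : BForm K} {n : ℕ} (hf : f.IsHomogeneous n) (hn : n ≠ 0) :
    ∃ c : ClosedPoint K, ev c f = 0 := by
  by_cases hu : IsUnit (deh f)
  · suffices h : Phi (Sum.inr () : ClosedPoint K) ∣ f from ⟨_, (ev_eq_zero_iff _ hf).2 h⟩
    have hd : (deh f).natDegree ≤ n - 1 := by
      rw [Polynomial.natDegree_eq_zero_of_isUnit hu]; omega
    have e := Polynomial.homogenize_mul (deh f) 1 hd (n := 1) (by simp)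
    rw [mul_one, Nat.sub_add_cancel (by omega), homogenize_deh hf, Polynomial.homogenize_one,
      pow_one] at e
    exact Dvd.intro_left _ e.symm
  · by_cases h0 : deh f = 0
    · exact ⟨(Sum.inr () : ClosedPoint K), by rw [(deh_eq_zero_iff hf).1 h0, map_zero]⟩
    · obtain ⟨p, hp, hm, hd⟩ : ∃ p : Polynomial K, Irreducible p ∧ p.Monic ∧ p ∣ deh f := by
        obtain ⟨p, hp, hd⟩ := WfDvdMonoid.exists_irreducible_factor hu h0
        refine ⟨p * Polynomial.C p.leadingCoeff⁻¹, ?_, Polynomial.monic_mul_leadingCoeff_inv hp.ne_zero, ?_⟩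
        · refine (irreducible_mul_isUnit ?_).2 hp
          exact Polynomial.isUnit_C.2
            (isUnit_iff_ne_zero.2 (inv_ne_zero (Polynomial.leadingCoeff_ne_zero.2 hp.ne_zero)))
        · refine (IsUnit.mul_right_dvd ?_).2 hd
          exact Polynomial.isUnit_C.2
            (isUnit_iff_ne_zero.2 (inv_ne_zero (Polynomial.leadingCoeff_ne_zero.2 hp.ne_zero)))
      exact ⟨(Sum.inl ⟨p, hm, hp⟩ : ClosedPoint K), (ev_eq_zero_iff_dvd _ f).2 hd⟩

/-- Two forms without a common zero at a closed point are coprime. -/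
lemma isRelPrime_of_ev {f g : BForm K} {n : ℕ} (hf : f.IsHomogeneous n) (hf0 : f ≠ 0)
    (h : ∀ c : ClosedPoint K, ¬ (ev c f = 0 ∧ ev c g = 0)) : IsRelPrime f g := by
  intro d hdf hdg
  obtain ⟨m, -, hm⟩ := isHomogeneous_of_dvd hf hf0 hdf
  by_cases hm0 : m = 0
  · subst hm0
    exact isUnit_of_degree_zero hm (ne_zero_of_dvd_ne_zero hf0 hdf)
  · obtain ⟨c, hc⟩ := exists_ev_eq_zero hm hm0
    refine absurd ⟨?_, ?_⟩ (h c)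
    · obtain ⟨e, rfl⟩ := hdf; rw [map_mul, hc, zero_mul]
    · obtain ⟨e, rfl⟩ := hdg; rw [map_mul, hc, zero_mul]

lemma Phi_not_isUnit (c : ClosedPoint K) : ¬ IsUnit (Phi c) := fun h =>
  (cpDeg_pos c).ne' (degree_zero_of_isUnit (Phi_homog c) h)

lemma not_ev_of_isRelPrime {f g : BForm K} {n m : ℕ} (hf : f.IsHomogeneous n)
    (hg : g.IsHomogeneous m) (h : IsRelPrime f g) (c : ClosedPoint K) :
    ¬ (ev c f = 0 ∧ ev c g = 0) := by
  rintro ⟨h1, h2⟩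
  exact Phi_not_isUnit c (h ((ev_eq_zero_iff c hf).1 h1) ((ev_eq_zero_iff c hg).1 h2))

/-- A form vanishing at all points of a finite set is divisible by the product of their
equations. -/
lemma prod_Phi_dvd (P : Finset (ClosedPoint K)) {f : BForm K} {n : ℕ} (hf : f.IsHomogeneous n)
    (h : ∀ c ∈ P, ev c f = 0) : (∏ c ∈ P, Phi c) ∣ f := by
  classical
  induction P using Finset.induction_on with
  | empty => simp
  | insert c P hc ih =>
    obtain ⟨g, hg, e⟩ := exists_cofactor hf (IsHomogeneous.prod P Phi cpDeg
      (fun c _ => Phi_homog c)) (ih fun c' hc' => h c' (Finset.mem_insert_of_mem hc'))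
    have h1 := h c (Finset.mem_insert_self _ _)
    rw [e, map_mul, map_prod] at h1
    have h2 : ev c g = 0 := by
      refine (mul_eq_zero.1 h1).resolve_left (Finset.prod_ne_zero_iff.2 fun c' hc' => ?_)
      exact ev_Phi_ne (by rintro rfl; exact hc hc')
    obtain ⟨l, hl⟩ := (ev_eq_zero_iff c hg).1 h2
    rw [Finset.prod_insert hc, e, hl]
    exact ⟨l, by ring⟩

/-- Number of divisors of a nonzero form. -/
lemma card_divisors [Finite K] (f : BForm K) (hf0 : f ≠ 0) : ∀ n, f.IsHomogeneous n →
    {g : BForm K | g ∣ f}.Finite ∧ {g : BForm K | g ∣ f}.ncard ≤ Nat.card K * 2 ^ n := by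
  induction f using UniqueFactorizationMonoid.induction_on_prime with
  | h₁ => exact absurd rfl hf0
  | h₂ x hx =>
    intro n hn
    have hsub : {g : BForm K | g ∣ x} ⊆ Set.range (fun a : K => (C a : BForm K)) := by
      intro g hg
      have hu : IsUnit g := isUnit_of_dvd_unit hg hx
      obtain ⟨a, -, h⟩ := MvPolynomial.isUnit_iff_eq_C_of_isReduced.1 hu
      exact ⟨a, h.symm⟩
    refine ⟨(Set.finite_range _).subset hsub, ?_⟩
    refine (Set.ncard_le_ncard hsub (Set.finite_range _)).trans ?_
    rw [← Set.image_univ]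
    refine (Set.ncard_image_le Set.finite_univ).trans ?_
    rw [Set.ncard_univ]
    exact Nat.le_mul_of_pos_right _ (by positivity)
  | h₃ a p ha hp ih =>
    intro n hn
    obtain ⟨m, hm, hpm⟩ := isHomogeneous_of_dvd hn hf0 (Dvd.intro _ rfl)
    have hm0 : m ≠ 0 := by
      rintro rfl
      exact hp.not_isUnit (isUnit_of_degree_zero hpm hp.ne_zero)
    obtain ⟨h1, h2⟩ := ih ha (n - m) (isHomogeneous_cofactor hn hf0 hpm rfl).2
    -- a divisor of `p * a` divides `a`, or is `p` times a divisor of `a`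
    have hsub : {g : BForm K | g ∣ p * a} ⊆
        {g : BForm K | g ∣ a} ∪ (fun g => p * g) '' {g : BForm K | g ∣ a} := by
      intro g hg
      rcases hp.left_dvd_or_dvd_right_of_dvd_mul hg with h | h
      · obtain ⟨l, rfl⟩ := h
        exact Or.inr ⟨l, (mul_dvd_mul_iff_left hp.ne_zero).1 hg, rfl⟩
      · exact Or.inl h
    have hfin := h1.union (h1.image (fun g => p * g))
    refine ⟨hfin.subset hsub, (Set.ncard_le_ncard hsub hfin).trans ?_⟩
    refine (Set.ncard_union_le _ _).trans ?_
    have h3 := Set.ncard_image_le (f := fun g => p * g) h1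
    have h4 : Nat.card K * 2 ^ (n - m) ≤ Nat.card K * 2 ^ (n - 1) :=
      Nat.mul_le_mul_left _ (Nat.pow_le_pow_right (by norm_num) (by omega))
    have h5 : 2 ^ n = 2 ^ (n - 1) + 2 ^ (n - 1) := by
      have : n = n - 1 + 1 := by omega
      conv_lhs => rw [this, pow_succ]
      ring
    rw [h5]; nlinarith

end Places
end ManinDP

/-! ### Independence of the values of forms at distinct closed points -/

namespace ManinDP
open MvPolynomial

section Indep
variable {K : Type} [Field K] [Finite K]

instance V_fintype (n : ℕ) : Fintype (V K n) := Fintype.ofFinite _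

instance Fc_fintype (c : ClosedPoint K) : Fintype (Fc c) := Fintype.ofFinite _

lemma finrank_Fc (c : ClosedPoint K) : Module.finrank K (Fc c) = cpDeg c := by
  rw [(AdjoinRoot.powerBasis (cpoly_irreducible c).ne_zero).finrank, AdjoinRoot.powerBasis_dim,
    natDegree_cpoly]

instance Fc_modfin (c : ClosedPoint K) : Module.Finite K (Fc c) :=
  (AdjoinRoot.powerBasis (cpoly_irreducible c).ne_zero).finite

lemma prod_Phi_homog (P : Finset (ClosedPoint K)) :
    (∏ c ∈ P, Phi c).IsHomogeneous (∑ c ∈ P, cpDeg c) :=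
  IsHomogeneous.prod P Phi cpDeg (fun c _ => Phi_homog c)

/-- Simultaneous evaluation at the points of a finite set. -/
def evP (P : Finset (ClosedPoint K)) (n : ℕ) : V K n →ₗ[K] (∀ c : P, Fc c.1) :=
  LinearMap.pi fun c => (ev c.1).toLinearMap ∘ₗ (V K n).subtype

/-- Weak approximation: forms of degree `n` take arbitrary values at finitely many points as soon
as the total degree of the points is at most `n + 1`. -/
lemma evP_surjective (P : Finset (ClosedPoint K)) (n : ℕ) (h : ∑ c ∈ P, cpDeg c ≤ n + 1) :
    Function.Surjective (evP P n) := by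
  have hr : Module.finrank K (∀ c : P, Fc c.1) = ∑ c ∈ P, cpDeg c := by
    rw [Module.finrank_pi_fintype]
    simp_rw [finrank_Fc]
    exact Finset.sum_coe_sort P cpDeg
  -- a form in the kernel is divisible by `∏ Phi c`, of degree `∑ |c|`, so the kernel has the
  -- dimension expected of a surjective map
  have hk : Module.finrank K (LinearMap.ker (evP P n)) + ∑ c ∈ P, cpDeg c ≤ n + 1 := by
    have key : ∀ f ∈ LinearMap.ker (evP P n), (∏ c ∈ P, Phi c) ∣ f.1 := by
      intro f hf
      refine prod_Phi_dvd P (n := n) f.2 fun c hc => ?_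
      have := congrFun (LinearMap.mem_ker.1 hf) ⟨c, hc⟩
      exact this
    by_cases hD : ∑ c ∈ P, cpDeg c ≤ n
    · have hmap : ∀ f : V K (n - ∑ c ∈ P, cpDeg c), (∏ c ∈ P, Phi c) * f.1 ∈ V K n := by
        intro f
        have := (prod_Phi_homog P).mul f.2
        rwa [Nat.add_sub_cancel' hD] at this
      let m : V K (n - ∑ c ∈ P, cpDeg c) →ₗ[K] V K n :=
        LinearMap.codRestrict _ ((LinearMap.mulLeft K (∏ c ∈ P, Phi c)) ∘ₗ (V K _).subtype) hmap
      have hle : LinearMap.ker (evP P n) ≤ LinearMap.range m := by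
        intro f hf
        obtain ⟨l, hl, e⟩ := exists_cofactor f.2 (prod_Phi_homog P) (key f hf)
        exact ⟨⟨l, hl⟩, Subtype.ext e.symm⟩
      have h1 := (Submodule.finrank_mono hle).trans (LinearMap.finrank_range_le m)
      rw [finrank_V] at h1
      omega
    · have : LinearMap.ker (evP P n) = ⊥ := by
        rw [eq_bot_iff]
        intro f hf
        have := eq_zero_of_dvd_of_lt f.2 (prod_Phi_homog P) (key f hf) (by omega)
        exact Subtype.ext this
      rw [this, finrank_bot]; omega
  have hrn := LinearMap.finrank_range_add_finrank_ker (evP P n)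
  rw [finrank_V] at hrn
  rw [← LinearMap.range_eq_top]
  apply Submodule.eq_top_of_finrank_eq
  rw [hr]
  refine le_antisymm ?_ (by omega)
  rw [← hr]; exact Submodule.finrank_le _

/-- Averages are preserved by surjective homomorphisms of finite groups. -/
lemma sum_comp_of_surjective {A B : Type*} [AddCommGroup A] [AddCommGroup B] [Fintype A]
    [Fintype B] (φ : A →+ B) (hφ : Function.Surjective φ) (H : B → ℝ) :
    ∑ x, H (φ x) = (Fintype.card A : ℝ) / Fintype.card B * ∑ y, H y := by
  classical
  have hfib : ∀ y, ((Finset.univ.filter fun x => φ x = y).card : ℝ) =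
      (Finset.univ.filter fun x => φ x = 0).card := by
    intro y
    exact_mod_cast AddMonoidHom.card_fiber_eq_of_mem_range φ (hφ y) (hφ 0)
  have h1 : ∀ H : B → ℝ, ∑ x, H (φ x) = (Finset.univ.filter fun x => φ x = 0).card * ∑ y, H y := by
    intro H
    rw [← Finset.sum_fiberwise_of_maps_to (s := Finset.univ) (t := Finset.univ) (g := φ)
      (fun _ _ => Finset.mem_univ _), Finset.mul_sum]
    refine Finset.sum_congr rfl fun y _ => ?_
    rw [Finset.sum_congr rfl (g := fun _ => H y) (by
      intro x hx; rw [(Finset.mem_filter.1 hx).2])]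
    rw [Finset.sum_const, nsmul_eq_mul, hfib]
  have h2 := h1 fun _ => 1
  simp only [Finset.sum_const, Finset.card_univ, nsmul_eq_mul, mul_one] at h2
  rw [h1 H, h2]
  have : (Fintype.card B : ℝ) ≠ 0 := by exact_mod_cast Fintype.card_ne_zero
  field_simp

/-- Independence of the values of forms at distinct closed points. -/
lemma indep {J : Type} [Fintype J] [DecidableEq J] (n : J → ℕ) (P : Finset (ClosedPoint K))
    (h : ∀ j, ∑ c ∈ P, cpDeg c ≤ n j + 1) (F : (c : ClosedPoint K) → (J → Fc c) → ℝ) :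
    ∑ f : (∀ j, V K (n j)), ∏ c ∈ P, F c (fun j => ev c (f j).1) =
      (∏ j, (Nat.card K : ℝ) ^ (n j + 1)) *
        ∏ c ∈ P, ((((Nat.card K : ℝ) ^ cpDeg c) ^ Fintype.card J)⁻¹ * ∑ y : J → Fc c, F c y) := by
  classical
  -- simultaneous evaluation is a surjective homomorphism, so it preserves averages
  let φ : (∀ j, V K (n j)) →+ (∀ c : P, J → Fc c.1) :=
    { toFun := fun f c j => ev c.1 (f j).1
      map_zero' := by ext c j; simp
      map_add' := fun f g => by ext c j; simp }
  have hφ : Function.Surjective φ := by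
    intro y
    choose f hf using fun j => evP_surjective P (n j) (h j) (fun c => y c j)
    refine ⟨f, ?_⟩
    ext c j
    exact congrFun (hf j) c
  have h1 := sum_comp_of_surjective φ hφ (fun y => ∏ c : P, F c.1 (y c))
  have h2 : ∀ f : (∀ j, V K (n j)), ∏ c : P, F c.1 (φ f c)
      = ∏ c ∈ P, F c (fun j => ev c (f j).1) := fun f =>
    Finset.prod_coe_sort P (fun c => F c (fun j => ev c (f j).1))
  simp_rw [h2] at h1
  rw [h1]
  have h3 : ∑ y : (∀ c : P, J → Fc c.1), ∏ c : P, F c.1 (y c)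
      = ∏ c : P, ∑ y : J → Fc c.1, F c.1 y := by
    rw [Finset.prod_univ_sum, Fintype.piFinset_univ]
  rw [h3]
  have h4 : (Fintype.card (∀ j, V K (n j)) : ℝ) = ∏ j, (Nat.card K : ℝ) ^ (n j + 1) := by
    rw [Fintype.card_pi, Nat.cast_prod]
    refine Finset.prod_congr rfl fun j _ => ?_
    rw [← Nat.card_eq_fintype_card, card_V, Nat.cast_pow]
  have h5 : (Fintype.card (∀ c : P, J → Fc c.1) : ℝ) =
      ∏ c ∈ P, ((Nat.card K : ℝ) ^ cpDeg c) ^ Fintype.card J := by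
    rw [Fintype.card_pi, Nat.cast_prod, ← Finset.prod_coe_sort P]
    refine Finset.prod_congr rfl fun c _ => ?_
    rw [Fintype.card_fun, Nat.cast_pow, ← Nat.card_eq_fintype_card, card_Fc, Nat.cast_pow]
  rw [h4, h5, Finset.prod_coe_sort P (fun c => ∑ y : J → Fc c, F c y), Finset.prod_mul_distrib,
    Finset.prod_inv_distrib]
  rw [div_eq_mul_inv, mul_assoc]

end Indep
end ManinDP

/-! ### The lattice of pairs satisfying incidence conditions -/

namespace ManinDP
open MvPolynomial

section Lattice
variable {K : Type} [Field K] {r : ℕ}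

/-- The form `s₁ - c s₂` attached to a pair `s = (s₁, s₂)`. -/
def lin (c : K) : (BForm K × BForm K) →ₗ[K] BForm K where
  toFun s := s.1 - C c * s.2
  map_add' s t := by simp only [Prod.fst_add, Prod.snd_add]; ring
  map_smul' a s := by
    simp only [Prod.smul_fst, Prod.smul_snd, smul_eq_C_mul, RingHom.id_apply]; ring

lemma lin_apply (c : K) (s : BForm K × BForm K) : lin c s = s.1 - C c * s.2 := rfl

lemma lin_homog (c : K) {s : BForm K × BForm K} {n : ℕ} (h1 : s.1.IsHomogeneous n)
    (h2 : s.2.IsHomogeneous n) : (lin c s).IsHomogeneous n := by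
  have h3 := (isHomogeneous_C (Fin 2) c).mul h2
  rw [zero_add] at h3
  exact h1.sub h3

lemma lin_mul (c : K) (p : BForm K) (s : BForm K × BForm K) :
    lin c (p * s.1, p * s.2) = p * lin c s := by
  simp only [lin_apply]; ring

/-- Pairs of forms `s` of degree `n` satisfying the incidence conditions `gᵢ ∣ s₁ - cᵢ s₂`. -/
def Lat (c : Fin r → K) (g : Fin r → BForm K) (n : ℕ) : Submodule K (BForm K × BForm K) where
  carrier := {s | s.1.IsHomogeneous n ∧ s.2.IsHomogeneous n ∧ ∀ i, g i ∣ lin (c i) s}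
  zero_mem' := ⟨isHomogeneous_zero _ _ _, isHomogeneous_zero _ _ _, fun i => by simp⟩
  add_mem' := fun ha hb => ⟨ha.1.add hb.1, ha.2.1.add hb.2.1, fun i => by
    rw [map_add]; exact dvd_add (ha.2.2 i) (hb.2.2 i)⟩
  smul_mem' := fun x s hs => ⟨(V K n).smul_mem x hs.1, (V K n).smul_mem x hs.2.1, fun i => by
    rw [map_smul, smul_eq_C_mul]; exact Dvd.dvd.mul_left (hs.2.2 i) _⟩

lemma mem_Lat {c : Fin r → K} {g : Fin r → BForm K} {n : ℕ} {s : BForm K × BForm K} :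
    s ∈ Lat c g n ↔ s.1.IsHomogeneous n ∧ s.2.IsHomogeneous n ∧ ∀ i, g i ∣ lin (c i) s := Iff.rfl

/-- Inclusion of `Lat` into the space of all pairs of forms. -/
def latIncl (c : Fin r → K) (g : Fin r → BForm K) (n : ℕ) : Lat c g n →ₗ[K] V K n × V K n where
  toFun s := (⟨s.1.1, s.2.1⟩, ⟨s.1.2, s.2.2.1⟩)
  map_add' _ _ := rfl
  map_smul' _ _ := rfl

lemma latIncl_injective (c : Fin r → K) (g : Fin r → BForm K) (n : ℕ) :
    Function.Injective (latIncl c g n) := by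
  intro s t h
  have h1 := congrArg (fun x => (x.1.1, x.2.1)) h
  exact Subtype.ext h1

instance Lat_modfin (c : Fin r → K) (g : Fin r → BForm K) (n : ℕ) : Module.Finite K (Lat c g n) :=
  Module.Finite.of_injective _ (latIncl_injective c g n)

instance Lat_fin [Finite K] (c : Fin r → K) (g : Fin r → BForm K) (n : ℕ) :
    Finite (Lat c g n) := Module.finite_of_finite K

lemma mul_mem_Lat {c : Fin r → K} {g : Fin r → BForm K} {n m : ℕ} {s : BForm K × BForm K}
    (hs : s ∈ Lat c g n) {p : BForm K} (hp : p.IsHomogeneous m) :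
    (p * s.1, p * s.2) ∈ Lat c g (m + n) :=
  ⟨hp.mul hs.1, hp.mul hs.2.1, fun i => by rw [lin_mul]; exact (hs.2.2 i).mul_left _⟩

/-- The determinant `s₁ s₂' - s₂ s₁'`. -/
def det2 (s t : BForm K × BForm K) : BForm K := s.1 * t.2 - s.2 * t.1

lemma det2_eq (c : K) (s t : BForm K × BForm K) :
    det2 s t = lin c s * t.2 - s.2 * lin c t := by
  simp only [det2, lin_apply]; ring

lemma det2_homog {s t : BForm K × BForm K} {n m : ℕ} (h1 : s.1.IsHomogeneous n)
    (h2 : s.2.IsHomogeneous n) (h3 : t.1.IsHomogeneous m) (h4 : t.2.IsHomogeneous m) :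
    (det2 s t).IsHomogeneous (n + m) :=
  (h1.mul h4).sub (h2.mul h3)

/-- On two lattice vectors the `2 × 2` determinant is divisible by every `gᵢ`, because
`det2 s t` can be computed from `s₁ - cᵢ s₂` and `t₁ - cᵢ t₂`. -/
lemma prod_dvd_det2 {c : Fin r → K} {g : Fin r → BForm K}
    (hrp : ∀ i j, i ≠ j → IsRelPrime (g i) (g j)) {n m : ℕ} {s t : BForm K × BForm K}
    (hs : s ∈ Lat c g n) (ht : t ∈ Lat c g m) : (∏ i, g i) ∣ det2 s t := by
  refine Finset.prod_dvd_of_isRelPrime (fun i _ j _ hij => hrp i j hij) fun i _ => ?_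
  rw [det2_eq (c i)]
  exact dvd_sub ((hs.2.2 i).mul_right _) ((ht.2.2 i).mul_left _)

lemma prod_homog {g : Fin r → BForm K} {k : Fin r → ℕ} (hg : ∀ i, (g i).IsHomogeneous (k i)) :
    (∏ i, g i).IsHomogeneous (∑ i, k i) := IsHomogeneous.prod _ _ _ fun i _ => hg i

/-- The lower bound for the rank of the lattice coming from counting linear conditions. -/
lemma finrank_Lat_ge {c : Fin r → K} {g : Fin r → BForm K} {k : Fin r → ℕ}
    (hg : ∀ i, (g i).IsHomogeneous (k i)) (hg0 : ∀ i, g i ≠ 0) {n : ℕ} (hn : ∀ i, k i ≤ n) :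
    2 * n + 2 ≤ Module.finrank K (Lat c g n) + ∑ i, k i := by
  -- `Lat` is the kernel of `(s, h) ↦ (s₁ - cᵢ s₂ - gᵢ hᵢ)ᵢ`
  let φ : (V K n × V K n) × (∀ i, V K (n - k i)) →ₗ[K] (Fin r → V K n) :=
    LinearMap.pi fun i => LinearMap.codRestrict (V K n)
      (lin (c i) ∘ₗ ((V K n).subtype.prodMap (V K n).subtype) ∘ₗ LinearMap.fst K _ _
        - LinearMap.mulLeft K (g i) ∘ₗ (V K (n - k i)).subtype ∘ₗ LinearMap.proj i ∘ₗ
          LinearMap.snd K _ _) (by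
        rintro ⟨⟨s1, s2⟩, h⟩
        refine (V K n).sub_mem (lin_homog (c i) (s := (s1.1, s2.1)) s1.2 s2.2) ?_
        have := (hg i).mul (h i).2
        rwa [Nat.add_sub_cancel' (hn i)] at this)
  have hφ : ∀ x ∈ LinearMap.ker φ, ∀ i, lin (c i) (x.1.1.1, x.1.2.1) = g i * (x.2 i).1 := by
    intro x hx i
    have := congrArg Subtype.val (congrFun (LinearMap.mem_ker.1 hx) i)
    exact sub_eq_zero.1 this
  let ψ : LinearMap.ker φ →ₗ[K] Lat c g n :=
    LinearMap.codRestrict _ (((V K n).subtype.prodMap (V K n).subtype) ∘ₗ LinearMap.fst K _ _ ∘ₗ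
      (LinearMap.ker φ).subtype) (by
        intro x
        exact ⟨x.1.1.1.2, x.1.1.2.2, fun i => ⟨_, hφ x.1 x.2 i⟩⟩)
  have hψ : Function.Injective ψ := by
    rw [injective_iff_map_eq_zero]
    intro x hx
    have h1 : ((x.1.1.1.1, x.1.1.2.1) : BForm K × BForm K) = 0 := congrArg Subtype.val hx
    have h2 : ∀ i, x.1.2 i = 0 := by
      intro i
      have := hφ x.1 x.2 i
      rw [h1, map_zero] at this
      exact Subtype.ext ((mul_eq_zero.1 this.symm).resolve_left (hg0 i))
    apply Subtype.ext
    refine Prod.ext (Prod.ext (Subtype.ext (congrArg Prod.fst h1))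
      (Subtype.ext (congrArg Prod.snd h1))) (funext h2)
  have h1 := LinearMap.finrank_le_finrank_of_injective hψ
  have h2 := LinearMap.finrank_range_add_finrank_ker φ
  have h3 := Submodule.finrank_le (LinearMap.range φ)
  rw [Module.finrank_prod, Module.finrank_prod, Module.finrank_pi_fintype, finrank_V] at h2
  rw [Module.finrank_pi_fintype] at h3
  simp only [finrank_V, Finset.sum_const, Finset.card_univ, Fintype.card_fin, smul_eq_mul] at h2 h3
  have h4 : ∑ i, (n - k i + 1) + ∑ i, k i = r * (n + 1) := by
    rw [← Finset.sum_add_distrib, Finset.sum_congr rfl (g := fun _ => n + 1)]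
    · simp
    · intro i _; have := hn i; omega
  omega

/-- Two proportional pairs, the first of them coprime: the second is a multiple of the first. -/
lemma eq_mul_of_det2 {x y s1 s2 : BForm K} (h : IsRelPrime x y) (e : x * s2 = y * s1) :
    ∃ p, s1 = p * x ∧ s2 = p * y := by
  have hx : x ∣ s1 := h.dvd_of_dvd_mul_left (Dvd.intro _ e)
  have hy : y ∣ s2 := h.symm.dvd_of_dvd_mul_left (Dvd.intro _ e.symm)
  obtain ⟨p, rfl⟩ := hx
  obtain ⟨p', rfl⟩ := hy
  by_cases hx0 : x = 0
  · exact ⟨p', by simp [hx0], mul_comm _ _⟩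
  by_cases hy0 : y = 0
  · exact ⟨p, mul_comm _ _, by simp [hy0]⟩
  · have : p' = p := by
      have : x * y * p' = x * y * p := by linear_combination e
      exact mul_left_cancel₀ (mul_ne_zero hx0 hy0) this
    subst this
    exact ⟨p', mul_comm _ _, mul_comm _ _⟩

/-- A lattice vector of minimal degree divides every lattice vector proportional to it. -/
lemma eq_mul_of_minimal {c : Fin r → K} {g : Fin r → BForm K} {μ : ℕ} {s0 : BForm K × BForm K}
    (hs0 : s0 ∈ Lat c g μ) (h0 : s0 ≠ 0) (hmin : ∀ m < μ, Lat c g m = ⊥) {n : ℕ}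
    {s : BForm K × BForm K} (hs : s ∈ Lat c g n) (hd : det2 s0 s = 0) :
    ∃ p : BForm K, s = (p * s0.1, p * s0.2) := by
  classical
  let _ : GCDMonoid (BForm K) := UniqueFactorizationMonoid.toGCDMonoid _
  obtain ⟨x, y, hxy, e1, e2⟩ : ∃ x y, IsRelPrime x y ∧
      s0.1 = gcd s0.1 s0.2 * x ∧ s0.2 = gcd s0.1 s0.2 * y := by
    obtain ⟨x, e1⟩ := gcd_dvd_left s0.1 s0.2
    obtain ⟨y, e2⟩ := gcd_dvd_right s0.1 s0.2
    refine ⟨x, y, ?_, e1, e2⟩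
    have hne : gcd s0.1 s0.2 ≠ 0 := by
      intro h
      rw [gcd_eq_zero_iff] at h
      exact h0 (Prod.ext h.1 h.2)
    intro d hdx hdy
    have h1 : gcd s0.1 s0.2 * d ∣ gcd s0.1 s0.2 * 1 := by
      rw [mul_one]
      refine dvd_gcd ?_ ?_
      · conv_rhs => rw [e1]
        exact mul_dvd_mul_left _ hdx
      · conv_rhs => rw [e2]
        exact mul_dvd_mul_left _ hdy
    exact isUnit_of_dvd_one ((mul_dvd_mul_iff_left hne).1 h1)
  set e := gcd s0.1 s0.2 with he
  have he0 : e ≠ 0 := by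
    rintro h
    rw [h, zero_mul] at e1 e2
    exact h0 (Prod.ext e1 e2)
  have hxy0 : ¬ (x = 0 ∧ y = 0) := by
    rintro ⟨rfl, rfl⟩
    exact h0 (Prod.ext (by rw [e1, mul_zero]; rfl) (by rw [e2, mul_zero]; rfl))
  have h1 : x * s.2 = y * s.1 := by
    have : e * (x * s.2) = e * (y * s.1) := by
      have : s0.1 * s.2 - s0.2 * s.1 = 0 := hd
      rw [e1, e2] at this
      linear_combination this
    exact mul_left_cancel₀ he0 this
  obtain ⟨p, hp1, hp2⟩ := eq_mul_of_det2 hxy h1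
  by_cases hp0 : p = 0
  · exact ⟨0, Prod.ext (by rw [hp1, hp0]; simp) (by rw [hp2, hp0]; simp)⟩
  -- all the forms involved are homogeneous
  obtain ⟨me, hme⟩ : ∃ m, e.IsHomogeneous m := by
    by_cases h : s0.1 = 0
    · have h2 : s0.2 ≠ 0 := fun h' => h0 (Prod.ext h h')
      obtain ⟨m, -, hm⟩ := isHomogeneous_of_dvd hs0.2.1 h2 (Dvd.intro _ e2.symm)
      exact ⟨m, hm⟩
    · obtain ⟨m, -, hm⟩ := isHomogeneous_of_dvd hs0.1 h (Dvd.intro _ e1.symm)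
      exact ⟨m, hm⟩
  obtain ⟨md, -, hmd⟩ := isHomogeneous_of_dvd hme he0 (gcd_dvd_left e p)
  obtain ⟨v, hv⟩ := gcd_dvd_left e p
  have hd0 : gcd e p ≠ 0 := by
    intro h; rw [h, zero_mul] at hv; exact he0 hv
  have hvh := isHomogeneous_cofactor hme he0 hmd hv
  -- the pair `gcd (e, p) (x, y)` lies in the lattice
  have hw : ∀ i, g i ∣ lin (c i) (gcd e p * x, gcd e p * y) := by
    intro i
    have a1 : g i ∣ e * lin (c i) (x, y) := by
      have := hs0.2.2 i
      rwa [show s0 = (e * x, e * y) from Prod.ext e1 e2, lin_mul _ _ (x, y)] at this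
    have a2 : g i ∣ p * lin (c i) (x, y) := by
      have := hs.2.2 i
      rwa [show s = (p * x, p * y) from Prod.ext hp1 hp2, lin_mul _ _ (x, y)] at this
    rw [lin_mul _ _ (x, y)]
    exact (dvd_gcd a1 a2).trans (gcd_mul_right' _ _ _).dvd
  have hh : ∀ z m, (e * z).IsHomogeneous m → me ≤ m → (gcd e p * z).IsHomogeneous (m - (me - md)) := by
    intro z m hz hm
    by_cases hz0 : e * z = 0
    · rw [(mul_eq_zero.1 hz0).resolve_left he0, mul_zero]; exact isHomogeneous_zero _ _ _
    have h3 : e * z = v * (gcd e p * z) := by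
      conv_lhs => rw [hv]
      ring
    exact (isHomogeneous_cofactor hz hz0 hvh.2 h3).2
  have hmeμ : me ≤ μ := by
    by_cases h : s0.1 = 0
    · have h2 : s0.2 ≠ 0 := fun h' => h0 (Prod.ext h h')
      exact (isHomogeneous_cofactor hs0.2.1 h2 hme e2).1
    · exact (isHomogeneous_cofactor hs0.1 h hme e1).1
  have hmem : (gcd e p * x, gcd e p * y) ∈ Lat c g (μ - (me - md)) :=
    ⟨hh x μ (e1 ▸ hs0.1) hmeμ, hh y μ (e2 ▸ hs0.2.1) hmeμ, hw⟩
  have hmd_le := hvh.1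
  by_cases hlt : md < me
  · rw [hmin _ (by omega), Submodule.mem_bot, Prod.mk_eq_zero] at hmem
    exact absurd ⟨(mul_eq_zero.1 hmem.1).resolve_left hd0,
      (mul_eq_zero.1 hmem.2).resolve_left hd0⟩ hxy0
  · have hvu : IsUnit v := by
      have hv0 : v ≠ 0 := by rintro rfl; rw [mul_zero] at hv; exact he0 hv
      have := hvh.2
      rw [show me - md = 0 by omega] at this
      exact isUnit_of_degree_zero this hv0
    have hep : e ∣ p := by
      obtain ⟨w, hw'⟩ := hvu.exists_right_inv
      have : e ∣ gcd e p := ⟨w, by linear_combination (-w) * hv - gcd e p * hw'⟩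
      exact this.trans (gcd_dvd_right e p)
    obtain ⟨l, hl⟩ := hep
    refine ⟨l, Prod.ext ?_ ?_⟩
    · change s.1 = l * s0.1
      rw [hp1, hl, e1]; ring
    · change s.2 = l * s0.2
      rw [hp2, hl, e2]; ring

end Lattice
end ManinDP

/-! ### Bases of the lattice and successive minima -/

namespace ManinDP
open MvPolynomial

section Basis
variable {K : Type} [Field K] {r : ℕ}

lemma homog_of_mul {p x : BForm K} {n m : ℕ} (hx : x.IsHomogeneous m) (hx0 : x ≠ 0)
    (h : (p * x).IsHomogeneous n) : p.IsHomogeneous (n - m) := by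
  by_cases hp : p = 0
  · rw [hp]; exact isHomogeneous_zero _ _ _
  · exact (isHomogeneous_cofactor h (mul_ne_zero hp hx0) hx (mul_comm p x)).2

lemma homog_of_mul_pair {p : BForm K} {s : BForm K × BForm K} {n m : ℕ}
    (h1 : s.1.IsHomogeneous m) (h2 : s.2.IsHomogeneous m) (h0 : s ≠ 0)
    (h3 : (p * s.1).IsHomogeneous n) (h4 : (p * s.2).IsHomogeneous n) :
    p.IsHomogeneous (n - m) := by
  by_cases h : s.1 = 0
  · exact homog_of_mul h2 (fun h' => h0 (Prod.ext h h')) h4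
  · exact homog_of_mul h1 h h3

lemma eq_C_of_homog_zero {p : BForm K} (h : p.IsHomogeneous 0) : ∃ u : K, p = C u := by
  by_cases hp : p = 0
  · exact ⟨0, by rw [hp, C_0]⟩
  · obtain ⟨a, -, h⟩ := MvPolynomial.isUnit_iff_eq_C_of_isReduced.1 (isUnit_of_degree_zero h hp)
    exact ⟨a, h⟩

/-- Multiplication of a pair by forms of degree `n`, as a linear map. -/
def mulPair (s : BForm K × BForm K) (n : ℕ) : V K n →ₗ[K] BForm K × BForm K :=
  (LinearMap.prod (LinearMap.mulRight K s.1) (LinearMap.mulRight K s.2)) ∘ₗ (V K n).subtype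

lemma mulPair_apply (s : BForm K × BForm K) (n : ℕ) (p : V K n) :
    mulPair s n p = (p.1 * s.1, p.1 * s.2) := rfl

/-- A basis of the module of all lattice vectors, of degrees `μ ≤ ν` with
`μ + ν = ∑ kᵢ`: its determinant is a nonzero constant multiple of `∏ gᵢ`. -/
lemma exists_basis {c : Fin r → K} {g : Fin r → BForm K} {k : Fin r → ℕ}
    (hg : ∀ i, (g i).IsHomogeneous (k i)) (hg0 : ∀ i, g i ≠ 0)
    (hrp : ∀ i j, i ≠ j → IsRelPrime (g i) (g j)) (hk : ∀ i, 2 * k i ≤ ∑ j, k j) :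
    ∃ (μ ν : ℕ) (s0 s1 : BForm K × BForm K) (u : K), μ + ν = ∑ i, k i ∧ μ ≤ ν ∧
      s0 ∈ Lat c g μ ∧ s1 ∈ Lat c g ν ∧ s0 ≠ 0 ∧ u ≠ 0 ∧ det2 s0 s1 = C u * ∏ i, g i := by
  classical
  set κ := ∑ j, k j with hκ
  -- `s0` is a nonzero vector of minimal degree `μ`
  have hex : ∃ m, Lat c g m ≠ ⊥ := by
    refine ⟨κ / 2, fun h => ?_⟩
    have := finrank_Lat_ge (c := c) hg hg0 (n := κ / 2) (fun i => by have := hk i; omega)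
    rw [h, finrank_bot] at this
    omega
  have hμ := Nat.find_spec hex
  have hmin : ∀ m < Nat.find hex, Lat c g m = ⊥ := fun m hm => not_not.1 (Nat.find_min hex hm)
  have hle : Nat.find hex ≤ κ / 2 := by
    refine Nat.find_min' hex fun h => ?_
    have := finrank_Lat_ge (c := c) hg hg0 (n := κ / 2) (fun i => by have := hk i; omega)
    rw [h, finrank_bot] at this
    omega
  set μ := Nat.find hex
  obtain ⟨s0, hs0, h0⟩ := (Submodule.ne_bot_iff _).1 hμ
  -- in degree `∑ kᵢ - μ` the multiples of `s0` do not fill the lattice, by `finrank_Lat_ge`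
  obtain ⟨s1, hs1, hd⟩ : ∃ s1 ∈ Lat c g (κ - μ), det2 s0 s1 ≠ 0 := by
    by_contra! hcon
    have hle2 : Lat c g (κ - μ) ≤ LinearMap.range (mulPair s0 (κ - μ - μ)) := by
      intro s hs
      obtain ⟨p, hp⟩ := eq_mul_of_minimal hs0 h0 hmin hs (hcon s hs)
      have h1 := hs.1
      have h2 := hs.2.1
      rw [hp] at h1 h2
      exact ⟨⟨p, homog_of_mul_pair hs0.1 hs0.2.1 h0 h1 h2⟩, hp.symm⟩
    have h1 := (Submodule.finrank_mono hle2).trans (LinearMap.finrank_range_le _)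
    rw [finrank_V] at h1
    have := finrank_Lat_ge (c := c) hg hg0 (n := κ - μ) (fun i => by have := hk i; omega)
    omega
  obtain ⟨h, hh, e⟩ := exists_cofactor (det2_homog hs0.1 hs0.2.1 hs1.1 hs1.2.1) (prod_homog hg)
    (prod_dvd_det2 hrp hs0 hs1)
  rw [← hκ, show μ + (κ - μ) - κ = 0 by omega] at hh
  obtain ⟨u, rfl⟩ := eq_C_of_homog_zero hh
  refine ⟨μ, κ - μ, s0, s1, u, by omega, by omega, hs0, hs1, h0, ?_, by rw [e, mul_comm]⟩
  rintro rfl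
  rw [C_0, mul_zero] at e
  exact hd e

/-- The combination `p s₀ + p' s₁`. -/
def comb (s0 s1 : BForm K × BForm K) (m m' : ℕ) : V K m × V K m' →ₗ[K] BForm K × BForm K :=
  LinearMap.coprod (mulPair s0 m) (mulPair s1 m')

lemma comb_apply (s0 s1 : BForm K × BForm K) (m m' : ℕ) (x : V K m × V K m') :
    comb s0 s1 m m' x = (x.1.1 * s0.1 + x.2.1 * s1.1, x.1.1 * s0.2 + x.2.1 * s1.2) := rfl

lemma comb_injective {s0 s1 : BForm K × BForm K} (m m' : ℕ) (h : det2 s0 s1 ≠ 0) :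
    Function.Injective (comb s0 s1 m m') := by
  rw [injective_iff_map_eq_zero]
  intro x hx
  rw [comb_apply, Prod.mk_eq_zero] at hx
  obtain ⟨h1, h2⟩ := hx
  have e1 : x.1.1 * det2 s0 s1 = 0 := by
    unfold det2; linear_combination s1.2 * h1 - s1.1 * h2
  have e2 : x.2.1 * det2 s0 s1 = 0 := by
    unfold det2; linear_combination s0.1 * h2 - s0.2 * h1
  exact Prod.ext (Subtype.ext ((mul_eq_zero.1 e1).resolve_right h))
    (Subtype.ext ((mul_eq_zero.1 e2).resolve_right h))

/-- Cramer's rule: the two basis vectors generate the lattice in every sufficiently large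
degree. -/
lemma range_comb {c : Fin r → K} {g : Fin r → BForm K} {k : Fin r → ℕ}
    (hg : ∀ i, (g i).IsHomogeneous (k i)) (hg0 : ∀ i, g i ≠ 0)
    (hrp : ∀ i j, i ≠ j → IsRelPrime (g i) (g j)) {μ ν n : ℕ} {s0 s1 : BForm K × BForm K} {u : K}
    (hμν : μ + ν = ∑ i, k i) (hs0 : s0 ∈ Lat c g μ) (hs1 : s1 ∈ Lat c g ν) (hu : u ≠ 0)
    (hd : det2 s0 s1 = C u * ∏ i, g i) (hμ : μ ≤ n) (hν : ν ≤ n) :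
    LinearMap.range (comb s0 s1 (n - μ) (n - ν)) = Lat c g n := by
  have hG : (∏ i, g i) ≠ 0 := Finset.prod_ne_zero_iff.2 fun i _ => hg0 i
  apply le_antisymm
  · rintro _ ⟨x, rfl⟩
    rw [comb_apply]
    have h1 : (x.1.1 * s0.1, x.1.1 * s0.2) ∈ Lat c g (n - μ + μ) := mul_mem_Lat hs0 x.1.2
    have h2 : (x.2.1 * s1.1, x.2.1 * s1.2) ∈ Lat c g (n - ν + ν) := mul_mem_Lat hs1 x.2.2
    rw [Nat.sub_add_cancel hμ] at h1
    rw [Nat.sub_add_cancel hν] at h2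
    have h3 := (Lat c g n).add_mem h1 h2
    rwa [Prod.mk_add_mk] at h3
  · intro s hs
    obtain ⟨p, hp, e1⟩ := exists_cofactor (det2_homog hs.1 hs.2.1 hs1.1 hs1.2.1) (prod_homog hg)
      (prod_dvd_det2 hrp hs hs1)
    obtain ⟨p', hp', e2⟩ := exists_cofactor (det2_homog hs0.1 hs0.2.1 hs.1 hs.2.1) (prod_homog hg)
      (prod_dvd_det2 hrp hs0 hs)
    have e3 : (C u⁻¹ : BForm K) * C u = 1 := by rw [← C_mul, inv_mul_cancel₀ hu, C_1]
    have m1 : C u⁻¹ * p ∈ V K (n - μ) := by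
      have := (isHomogeneous_C (Fin 2) u⁻¹).mul hp
      rwa [show 0 + (n + ν - ∑ i, k i) = n - μ by omega] at this
    have m2 : C u⁻¹ * p' ∈ V K (n - ν) := by
      have := (isHomogeneous_C (Fin 2) u⁻¹).mul hp'
      rwa [show 0 + (μ + n - ∑ i, k i) = n - ν by omega] at this
    refine ⟨(⟨C u⁻¹ * p, m1⟩, ⟨C u⁻¹ * p', m2⟩), ?_⟩
    rw [comb_apply]
    unfold det2 at e1 e2 hd
    generalize (∏ i, g i) = G at *
    generalize (C u⁻¹ : BForm K) = w at *
    refine Prod.ext (mul_left_cancel₀ hG ?_) (mul_left_cancel₀ hG ?_)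
    · change G * (w * p * s0.1 + w * p' * s1.1) = G * s.1
      linear_combination (-w * s0.1) * e1 - w * s1.1 * e2 + w * s.1 * hd + G * s.1 * e3
    · change G * (w * p * s0.2 + w * p' * s1.2) = G * s.2
      linear_combination (-w * s0.2) * e1 - w * s1.2 * e2 + w * s.2 * hd + G * s.2 * e3

/-- A lattice containing a coprime pair has at most the expected rank. -/
lemma finrank_Lat_le {c : Fin r → K} {g : Fin r → BForm K} {k : Fin r → ℕ}
    (hg : ∀ i, (g i).IsHomogeneous (k i))
    (hrp : ∀ i j, i ≠ j → IsRelPrime (g i) (g j)) {n : ℕ} {s : BForm K × BForm K}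
    (hs : s ∈ Lat c g n) (hs0 : s ≠ 0) (hsp : IsRelPrime s.1 s.2) :
    Module.finrank K (Lat c g n) ≤ max (2 * n + 2 - ∑ i, k i) 1 := by
  -- `det2 s` has kernel spanned by `s` and image in the multiples of `∏ gᵢ` of degree `2 * n`
  let φ : Lat c g n →ₗ[K] BForm K :=
    (LinearMap.mulLeft K s.1 ∘ₗ LinearMap.snd K _ _ - LinearMap.mulLeft K s.2 ∘ₗ
      LinearMap.fst K _ _) ∘ₗ (Lat c g n).subtype
  have hφ : ∀ t, φ t = det2 s t.1 := fun t => rfl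
  have hker : LinearMap.ker φ ≤ Submodule.span K {(⟨s, hs⟩ : Lat c g n)} := by
    intro t ht
    have h1 : det2 s t.1 = 0 := ht
    obtain ⟨p, e1, e2⟩ := eq_mul_of_det2 hsp (sub_eq_zero.1 h1)
    have h2 := t.2.1
    have h3 := t.2.2.1
    rw [e1] at h2
    rw [e2] at h3
    have h4 := homog_of_mul_pair hs.1 hs.2.1 hs0 h2 h3
    rw [Nat.sub_self] at h4
    obtain ⟨u, rfl⟩ := eq_C_of_homog_zero h4
    refine Submodule.mem_span_singleton.2 ⟨u, Subtype.ext (Prod.ext ?_ ?_)⟩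
    · rw [e1]; exact smul_eq_C_mul _ _
    · rw [e2]; exact smul_eq_C_mul _ _
  have hk1 : Module.finrank K (LinearMap.ker φ) ≤ 1 := by
    refine (Submodule.finrank_mono hker).trans ?_
    refine (finrank_span_le_card _).trans ?_
    simp
  have hrn := LinearMap.finrank_range_add_finrank_ker φ
  by_cases hn : ∑ i, k i ≤ 2 * n
  · have hle : LinearMap.range φ ≤ LinearMap.range
        (LinearMap.mulLeft K (∏ i, g i) ∘ₗ (V K (2 * n - ∑ i, k i)).subtype) := by
      rintro _ ⟨t, rfl⟩
      obtain ⟨p, hp, e1⟩ := exists_cofactor (det2_homog hs.1 hs.2.1 t.2.1 t.2.2.1) (prod_homog hg)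
        (prod_dvd_det2 hrp hs t.2)
      rw [← two_mul] at hp
      exact ⟨⟨p, hp⟩, by rw [hφ, e1]; rfl⟩
    have h1 := (Submodule.finrank_mono hle).trans (LinearMap.finrank_range_le _)
    rw [finrank_V] at h1
    omega
  · have : LinearMap.range φ = ⊥ := by
      rw [eq_bot_iff]
      rintro _ ⟨t, rfl⟩
      exact eq_zero_of_dvd_of_lt (det2_homog hs.1 hs.2.1 t.2.1 t.2.2.1) (prod_homog hg)
        (prod_dvd_det2 hrp hs t.2) (by omega)
    rw [this, finrank_bot] at hrn
    omega

lemma card_Lat [Finite K] (c : Fin r → K) (g : Fin r → BForm K) (n : ℕ) :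
    Nat.card (Lat c g n) = Nat.card K ^ Module.finrank K (Lat c g n) :=
  Module.natCard_eq_pow_finrank

/-- A nonzero lattice vector of small degree has no vanishing component `s₁ - cᵢ s₂`. -/
lemma lin_ne_zero {c : Fin r → K} (hc : Function.Injective c) {g : Fin r → BForm K}
    {k : Fin r → ℕ} (hg : ∀ i, (g i).IsHomogeneous (k i))
    (hrp : ∀ i j, i ≠ j → IsRelPrime (g i) (g j)) {n : ℕ} {s : BForm K × BForm K}
    (hs : s ∈ Lat c g n) (hs0 : s ≠ 0) (i : Fin r) (hn : n + k i < ∑ j, k j) :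
    lin (c i) s ≠ 0 := by
  intro h
  have h1 : s.1 = C (c i) * s.2 := sub_eq_zero.1 h
  have hdvd : (∏ j ∈ Finset.univ.erase i, g j) ∣ s.2 := by
    refine Finset.prod_dvd_of_isRelPrime (fun a _ b _ hab => hrp a b hab) fun j hj => ?_
    have h2 := hs.2.2 j
    rw [lin_apply, h1, ← sub_mul, ← C_sub] at h2
    refine (IsUnit.dvd_mul_left ?_).1 h2
    refine IsUnit.map C (isUnit_iff_ne_zero.2 (sub_ne_zero.2 fun e => ?_))
    exact (Finset.mem_erase.1 hj).1 (hc e).symm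
  have h3 : s.2 = 0 := by
    refine eq_zero_of_dvd_of_lt hs.2.1 (IsHomogeneous.prod _ g k fun j _ => hg j) hdvd ?_
    have := Finset.add_sum_erase Finset.univ k (Finset.mem_univ i)
    omega
  exact hs0 (Prod.ext (by rw [h1, h3, mul_zero]; rfl) h3)

end Basis
end ManinDP

/-! ### Local counting over a finite field -/

namespace ManinDP
open MvPolynomial

section Local

/-- Proportion, among pairs of lattice vectors, of those which are admissible at a place with
`p = 1 / #(residue field)`, when `z` of the forms `gᵢ` vanish at that place. -/
def W (r : ℕ) (p : ℝ) (z : ℕ) : ℝ :=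
  if z = 0 then (1 - p ^ 2) ^ 2 - r * p ^ 2 * (1 - p) ^ 2
  else if z = 1 then (1 - p) ^ 2 * (1 - p ^ 2) else 0

variable {F : Type} [Field F] [Fintype F] [DecidableEq F]

lemma sum_ind_ne : ∑ x : F, (if x = 0 then (0 : ℝ) else 1) = Fintype.card F - 1 := by
  have : ∀ x : F, (if x = 0 then (0 : ℝ) else 1) = 1 - if x = 0 then 1 else 0 := by
    intro x; split_ifs <;> norm_num
  simp [this, Finset.sum_sub_distrib]

lemma sum_ind_pair : ∑ x : F × F, (if x = 0 then (0 : ℝ) else 1) = (Fintype.card F : ℝ) ^ 2 - 1 := by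
  have : ∀ x : F × F, (if x = 0 then (0 : ℝ) else 1) = 1 - if x = 0 then 1 else 0 := by
    intro x; split_ifs <;> norm_num
  simp [this, Finset.sum_sub_distrib, pow_two]

/-- The linear functional with coefficients `l`. -/
def dot (l x : F × F) : F := l.1 * x.1 + l.2 * x.2

/-- The determinant of two functionals. -/
def wedge (l m : F × F) : F := l.1 * m.2 - l.2 * m.1

lemma dot_eq_zero_of_wedge {l m x : F × F} (h : wedge l m ≠ 0) (h1 : dot l x = 0)
    (h2 : dot m x = 0) : x = 0 := by
  unfold wedge at h
  unfold dot at h1 h2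
  refine Prod.ext ?_ ?_
  · exact (mul_eq_zero.1 (by linear_combination m.2 * h1 - l.2 * h2 :
      (l.1 * m.2 - l.2 * m.1) * x.1 = 0)).resolve_left h
  · exact (mul_eq_zero.1 (by linear_combination l.1 * h2 - m.1 * h1 :
      (l.1 * m.2 - l.2 * m.1) * x.2 = 0)).resolve_left h

lemma bij_of_wedge {l m : F × F} (h : wedge l m ≠ 0) :
    Function.Bijective fun x : F × F => (dot l x, dot m x) := by
  rw [← Finite.injective_iff_bijective]
  intro x y hxy
  rw [Prod.mk.injEq] at hxy
  refine sub_eq_zero.1 (dot_eq_zero_of_wedge h (x := x - y) ?_ ?_)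
  · have := hxy.1
    unfold dot at this ⊢
    simp only [Prod.fst_sub, Prod.snd_sub]; linear_combination this
  · have := hxy.2
    unfold dot at this ⊢
    simp only [Prod.fst_sub, Prod.snd_sub]; linear_combination this

lemma sum_wedge {l m : F × F} (h : wedge l m ≠ 0) (f : F → F → ℝ) :
    ∑ x : F × F, f (dot l x) (dot m x) = ∑ x : F × F, f x.1 x.2 :=
  Function.Bijective.sum_comp (bij_of_wedge h) (fun x : F × F => f x.1 x.2)

lemma sum_prod_mul (u v : F → ℝ) : ∑ x : F × F, u x.1 * v x.2 = (∑ x, u x) * ∑ y, v y := by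
  rw [Fintype.sum_prod_type, Finset.sum_mul_sum]

lemma sum_line {l m : F × F} (h : wedge l m ≠ 0) :
    ∑ x : F × F, (if x ≠ 0 ∧ dot l x = 0 then (1 : ℝ) else 0) = Fintype.card F - 1 := by
  have h1 : ∀ x : F × F, (if x ≠ 0 ∧ dot l x = 0 then (1 : ℝ) else 0)
      = (if dot l x = 0 then 1 else 0) * (if dot m x = 0 then 0 else 1) := by
    intro x
    by_cases h1 : dot l x = 0
    · by_cases h2 : dot m x = 0
      · have := dot_eq_zero_of_wedge h h1 h2
        simp [this, dot]
      · have : x ≠ 0 := by rintro rfl; simp [dot] at h2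
        simp [h1, h2, this]
    · simp [h1]
  rw [Finset.sum_congr rfl fun x _ => h1 x,
    sum_wedge h (fun a b => (if a = 0 then 1 else 0) * (if b = 0 then 0 else 1)),
    sum_prod_mul (fun a : F => if a = 0 then (1 : ℝ) else 0) (fun b => if b = 0 then 0 else 1),
    sum_ind_ne]
  simp

/-- The local data of a lattice basis at a place: `ρ₁, ρ₂` are the two coordinates of a lattice
vector as functionals of its coefficients, `γᵢ` are the values of `gᵢ`, and `λᵢ` the values of
`(s₁ - cᵢ s₂) / gᵢ`. -/
structure LocalData {r : ℕ} (c γ : Fin r → F) (ρ₁ ρ₂ : F × F) (lam : Fin r → F × F) : Prop where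
  rel : ∀ i x, dot ρ₁ x - c i * dot ρ₂ x = γ i * dot (lam i) x
  wed : ∀ i j, i ≠ j → (∀ l, l ≠ i → l ≠ j → γ l ≠ 0) → wedge (lam i) (lam j) ≠ 0

/-- At a place where no `gᵢ` vanishes, only the zero coefficient vector gives a lattice vector
vanishing there. -/
lemma LocalData.zero_iff {r : ℕ} {c γ : Fin r → F} {ρ₁ ρ₂ : F × F} {lam : Fin r → F × F}
    (h : LocalData c γ ρ₁ ρ₂ lam) (hγ : ∀ l, γ l ≠ 0) {i j : Fin r} (hij : i ≠ j) (x : F × F) :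
    (dot ρ₁ x = 0 ∧ dot ρ₂ x = 0) ↔ x = 0 := by
  constructor
  · rintro ⟨h1, h2⟩
    refine dot_eq_zero_of_wedge (h.wed i j hij fun l _ _ => hγ l) ?_ ?_
    · have := h.rel i x
      rw [h1, h2, mul_zero, sub_zero] at this
      exact (mul_eq_zero.1 this.symm).resolve_left (hγ i)
    · have := h.rel j x
      rw [h1, h2, mul_zero, sub_zero] at this
      exact (mul_eq_zero.1 this.symm).resolve_left (hγ j)
  · rintro rfl; simp [dot]

/-- Admissibility of a pair of coefficient vectors: neither lattice vector vanishes at the place,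
and for no `i` do `(s₁ - cᵢ s₂) / gᵢ` and `(t₁ - cᵢ' t₂) / gᵢ` vanish simultaneously. -/
def LocOK {r : ℕ} (ρ₁ ρ₂ ρ₁' ρ₂' : F × F) (lam lam' : Fin r → F × F)
    (x : (F × F) × (F × F)) : Prop :=
  ¬ (dot ρ₁ x.1 = 0 ∧ dot ρ₂ x.1 = 0) ∧ ¬ (dot ρ₁' x.2 = 0 ∧ dot ρ₂' x.2 = 0) ∧
    ∀ i, ¬ (dot (lam i) x.1 = 0 ∧ dot (lam' i) x.2 = 0)

open Classical in
/-- The local count at a place where no `gᵢ` vanishes. Both lattices reduce onto the whole plane;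
the `r` excluded conditions are products of two lines, disjoint away from vanishing vectors. -/
lemma local_count_zero {r : ℕ} {c c' γ γ' : Fin r → F} {ρ₁ ρ₂ ρ₁' ρ₂' : F × F}
    {lam lam' : Fin r → F × F} (h : LocalData c γ ρ₁ ρ₂ lam) (h' : LocalData c' γ' ρ₁' ρ₂' lam')
    (hr : 2 ≤ r) (hγ : ∀ l, γ l ≠ 0) (hγ' : ∀ l, γ' l ≠ 0) :
    ∑ x, (if LocOK ρ₁ ρ₂ ρ₁' ρ₂' lam lam' x then (1 : ℝ) else 0) =
      ((Fintype.card F : ℝ) ^ 2 - 1) ^ 2 - r * ((Fintype.card F : ℝ) - 1) ^ 2 := by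
  have h01 : (⟨0, by omega⟩ : Fin r) ≠ ⟨1, by omega⟩ := by simp
  have hne : ∀ i : Fin r, ∃ j, i ≠ j := by
    intro i
    by_cases hi : i = ⟨0, by omega⟩
    · exact ⟨⟨1, by omega⟩, by rw [hi]; exact h01⟩
    · exact ⟨_, hi⟩
  have key : ∀ x, (if LocOK ρ₁ ρ₂ ρ₁' ρ₂' lam lam' x then (1 : ℝ) else 0) =
      (if x.1 = 0 then 0 else 1) * (if x.2 = 0 then 0 else 1) -
      ∑ i, (if x.1 ≠ 0 ∧ dot (lam i) x.1 = 0 then (1 : ℝ) else 0) *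
        (if x.2 ≠ 0 ∧ dot (lam' i) x.2 = 0 then (1 : ℝ) else 0) := by
    rintro ⟨x, y⟩
    unfold LocOK
    simp only [h.zero_iff hγ h01, h'.zero_iff hγ' h01]
    by_cases hx : x = 0
    · simp [hx]
    by_cases hy : y = 0
    · simp [hy]
    by_cases hi : ∃ i, dot (lam i) x = 0 ∧ dot (lam' i) y = 0
    · obtain ⟨i, hi1, hi2⟩ := hi
      rw [if_neg (by rintro ⟨-, -, h3⟩; exact h3 i ⟨hi1, hi2⟩), Finset.sum_eq_single i]
      · simp [hx, hy, hi1, hi2]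
      · intro j _ hji
        -- distinct excluded lines through the origin meet only there
        have : dot (lam j) x ≠ 0 := fun h0 =>
          hx (dot_eq_zero_of_wedge (h.wed j i hji fun l _ _ => hγ l) h0 hi1)
        simp [this]
      · simp
    · push Not at hi
      rw [if_pos ⟨hx, hy, fun i hi' => hi i hi'.1 hi'.2⟩, Finset.sum_eq_zero]
      · simp [hx, hy]
      · intro i _
        by_cases h1 : dot (lam i) x = 0
        · simp [hi i h1]
        · simp [h1]
  rw [Finset.sum_congr rfl fun x _ => key x, Finset.sum_sub_distrib, Finset.sum_comm]
  have hprod : ∀ u v : F × F → ℝ, ∑ x : (F × F) × (F × F), u x.1 * v x.2 =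
      (∑ x, u x) * ∑ y, v y := fun u v => by
    rw [Fintype.sum_prod_type, Finset.sum_mul_sum]
  rw [hprod (fun x => if x = 0 then 0 else 1) (fun x => if x = 0 then 0 else 1),
    Finset.sum_congr rfl fun i _ => hprod (fun x => if x ≠ 0 ∧ dot (lam i) x = 0 then 1 else 0)
      (fun x => if x ≠ 0 ∧ dot (lam' i) x = 0 then 1 else 0), sum_ind_pair]
  have : ∀ i : Fin r, (∑ x : F × F, (if x ≠ 0 ∧ dot (lam i) x = 0 then (1 : ℝ) else 0)) *
      (∑ x : F × F, (if x ≠ 0 ∧ dot (lam' i) x = 0 then (1 : ℝ) else 0)) =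
      ((Fintype.card F : ℝ) - 1) ^ 2 := by
    intro i
    obtain ⟨j, hj⟩ := hne i
    rw [sum_line (h.wed i j hj fun l _ _ => hγ l), sum_line (h'.wed i j hj fun l _ _ => hγ' l),
      pow_two]
  rw [Finset.sum_congr rfl fun i _ => this i]
  simp [pow_two]

open Classical in
/-- The local count at a place where exactly one `gᵢ` vanishes: there the lattice vectors
reduce to a line, on which `s ≠ 0` already excludes the conditions at the other indices. -/
lemma local_count_one {r : ℕ} {c c' γ γ' : Fin r → F} (hc : Function.Injective c)
    (hc' : Function.Injective c') {ρ₁ ρ₂ ρ₁' ρ₂' : F × F}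
    {lam lam' : Fin r → F × F} (h : LocalData c γ ρ₁ ρ₂ lam) (h' : LocalData c' γ' ρ₁' ρ₂' lam')
    (hr : 2 ≤ r) (i : Fin r) (hi : γ i = 0) (hi' : γ' i = 0) (hγ : ∀ l, l ≠ i → γ l ≠ 0)
    (hγ' : ∀ l, l ≠ i → γ' l ≠ 0) :
    ∑ x, (if LocOK ρ₁ ρ₂ ρ₁' ρ₂' lam lam' x then (1 : ℝ) else 0) =
      ((Fintype.card F : ℝ) - 1) ^ 2 * ((Fintype.card F : ℝ) ^ 2 - 1) := by
  obtain ⟨j, hj⟩ : ∃ j, j ≠ i := by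
    by_cases hi : i = ⟨0, by omega⟩
    · exact ⟨⟨1, by omega⟩, by rw [hi]; simp⟩
    · exact ⟨_, fun h => hi h.symm⟩
  -- the facts needed for each of the two sides
  have main : ∀ {c γ : Fin r → F} {ρ₁ ρ₂ : F × F} {lam : Fin r → F × F},
      Function.Injective c → LocalData c γ ρ₁ ρ₂ lam → γ i = 0 → (∀ l, l ≠ i → γ l ≠ 0) →
      wedge (lam i) ρ₂ ≠ 0 ∧ (∀ x, dot ρ₂ x = 0 → dot ρ₁ x = 0) ∧
        ∀ l, l ≠ i → ∀ x, dot (lam l) x = 0 → dot ρ₂ x = 0 := by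
    intro c γ ρ₁ ρ₂ lam hc h hi hγ
    have e1 : ∀ x, dot ρ₁ x = c i * dot ρ₂ x := fun x => by
      have := h.rel i x
      rw [hi, zero_mul] at this
      exact sub_eq_zero.1 this
    have e2 : ∀ l x, (c i - c l) * dot ρ₂ x = γ l * dot (lam l) x := fun l x => by
      rw [← h.rel l x, e1]; ring
    refine ⟨?_, fun x hx => by rw [e1, hx, mul_zero], fun l hl x hx => ?_⟩
    · have h1 := e2 j (1, 0)
      have h2 := e2 j (0, 1)
      simp only [dot, mul_one, mul_zero, add_zero, zero_add] at h1 h2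
      have h3 : (c i - c j) * wedge (lam i) ρ₂ = γ j * wedge (lam i) (lam j) := by
        unfold wedge; linear_combination (lam i).1 * h2 - (lam i).2 * h1
      intro h0
      rw [h0, mul_zero] at h3
      rcases mul_eq_zero.1 h3.symm with h4 | h4
      · exact hγ j hj h4
      · exact h.wed i j hj.symm (fun l hl _ => hγ l hl) h4
    · have := e2 l x
      rw [hx, mul_zero] at this
      exact (mul_eq_zero.1 this).resolve_left (sub_ne_zero.2 fun e => hl (hc e).symm)
  obtain ⟨m1, m2, m3⟩ := main hc h hi hγ
  obtain ⟨m1', m2', m3'⟩ := main hc' h' hi' hγ'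
  have key : ∀ x, (if LocOK ρ₁ ρ₂ ρ₁' ρ₂' lam lam' x then (1 : ℝ) else 0) =
      (if dot ρ₂ x.1 = 0 then 0 else 1) * (if dot ρ₂' x.2 = 0 then 0 else 1) *
        (1 - (if dot (lam i) x.1 = 0 then 1 else 0) * (if dot (lam' i) x.2 = 0 then 1 else 0)) := by
    rintro ⟨x, y⟩
    unfold LocOK
    dsimp only
    by_cases hx : dot ρ₂ x = 0
    · simp [hx, m2 x hx]
    by_cases hy : dot ρ₂' y = 0
    · simp [hy, m2' y hy]
    by_cases h1 : dot (lam i) x = 0 ∧ dot (lam' i) y = 0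
    · rw [if_neg (by rintro ⟨-, -, h3⟩; exact h3 i h1)]
      simp [h1.1, h1.2]
    · rw [if_pos]
      · simp only [hx, hy, if_false, mul_one, one_mul]
        by_cases h2 : dot (lam i) x = 0
        · simp [show ¬ dot (lam' i) y = 0 from fun h3 => h1 ⟨h2, h3⟩]
        · simp [h2]
      · refine ⟨fun h => hx h.2, fun h => hy h.2, fun l hl => ?_⟩
        by_cases hli : l = i
        · rw [hli] at hl; exact h1 hl
        · exact hx (m3 l hli x hl.1)
  rw [Finset.sum_congr rfl fun x _ => key x, Fintype.sum_prod_type]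
  dsimp only
  -- `lam i` and `ρ₂` are independent functionals, hence serve as coordinates on each side
  rw [sum_wedge m1 (fun a b => ∑ y : F × F, (if b = 0 then 0 else 1) *
    (if dot ρ₂' y = 0 then 0 else 1) * (1 - (if a = 0 then 1 else 0) *
      (if dot (lam' i) y = 0 then 1 else 0)))]
  have h2 : ∀ x : F × F, ∑ y : F × F, (if x.2 = 0 then (0 : ℝ) else 1) *
      (if dot ρ₂' y = 0 then 0 else 1) * (1 - (if x.1 = 0 then 1 else 0) *
        (if dot (lam' i) y = 0 then 1 else 0)) =
      ∑ y : F × F, (if x.2 = 0 then (0 : ℝ) else 1) *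
      (if y.2 = 0 then 0 else 1) * (1 - (if x.1 = 0 then 1 else 0) *
        (if y.1 = 0 then 1 else 0)) := fun x =>
    sum_wedge m1' (fun a b => (if x.2 = 0 then (0 : ℝ) else 1) *
      (if b = 0 then 0 else 1) * (1 - (if x.1 = 0 then 1 else 0) *
        (if a = 0 then 1 else 0)))
  rw [Finset.sum_congr rfl fun x _ => h2 x]
  have h3 : ∀ x y : F × F, (if x.2 = 0 then (0 : ℝ) else 1) *
      (if y.2 = 0 then 0 else 1) * (1 - (if x.1 = 0 then 1 else 0) *
        (if y.1 = 0 then 1 else 0)) = (if x.2 = 0 then (0 : ℝ) else 1) *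
      (if y.2 = 0 then 0 else 1) - ((if x.1 = 0 then 1 else 0) * (if x.2 = 0 then (0 : ℝ) else 1)) *
        ((if y.1 = 0 then 1 else 0) * (if y.2 = 0 then 0 else 1)) := fun x y => by ring
  simp only [h3, Finset.sum_sub_distrib, ← Finset.sum_mul_sum]
  have h4 : ∑ x : F × F, (if x.2 = 0 then (0 : ℝ) else 1) =
      Fintype.card F * (Fintype.card F - 1) := by
    rw [Fintype.sum_prod_type]; simp only [sum_ind_ne]; simp [mul_sub]
  have h5 : ∑ x : F × F, (if x.1 = 0 then (1 : ℝ) else 0) * (if x.2 = 0 then (0 : ℝ) else 1) =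
      Fintype.card F - 1 := by
    rw [sum_prod_mul (fun a : F => if a = 0 then (1 : ℝ) else 0)
      (fun b => if b = 0 then 0 else 1), sum_ind_ne]
    simp
  rw [h4, h5]; ring

open Classical in
/-- The proportion of admissible pairs of coefficient vectors depends only on the number of
vanishing `gᵢ`. -/
lemma local_count {r : ℕ} {c c' γ γ' : Fin r → F} (hc : Function.Injective c)
    (hc' : Function.Injective c') {ρ₁ ρ₂ ρ₁' ρ₂' : F × F}
    {lam lam' : Fin r → F × F} (h : LocalData c γ ρ₁ ρ₂ lam) (h' : LocalData c' γ' ρ₁' ρ₂' lam')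
    (hr : 2 ≤ r) (hγγ' : ∀ i, γ i = 0 ↔ γ' i = 0)
    (h1 : ∀ i j, i ≠ j → ¬ (γ i = 0 ∧ γ j = 0)) :
    ((Fintype.card F : ℝ) ^ 4)⁻¹ *
      ∑ x, (if LocOK ρ₁ ρ₂ ρ₁' ρ₂' lam lam' x then (1 : ℝ) else 0) =
      W r (Fintype.card F : ℝ)⁻¹ (Finset.univ.filter fun i => γ i = 0).card := by
  have hQ : (Fintype.card F : ℝ) ≠ 0 := by exact_mod_cast Fintype.card_ne_zero
  by_cases hz : ∃ i, γ i = 0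
  · obtain ⟨i, hi⟩ := hz
    have hγ : ∀ l, l ≠ i → γ l ≠ 0 := fun l hl h => h1 l i hl ⟨h, hi⟩
    have hcard : (Finset.univ.filter fun i => γ i = 0) = {i} := by
      ext l
      simp only [Finset.mem_filter, Finset.mem_univ, true_and, Finset.mem_singleton]
      exact ⟨fun h => by_contra fun hl => hγ l hl h, fun h => h ▸ hi⟩
    rw [local_count_one hc hc' h h' hr i hi ((hγγ' i).1 hi) hγ
      (fun l hl h => hγ l hl ((hγγ' l).2 h)), hcard, Finset.card_singleton, W, if_neg one_ne_zero,
      if_pos rfl]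
    field_simp
  · push Not at hz
    have hcard : (Finset.univ.filter fun i => γ i = 0) = ∅ := by
      ext l; simp [hz l]
    rw [local_count_zero h h' hr hz (fun l h => hz l ((hγγ' l).2 h)), hcard, Finset.card_empty, W,
      if_pos rfl]
    field_simp

end Local
end ManinDP

/-! ### Counting unobstructed pairs of lattice vectors -/

namespace ManinDP
open MvPolynomial

section Count
variable {K : Type} [Field K] {r : ℕ}

/-- A pair of lattice vectors has no local obstruction at the place `cp`: neither of them vanishes
there, and no `gᵢ` can be enlarged by the prime form of `cp`. -/
def NoErr (c c' : Fin r → K) (g : Fin r → BForm K) (cp : ClosedPoint K)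
    (x : (BForm K × BForm K) × (BForm K × BForm K)) : Prop :=
  ¬ (ev cp x.1.1 = 0 ∧ ev cp x.1.2 = 0) ∧ ¬ (ev cp x.2.1 = 0 ∧ ev cp x.2.2 = 0) ∧
    ∀ i, ¬ (Phi cp * g i ∣ lin (c i) x.1 ∧ Phi cp * g i ∣ lin (c' i) x.2)

/-- If the lattice has no nonzero vector of degree `b`, then the vectors of degree `a` are
parametrised by pairs of forms, compatibly with reduction at all places. -/
lemma lat_param {c : Fin r → K} (hc : Function.Injective c) {g : Fin r → BForm K} {k : Fin r → ℕ}
    (hg : ∀ i, (g i).IsHomogeneous (k i)) (hg0 : ∀ i, g i ≠ 0)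
    (hrp : ∀ i j, i ≠ j → IsRelPrime (g i) (g j)) (hk : ∀ i, 2 * k i ≤ ∑ j, k j)
    {a b T : ℕ} (hab : b + a = ∑ i, k i + T) (hb : Lat c g b = ⊥) :
    ∃ (m m' : ℕ) (Θ : V K m × V K m' → BForm K × BForm K)
      (ρ₁ ρ₂ : ∀ cp : ClosedPoint K, Fc cp × Fc cp)
      (lam : ∀ cp : ClosedPoint K, Fin r → Fc cp × Fc cp),
      m + m' + ∑ i, k i = 2 * a ∧ T ≤ m ∧ T ≤ m' ∧ Function.Injective Θ ∧
      Set.range Θ = Lat c g a ∧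
      (∀ cp, LocalData (fun i => algebraMap K (Fc cp) (c i)) (fun i => ev cp (g i))
        (ρ₁ cp) (ρ₂ cp) (lam cp)) ∧
      ∀ cp x, ev cp (Θ x).1 = dot (ρ₁ cp) (ev cp x.1.1, ev cp x.2.1) ∧
        ev cp (Θ x).2 = dot (ρ₂ cp) (ev cp x.1.1, ev cp x.2.1) ∧
        ∀ i, Phi cp * g i ∣ lin (c i) (Θ x) ↔ dot (lam cp i) (ev cp x.1.1, ev cp x.2.1) = 0 := by
  classical
  obtain ⟨μ, ν, s0, s1, u, hμν, hle, hs0, hs1, hs00, hu, hd⟩ := exists_basis hg hg0 hrp hk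
  -- otherwise a multiple of `s0` is a nonzero vector of degree `b`
  have hμb : b < μ := by
    by_contra h
    push Not at h
    have h1 := mul_mem_Lat hs0 (isHomogeneous_X_pow (R := K) (0 : Fin 2) (b - μ))
    rw [Nat.sub_add_cancel h, hb, Submodule.mem_bot, Prod.mk_eq_zero] at h1
    have hX : (X 0 : BForm K) ^ (b - μ) ≠ 0 := pow_ne_zero _ (X_ne_zero _)
    exact hs00 (Prod.ext ((mul_eq_zero.1 h1.1).resolve_left hX)
      ((mul_eq_zero.1 h1.2).resolve_left hX))
  have hd0 : det2 s0 s1 ≠ 0 := by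
    rw [hd]
    exact mul_ne_zero (by simpa using hu) (Finset.prod_ne_zero_iff.2 fun i _ => hg0 i)
  choose σ0 hσ0 using hs0.2.2
  choose σ1 hσ1 using hs1.2.2
  have hνa : ν ≤ a := by omega
  have hμa : μ ≤ a := by omega
  have hran := range_comb hg hg0 hrp hμν hs0 hs1 hu hd hμa hνa
  have hlin : ∀ (x : V K (a - μ) × V K (a - ν)) i, lin (c i) (comb s0 s1 (a - μ) (a - ν) x) =
      g i * (x.1.1 * σ0 i + x.2.1 * σ1 i) := by
    intro x i
    rw [comb_apply]
    have e0 := hσ0 i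
    have e1 := hσ1 i
    rw [lin_apply] at e0 e1 ⊢
    dsimp only
    linear_combination x.1.1 * e0 + x.2.1 * e1
  refine ⟨a - μ, a - ν, comb s0 s1 (a - μ) (a - ν), fun cp => (ev cp s0.1, ev cp s1.1),
    fun cp => (ev cp s0.2, ev cp s1.2), fun cp i => (ev cp (σ0 i), ev cp (σ1 i)), by omega,
    by omega, by omega, comb_injective _ _ hd0, ?_, fun cp => ⟨?_, ?_⟩, fun cp x => ⟨?_, ?_, ?_⟩⟩
  · rw [← hran]; exact (LinearMap.coe_range _).symm
  · intro i x
    have e0 := congrArg (ev cp) (hσ0 i)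
    have e1 := congrArg (ev cp) (hσ1 i)
    simp only [lin_apply, map_sub, map_mul, ← algebraMap_eq, AlgHom.commutes] at e0 e1
    simp only [dot]
    linear_combination x.1 * e0 + x.2 * e1
  · intro i j hij hl
    -- the determinant of the cofactors for `i, j` is, up to a nonzero constant, the product of the
    -- remaining `g l`, because `det2 s0 s1` is a constant multiple of the product of all of them
    have e : σ0 i * σ1 j - σ1 i * σ0 j =
        C (c i - c j) * C u * ∏ l ∈ (Finset.univ.erase i).erase j, g l := by
      have hp : ∏ l, g l = g i * (g j * ∏ l ∈ (Finset.univ.erase i).erase j, g l) := by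
        rw [Finset.mul_prod_erase _ _ (Finset.mem_erase.2 ⟨hij.symm, Finset.mem_univ j⟩),
          Finset.mul_prod_erase _ _ (Finset.mem_univ i)]
      have e0 := hσ0 i
      have e1 := hσ1 i
      have e0' := hσ0 j
      have e1' := hσ1 j
      rw [hp] at hd
      rw [lin_apply] at e0 e1 e0' e1'
      refine mul_left_cancel₀ (mul_ne_zero (hg0 i) (hg0 j)) ?_
      have h1 : (s0.1 - C (c i) * s0.2) * (s1.1 - C (c j) * s1.2) -
          (s1.1 - C (c i) * s1.2) * (s0.1 - C (c j) * s0.2) = C (c i - c j) * det2 s0 s1 := by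
        rw [C_sub, det2]; ring
      rw [e0, e1, e0', e1', hd] at h1
      linear_combination h1
    have h2 : wedge ((fun i => (ev cp (σ0 i), ev cp (σ1 i))) i)
        ((fun i => (ev cp (σ0 i), ev cp (σ1 i))) j) = ev cp (σ0 i * σ1 j - σ1 i * σ0 j) := by
      simp only [wedge, map_sub, map_mul]
    rw [h2, e]
    simp only [map_mul, map_prod, ← algebraMap_eq, AlgHom.commutes]
    refine mul_ne_zero (mul_ne_zero ?_ ?_) (Finset.prod_ne_zero_iff.2 fun l hl' => ?_)
    · rw [Ne, map_eq_zero]; exact sub_ne_zero.2 fun h => hij (hc h)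
    · rw [Ne, map_eq_zero]; exact hu
    · simp only [Finset.mem_erase, Finset.mem_univ, and_true] at hl'
      exact hl l hl'.2 hl'.1
  · simp only [comb_apply, map_add, map_mul, dot]; ring
  · simp only [comb_apply, map_add, map_mul, dot]; ring
  · intro i
    rw [hlin, mul_comm (Phi cp), mul_dvd_mul_iff_left (hg0 i)]
    have hh : (x.1.1 * σ0 i + x.2.1 * σ1 i).IsHomogeneous (a - k i) := by
      refine homog_of_mul (hg i) (hg0 i) ?_
      rw [mul_comm, ← hlin]
      have hm : comb s0 s1 (a - μ) (a - ν) x ∈ Lat c g a := by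
        rw [← hran]; exact LinearMap.mem_range_self _ x
      exact lin_homog _ hm.1 hm.2.1
    rw [← ev_eq_zero_iff cp hh]
    simp only [map_add, map_mul, dot]
    rw [mul_comm (ev cp x.1.1), mul_comm (ev cp x.2.1)]

/-- Reindexing of four-tuples. -/
def four {A : Fin 4 → Type} : (∀ j, A j) ≃ (A 0 × A 1) × (A 2 × A 3) where
  toFun f := ((f 0, f 1), (f 2, f 3))
  invFun x := fun j => match j with
    | 0 => x.1.1 | 1 => x.1.2 | 2 => x.2.1 | 3 => x.2.2
  left_inv f := by funext j; fin_cases j <;> rfl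
  right_inv x := rfl

variable [Finite K]

/-- Independence of values at places, for four forms. -/
lemma indep4 (n0 n1 n2 n3 : ℕ) (P : Finset (ClosedPoint K)) {T : ℕ}
    (hP : ∑ c ∈ P, cpDeg c ≤ T + 1) (h0 : T ≤ n0) (h1 : T ≤ n1) (h2 : T ≤ n2) (h3 : T ≤ n3)
    (F : (c : ClosedPoint K) → (Fc c × Fc c) × (Fc c × Fc c) → ℝ) :
    ∑ x : (V K n0 × V K n1) × (V K n2 × V K n3), ∏ c ∈ P,
      F c ((ev c x.1.1.1, ev c x.1.2.1), (ev c x.2.1.1, ev c x.2.2.1)) =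
      (Nat.card K : ℝ) ^ (n0 + n1 + n2 + n3 + 4) *
        ∏ c ∈ P, ((((Nat.card K : ℝ) ^ cpDeg c) ^ 4)⁻¹ * ∑ y, F c y) := by
  have h := indep (K := K) ![n0, n1, n2, n3] P (by intro j; fin_cases j <;> simp <;> omega)
    (fun c y => F c ((y 0, y 1), (y 2, y 3)))
  have e1 : ∑ x : (V K n0 × V K n1) × (V K n2 × V K n3), ∏ c ∈ P,
      F c ((ev c x.1.1.1, ev c x.1.2.1), (ev c x.2.1.1, ev c x.2.2.1)) =
      ∑ f : (∀ j : Fin 4, V K (![n0, n1, n2, n3] j)), ∏ c ∈ P, F c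
        ((ev c (f 0).1, ev c (f 1).1), (ev c (f 2).1, ev c (f 3).1)) :=
    (Equiv.sum_comp (four (A := fun j => V K (![n0, n1, n2, n3] j)))
      (fun x : (V K n0 × V K n1) × (V K n2 × V K n3) => ∏ c ∈ P,
      F c ((ev c x.1.1.1, ev c x.1.2.1), (ev c x.2.1.1, ev c x.2.2.1)))).symm
  rw [e1, h]
  congr 1
  · rw [Fin.prod_univ_four]; simp only [← pow_add]; congr 1; simp; omega
  · refine Finset.prod_congr rfl fun c _ => ?_
    rw [Fintype.card_fin]
    congr 1
    exact Equiv.sum_comp (four (A := fun _ => Fc c)) (F c)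

/-- For families whose lattices contain no short vectors, the number of pairs of lattice vectors
without obstruction at `P` is exactly the product of the local proportions, by independence. -/
lemma count_good {c c' : Fin r → K} (hc : Function.Injective c) (hc' : Function.Injective c')
    (hr : 2 ≤ r) {g : Fin r → BForm K} {k : Fin r → ℕ}
    (hg : ∀ i, (g i).IsHomogeneous (k i)) (hg0 : ∀ i, g i ≠ 0)
    (hrp : ∀ i j, i ≠ j → IsRelPrime (g i) (g j)) (hk : ∀ i, 2 * k i ≤ ∑ j, k j)
    {a b a' b' T u w : ℕ} (hab : b + a = ∑ i, k i + T) (hb : Lat c g b = ⊥)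
    (hab' : b' + a' = ∑ i, k i + T) (hb' : Lat c' g b' = ⊥)
    (hu : 2 * a = ∑ i, k i + u) (hw : 2 * a' = ∑ i, k i + w)
    (P : Finset (ClosedPoint K)) (hP : ∑ cp ∈ P, cpDeg cp ≤ T + 1) :
    ({x : (BForm K × BForm K) × (BForm K × BForm K) | x.1 ∈ Lat c g a ∧ x.2 ∈ Lat c' g a' ∧
      ∀ cp ∈ P, NoErr c c' g cp x}.ncard : ℝ) =
      (Nat.card K : ℝ) ^ (u + w + 4) * ∏ cp ∈ P, W r (((Nat.card K : ℝ) ^ cpDeg cp)⁻¹)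
        {i | ev cp (g i) = 0}.ncard := by
  classical
  obtain ⟨m, m', Θ, ρ₁, ρ₂, lam, hm, hTm, hTm', hΘ, hrΘ, hL, hev⟩ :=
    lat_param hc hg hg0 hrp hk hab hb
  obtain ⟨n, n', Θ', ρ₁', ρ₂', lam', hn, hTn, hTn', hΘ', hrΘ', hL', hev'⟩ :=
    lat_param hc' hg hg0 hrp hk hab' hb'
  have hset : {x : (BForm K × BForm K) × (BForm K × BForm K) | x.1 ∈ Lat c g a ∧
      x.2 ∈ Lat c' g a' ∧ ∀ cp ∈ P, NoErr c c' g cp x} =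
      (Prod.map Θ Θ') '' {y | ∀ cp ∈ P, LocOK (ρ₁ cp) (ρ₂ cp) (ρ₁' cp) (ρ₂' cp) (lam cp) (lam' cp)
        ((ev cp y.1.1.1, ev cp y.1.2.1), (ev cp y.2.1.1, ev cp y.2.2.1))} := by
    have key : ∀ cp y, NoErr c c' g cp (Prod.map Θ Θ' y) ↔
        LocOK (ρ₁ cp) (ρ₂ cp) (ρ₁' cp) (ρ₂' cp) (lam cp) (lam' cp)
        ((ev cp y.1.1.1, ev cp y.1.2.1), (ev cp y.2.1.1, ev cp y.2.2.1)) := by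
      intro cp y
      obtain ⟨h1, h2, h3⟩ := hev cp y.1
      obtain ⟨h1', h2', h3'⟩ := hev' cp y.2
      simp only [NoErr, LocOK, Prod.map_fst, Prod.map_snd, h1, h2, h3, h1', h2', h3']
    ext ⟨s, t⟩
    simp only [Set.mem_ofPred_eq, Set.mem_image]
    constructor
    · rintro ⟨hs, ht, h⟩
      obtain ⟨y, rfl⟩ : s ∈ Set.range Θ := by rw [hrΘ]; exact hs
      obtain ⟨z, rfl⟩ : t ∈ Set.range Θ' := by rw [hrΘ']; exact ht
      exact ⟨(y, z), fun cp hcp => (key cp (y, z)).1 (h cp hcp), rfl⟩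
    · rintro ⟨⟨y, z⟩, h, he⟩
      rw [Prod.map_apply, Prod.mk.injEq] at he
      obtain ⟨rfl, rfl⟩ := he
      refine ⟨?_, ?_, fun cp hcp => (key cp (y, z)).2 (h cp hcp)⟩
      · have : Θ y ∈ Set.range Θ := ⟨y, rfl⟩
        rw [hrΘ] at this; exact this
      · have : Θ' z ∈ Set.range Θ' := ⟨z, rfl⟩
        rw [hrΘ'] at this; exact this
  rw [hset, Set.ncard_image_of_injective _ (hΘ.prodMap hΘ'), Set.ncard_eq_toFinset_card',
    Set.toFinset_ofPred, Finset.card_filter, Nat.cast_sum]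
  have h1 := indep4 (K := K) m m' n n' P hP hTm hTm' hTn hTn' (fun cp y =>
    if LocOK (ρ₁ cp) (ρ₂ cp) (ρ₁' cp) (ρ₂' cp) (lam cp) (lam' cp) y then 1 else 0)
  rw [show m + m' + n + n' + 4 = u + w + 4 by omega] at h1
  refine Eq.trans (Finset.sum_congr rfl fun x _ => ?_) (h1.trans ?_)
  · rw [Finset.prod_ite_zero]; simp
  · congr 1
    refine Finset.prod_congr rfl fun cp _ => ?_
    have hQ : (Fintype.card (Fc cp) : ℝ) = (Nat.card K : ℝ) ^ cpDeg cp := by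
      rw [← Nat.card_eq_fintype_card, card_Fc, Nat.cast_pow]
    have h2 := local_count (fun i j h => hc ((algebraMap K (Fc cp)).injective h))
      (fun i j h => hc' ((algebraMap K (Fc cp)).injective h)) (hL cp) (hL' cp) hr (fun i => Iff.rfl)
      (fun i j hij => not_ev_of_isRelPrime (hg i) (hg j) (hrp i j hij) cp)
    rw [hQ] at h2
    rw [Set.ncard_eq_toFinset_card', Set.toFinset_ofPred, ← h2]

end Count
end ManinDP

/-! ### Crude upper bounds for exceptional configurations -/

namespace ManinDP
open MvPolynomial

section Fibre
variable {α β : Type}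

/-- Counting by fibres. -/
lemma fl_fib (A : Set α) (f : α → β) (B : Set β) {m n : ℕ} (hB : B.encard ≤ (m : ℕ∞))
    (h1 : ∀ x ∈ A, f x ∈ B) (h2 : ∀ b ∈ B, {x | x ∈ A ∧ f x = b}.encard ≤ (n : ℕ∞)) :
    A.encard ≤ ((m * n : ℕ) : ℕ∞) := by
  classical
  rw [Set.encard_le_coe_iff_finite_ncard_le] at hB ⊢
  have hfin : A.Finite := by
    refine Set.Finite.of_finite_fibers f (hB.1.subset ?_) ?_
    · rintro _ ⟨x, hx, rfl⟩; exact h1 x hx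
    · rintro _ ⟨x, hx, rfl⟩
      exact ((Set.encard_le_coe_iff_finite_ncard_le.1 (h2 (f x) (h1 x hx))).1).subset
        fun y hy => hy
  refine ⟨hfin, ?_⟩
  have h3 := Finset.card_le_mul_card_image_of_maps_to (f := f) (s := hfin.toFinset)
    (t := hB.1.toFinset) (fun x hx => by
      rw [Set.Finite.mem_toFinset] at hx ⊢; exact h1 x hx) n (fun b hb => by
      rw [Set.Finite.mem_toFinset] at hb
      have h4 := (Set.encard_le_coe_iff_finite_ncard_le.1 (h2 b hb)).2
      rw [← Set.ncard_coe_finset]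
      refine le_trans (le_of_eq ?_) h4
      congr 1
      ext x; simp)
  rw [← Set.ncard_eq_toFinset_card A hfin, ← Set.ncard_eq_toFinset_card B hB.1] at h3
  calc A.ncard ≤ n * B.ncard := h3
    _ ≤ n * m := Nat.mul_le_mul_left _ hB.2
    _ = m * n := mul_comm _ _

lemma fl_prod {A : Set α} {B : Set β} {m n : ℕ} (hA : A.encard ≤ (m : ℕ∞))
    (hB : B.encard ≤ (n : ℕ∞)) : {x : α × β | x.1 ∈ A ∧ x.2 ∈ B}.encard ≤ ((m * n : ℕ) : ℕ∞) := by
  refine fl_fib _ Prod.fst A hA (fun x hx => hx.1) fun a _ => ?_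
  refine le_trans (le_trans (Set.encard_le_encard ?_)
    (Set.encard_image_le (fun b : β => (a, b)) B)) hB
  rintro ⟨x, y⟩ ⟨hx, rfl⟩
  exact ⟨y, hx.2, rfl⟩

lemma fl_pi {r : ℕ} (D : Fin r → Set α) (m : Fin r → ℕ) (h : ∀ i, (D i).encard ≤ (m i : ℕ∞)) :
    {g : Fin r → α | ∀ i, g i ∈ D i}.encard ≤ ((∏ i, m i : ℕ) : ℕ∞) := by
  classical
  have h' := fun i => Set.encard_le_coe_iff_finite_ncard_le.1 (h i)
  have e : {g : Fin r → α | ∀ i, g i ∈ D i} =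
      (Fintype.piFinset fun i => (h' i).1.toFinset : Finset (Fin r → α)) := by
    ext g; simp
  rw [e, Set.encard_coe_eq_coe_finsetCard, Fintype.card_piFinset]
  refine Nat.cast_le.2 (Finset.prod_le_prod' fun i _ => ?_)
  rw [← Set.ncard_eq_toFinset_card _ (h' i).1]
  exact (h' i).2

lemma fl_union {A B : Set α} {m n : ℕ} (hA : A.encard ≤ (m : ℕ∞)) (hB : B.encard ≤ (n : ℕ∞)) :
    (A ∪ B).encard ≤ ((m + n : ℕ) : ℕ∞) := by
  rw [Nat.cast_add]
  exact le_trans (Set.encard_union_le A B) (add_le_add hA hB)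

end Fibre

section Crude
variable {K : Type} [Field K] [Finite K] {r : ℕ}

/-- A family of forms of the prescribed degrees `k`. -/
def HomG (k : Fin r → ℕ) (g : Fin r → BForm K) : Prop := ∀ i, (g i).IsHomogeneous (k i)

/-- Nonvanishing and pairwise coprimality of a family of forms. -/
def CoPr (g : Fin r → BForm K) : Prop :=
  (∀ i, g i ≠ 0) ∧ ∀ i j, i ≠ j → IsRelPrime (g i) (g j)

lemma fl_V (n : ℕ) : {f : BForm K | f.IsHomogeneous n}.encard ≤ ((Nat.card K ^ (n + 1) : ℕ) : ℕ∞) := by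
  rw [Set.encard_le_coe_iff_finite_ncard_le]
  refine ⟨(V_fin (K := K) n : Finite (V K n)), ?_⟩
  rw [← card_V]
  exact le_of_eq rfl

lemma fl_VV (n m : ℕ) : {s : BForm K × BForm K | s.1.IsHomogeneous n ∧ s.2.IsHomogeneous m}.encard ≤
    ((Nat.card K ^ (n + m + 2) : ℕ) : ℕ∞) := by
  have h := fl_prod (fl_V (K := K) n) (fl_V (K := K) m)
  rw [← pow_add, show n + 1 + (m + 1) = n + m + 2 by ring] at h
  exact h

lemma fl_div {f : BForm K} {n : ℕ} (hf : f.IsHomogeneous n) (hf0 : f ≠ 0) :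
    {g : BForm K | g ∣ f}.encard ≤ ((Nat.card K * 2 ^ n : ℕ) : ℕ∞) :=
  Set.encard_le_coe_iff_finite_ncard_le.2 (card_divisors f hf0 n hf)

lemma fl_divs {f : Fin r → BForm K} {n : ℕ} (hf : ∀ i, (f i).IsHomogeneous n) (hf0 : ∀ i, f i ≠ 0) :
    {g : Fin r → BForm K | ∀ i, g i ∣ f i}.encard ≤ (((Nat.card K * 2 ^ n) ^ r : ℕ) : ℕ∞) := by
  have h := fl_pi (fun i => {g : BForm K | g ∣ f i}) _ fun i => fl_div (hf i) (hf0 i)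
  rw [Finset.prod_const, Finset.card_univ, Fintype.card_fin] at h
  exact h

lemma fl_Lat (c : Fin r → K) (g : Fin r → BForm K) (n : ℕ) :
    (Lat c g n : Set (BForm K × BForm K)).encard ≤
      ((Nat.card K ^ Module.finrank K (Lat c g n) : ℕ) : ℕ∞) := by
  rw [Set.encard_le_coe_iff_finite_ncard_le]
  refine ⟨(Lat_fin c g n : Finite (Lat c g n)), ?_⟩
  rw [← card_Lat]
  exact le_of_eq rfl

lemma card_pos_K : 0 < Nat.card K := Nat.card_pos

/-- Primitive lattice vectors are few: the bound does not need the lattice to be balanced. -/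
lemma fl_LatPrim {c : Fin r → K} {g : Fin r → BForm K} {k : Fin r → ℕ} (hg : HomG k g)
    (hrp : ∀ i j, i ≠ j → IsRelPrime (g i) (g j)) {n m : ℕ} (hm : 1 ≤ m)
    (hn : 2 * n + 2 ≤ ∑ i, k i + m) :
    {s : BForm K × BForm K | s ∈ Lat c g n ∧ s ≠ 0 ∧ IsRelPrime s.1 s.2}.encard ≤
      ((Nat.card K ^ m : ℕ) : ℕ∞) := by
  by_cases h : ∃ s, s ∈ Lat c g n ∧ s ≠ 0 ∧ IsRelPrime s.1 s.2
  · obtain ⟨s, hs, hs0, hsp⟩ := h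
    have h1 := finrank_Lat_le hg hrp hs hs0 hsp
    refine le_trans (Set.encard_le_encard fun x hx => hx.1) (le_trans (fl_Lat c g n) ?_)
    refine Nat.cast_le.2 (Nat.pow_le_pow_right card_pos_K (h1.trans (max_le ?_ hm)))
    omega
  · push Not at h
    have : {s : BForm K × BForm K | s ∈ Lat c g n ∧ s ≠ 0 ∧ IsRelPrime s.1 s.2} = ∅ :=
      Set.eq_empty_of_forall_notMem fun s hs => h s hs.1 hs.2.1 hs.2.2
    rw [this]; simp

/-- Pairs of forms with a common zero of large degree. -/
lemma fl_common (T n1 n2 : ℕ) :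
    {s : BForm K × BForm K | s.1.IsHomogeneous n1 ∧ s.2.IsHomogeneous n2 ∧
      ∃ cp : ClosedPoint K, T < cpDeg cp ∧ cpDeg cp ≤ n1 ∧ cpDeg cp ≤ n2 ∧
        ev cp s.1 = 0 ∧ ev cp s.2 = 0}.encard ≤
      ((n1 * Nat.card K ^ (n1 + n2 + 2 - T) : ℕ) : ℕ∞) := by
  have h : {x : ℕ × (BForm K × BForm K) | x.1 ∈ Finset.Icc 1 n1 ∧ T < x.1 ∧ x.1 ≤ n1 ∧ x.1 ≤ n2 ∧
      ∃ p h h' : BForm K, p.IsHomogeneous x.1 ∧ h.IsHomogeneous (n1 - x.1) ∧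
        h'.IsHomogeneous (n2 - x.1) ∧ x.2 = (p * h, p * h')}.encard ≤
      ((n1 * Nat.card K ^ (n1 + n2 + 2 - T) : ℕ) : ℕ∞) := by
    refine fl_fib _ Prod.fst (Finset.Icc 1 n1 : Finset ℕ) ?_ (fun x hx => hx.1) fun n _ => ?_
    · rw [Set.encard_coe_eq_coe_finsetCard]; simp
    · by_cases hn : T < n ∧ n ≤ n1 ∧ n ≤ n2
      · refine le_trans (le_trans (Set.encard_le_encard ?_) (Set.encard_image_le
          (fun y : BForm K × (BForm K × BForm K) => (n, (y.1 * y.2.1, y.1 * y.2.2))) _))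
          (le_trans (fl_prod (fl_V (K := K) n) (fl_VV (K := K) (n1 - n) (n2 - n))) ?_)
        · rintro ⟨n', s⟩ ⟨⟨-, -, -, -, p, h, h', hp, hh, hh', rfl⟩, rfl⟩
          exact ⟨(p, h, h'), ⟨hp, hh, hh'⟩, rfl⟩
        · rw [← pow_add]
          exact Nat.cast_le.2 (Nat.pow_le_pow_right card_pos_K (by omega))
      · rw [Set.eq_empty_of_forall_notMem (s := {x | _ ∧ _})]
        · simp
        · rintro ⟨n', s⟩ ⟨hx, rfl⟩
          exact hn ⟨hx.2.1, hx.2.2.1, hx.2.2.2.1⟩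
  refine le_trans (le_trans (Set.encard_le_encard ?_) (Set.encard_image_le Prod.snd _)) h
  rintro ⟨s1, s2⟩ ⟨h1, h2, cp, hT, hn1, hn2, e1, e2⟩
  obtain ⟨h, hh, e⟩ := exists_cofactor h1 (Phi_homog cp) ((ev_eq_zero_iff cp h1).1 e1)
  obtain ⟨h', hh', f⟩ := exists_cofactor h2 (Phi_homog cp) ((ev_eq_zero_iff cp h2).1 e2)
  refine ⟨(cpDeg cp, (s1, s2)), ⟨Finset.mem_Icc.2 ⟨cpDeg_pos cp, hn1⟩, hT, hn1, hn2, Phi cp, h, h',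
    Phi_homog cp, hh, hh', ?_⟩, rfl⟩
  exact Prod.ext e f

/-- Families of forms admitting a nonzero lattice vector of small degree. -/
lemma crude_bad {c : Fin r → K} (hc : Function.Injective c) (k : Fin r → ℕ) (b : ℕ)
    (hb : ∀ i, b + k i < ∑ j, k j) :
    {g : Fin r → BForm K | HomG k g ∧ CoPr g ∧ Lat c g b ≠ ⊥}.encard ≤
      ((Nat.card K ^ (2 * b + 2) * (Nat.card K * 2 ^ b) ^ r : ℕ) : ℕ∞) := by
  have h : {x : (BForm K × BForm K) × (Fin r → BForm K) |
      (x.1.1.IsHomogeneous b ∧ x.1.2.IsHomogeneous b ∧ ∀ i, lin (c i) x.1 ≠ 0) ∧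
      ∀ i, x.2 i ∣ lin (c i) x.1}.encard ≤
      ((Nat.card K ^ (2 * b + 2) * (Nat.card K * 2 ^ b) ^ r : ℕ) : ℕ∞) := by
    refine fl_fib _ Prod.fst {s : BForm K × BForm K | s.1.IsHomogeneous b ∧ s.2.IsHomogeneous b ∧
      ∀ i, lin (c i) s ≠ 0} ?_ (fun x hx => hx.1) fun s hs => ?_
    · have h := fl_VV (K := K) b b
      rw [← two_mul] at h
      refine le_trans (Set.encard_le_encard ?_) h
      exact fun s hs => ⟨hs.1, hs.2.1⟩
    · refine le_trans (le_trans (Set.encard_le_encard ?_) (Set.encard_image_le (fun g => (s, g)) _))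
        (fl_divs (fun i => lin_homog (c i) hs.1 hs.2.1) hs.2.2)
      rintro ⟨s', g⟩ ⟨hx, rfl⟩
      exact ⟨g, hx.2, rfl⟩
  refine le_trans (le_trans (Set.encard_le_encard ?_) (Set.encard_image_le Prod.snd _)) h
  rintro g ⟨hg, hcp, hL⟩
  obtain ⟨s, hs, hs0⟩ := (Submodule.ne_bot_iff _).1 hL
  exact ⟨(s, g), ⟨⟨hs.1, hs.2.1, fun i => lin_ne_zero hc hg hcp.2 hs hs0 i (hb i)⟩, hs.2.2⟩, rfl⟩

/-- Configurations consisting of a family of forms and two pairs of forms. -/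
abbrev Cfg (K : Type) [Field K] (r : ℕ) : Type :=
  (Fin r → BForm K) × ((BForm K × BForm K) × (BForm K × BForm K))

/-- Configurations with primitive pairs, over a given set of families. -/
lemma crude_B {c c' : Fin r → K} {k : Fin r → ℕ} {a a' u w m : ℕ} (hu : 2 * a = ∑ i, k i + u)
    (hw : 2 * a' = ∑ i, k i + w) {B : Set (Fin r → BForm K)} (hB : B.encard ≤ (m : ℕ∞))
    (hB1 : ∀ g ∈ B, HomG k g ∧ CoPr g) :
    {x : Cfg K r | x.1 ∈ B ∧ (x.2.1 ∈ Lat c x.1 a ∧ x.2.1 ≠ 0 ∧ IsRelPrime x.2.1.1 x.2.1.2) ∧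
      (x.2.2 ∈ Lat c' x.1 a' ∧ x.2.2 ≠ 0 ∧ IsRelPrime x.2.2.1 x.2.2.2)}.encard ≤
      ((m * (Nat.card K ^ (u + w + 4)) : ℕ) : ℕ∞) := by
  refine fl_fib _ Prod.fst B hB (fun x hx => hx.1) fun g hg => ?_
  have h1 := fl_LatPrim (c := c) (hB1 g hg).1 (hB1 g hg).2.2 (n := a) (m := u + 2) (by omega)
    (by omega)
  have h2 := fl_LatPrim (c := c') (hB1 g hg).1 (hB1 g hg).2.2 (n := a') (m := w + 2) (by omega)
    (by omega)
  have h3 := fl_prod h1 h2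
  rw [← pow_add, show u + 2 + (w + 2) = u + w + 4 by ring] at h3
  refine le_trans (le_trans (Set.encard_le_encard ?_) (Set.encard_image_le (fun y => (g, y)) _)) h3
  rintro ⟨g', y⟩ ⟨hx, rfl⟩
  exact ⟨y, ⟨hx.2.1, hx.2.2⟩, rfl⟩

/-- Configurations whose first pair has a common zero of large degree. -/
lemma crude_i {c : Fin r → K} (hc : Function.Injective c) (k : Fin r → ℕ) (a T m : ℕ)
    (L : (Fin r → BForm K) → Set (BForm K × BForm K)) (hk : ∀ i, a + k i < ∑ j, k j) :
    {x : Cfg K r | HomG k x.1 ∧ CoPr x.1 ∧ (L x.1).encard ≤ (m : ℕ∞) ∧ x.2.1 ∈ Lat c x.1 a ∧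
      x.2.1 ≠ 0 ∧ (∃ cp : ClosedPoint K, T < cpDeg cp ∧ ev cp x.2.1.1 = 0 ∧ ev cp x.2.1.2 = 0) ∧
      x.2.2 ∈ L x.1}.encard ≤
      ((a * Nat.card K ^ (a + a + 2 - T) * ((Nat.card K * 2 ^ a) ^ r * m) : ℕ) : ℕ∞) := by
  refine fl_fib _ (fun x => x.2.1) {s : BForm K × BForm K | (s.1.IsHomogeneous a ∧
      s.2.IsHomogeneous a ∧ ∃ cp : ClosedPoint K, T < cpDeg cp ∧ cpDeg cp ≤ a ∧ cpDeg cp ≤ a ∧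
        ev cp s.1 = 0 ∧ ev cp s.2 = 0) ∧ ∀ i, lin (c i) s ≠ 0}
    (le_trans (Set.encard_le_encard fun s hs => hs.1) (fl_common T a a)) ?_ fun s hs => ?_
  · rintro ⟨g, s, t⟩ ⟨hg, hcp, -, hs, hs0, ⟨cp, hT, e1, e2⟩, -⟩
    dsimp only at hg hcp hs hs0 hT e1 e2 ⊢
    have hle : cpDeg cp ≤ a := by
      by_contra h
      push Not at h
      exact hs0 (Prod.ext
        (eq_zero_of_dvd_of_lt hs.1 (Phi_homog cp) ((ev_eq_zero_iff cp hs.1).1 e1) h)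
        (eq_zero_of_dvd_of_lt hs.2.1 (Phi_homog cp) ((ev_eq_zero_iff cp hs.2.1).1 e2) h))
    exact ⟨⟨hs.1, hs.2.1, cp, hT, hle, hle, e1, e2⟩,
      fun i => lin_ne_zero hc hg hcp.2 hs hs0 i (hk i)⟩
  · refine fl_fib _ Prod.fst {g : Fin r → BForm K | (∀ i, g i ∣ lin (c i) s) ∧
      (L g).encard ≤ (m : ℕ∞)} (le_trans (Set.encard_le_encard fun g hg => hg.1)
        (fl_divs (fun i => lin_homog (c i) hs.1.1 hs.1.2.1) hs.2)) ?_ fun g hg => ?_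
    · rintro ⟨g, s', t⟩ ⟨⟨-, -, h1, h2, -⟩, rfl⟩
      exact ⟨h2.2.2, h1⟩
    · refine le_trans (le_trans (Set.encard_le_encard ?_)
        (Set.encard_image_le (fun t => (g, (s, t))) _)) hg.2
      rintro ⟨g', s', t⟩ ⟨⟨⟨-, -, h1, h2, -, -, h3⟩, rfl⟩, rfl⟩
      exact ⟨t, h3, rfl⟩

lemma isRelPrime_of_lin {c d : K} (hcd : c ≠ d) {s : BForm K × BForm K} (h : IsRelPrime s.1 s.2) :
    IsRelPrime (lin c s) (lin d s) := by
  intro x h1 h2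
  rw [lin_apply] at h1 h2
  have h3 : x ∣ C (c - d) * s.2 := by
    have := dvd_sub h2 h1
    rwa [show s.1 - C d * s.2 - (s.1 - C c * s.2) = C (c - d) * s.2 by rw [C_sub]; ring] at this
  have h4 : IsUnit (C (c - d) : BForm K) := (IsUnit.mk0 _ (sub_ne_zero.2 hcd)).map C
  have h5 : x ∣ s.2 := (h4.dvd_mul_left).1 h3
  exact h ((dvd_sub_left (h5.mul_left _)).1 h1) h5

/-- Configurations of primitive pairs whose incidence with one of the points has an excess factor
of large degree. -/
lemma crude_iii {c c' : Fin r → K} (hc : Function.Injective c) (k : Fin r → ℕ)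
    (a a' T m w : ℕ) (hw : 2 * a' = ∑ i, k i + w) (hm : 1 ≤ m) (hT : w + 1 ≤ T + m) :
    {x : Cfg K r | HomG k x.1 ∧ (x.2.1 ∈ Lat c x.1 a ∧ (∀ i, lin (c i) x.2.1 ≠ 0) ∧
      IsRelPrime x.2.1.1 x.2.1.2) ∧
      (x.2.2 ∈ Lat c' x.1 a' ∧ x.2.2 ≠ 0 ∧ IsRelPrime x.2.2.1 x.2.2.2) ∧
      ∃ (i : Fin r) (cp : ClosedPoint K), T < cpDeg cp ∧ Phi cp * x.1 i ∣ lin (c i) x.2.1 ∧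
        Phi cp * x.1 i ∣ lin (c' i) x.2.2}.encard ≤
      ((Nat.card K ^ (a + a + 2) * ((Nat.card K * 2 ^ a) ^ r * ((Nat.card K * 2 ^ a) ^ r *
        Nat.card K ^ m)) : ℕ) : ℕ∞) := by
  have h : {x : (BForm K × BForm K) × ((Fin r → BForm K) × ((Fin r → BForm K) ×
      (BForm K × BForm K))) | ((x.1.1.IsHomogeneous a ∧ x.1.2.IsHomogeneous a) ∧
        (∀ i, lin (c i) x.1 ≠ 0)) ∧ (∀ i, x.2.1 i ∣ lin (c i) x.1) ∧
        ((∀ i, x.2.2.1 i ∣ lin (c i) x.1) ∧ ∃ k', (HomG k' x.2.2.1 ∧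
          (∀ i j, i ≠ j → IsRelPrime (x.2.2.1 i) (x.2.2.1 j)) ∧ 2 * a' + 2 ≤ ∑ i, k' i + m)) ∧
        (x.2.2.2 ∈ Lat c' x.2.2.1 a' ∧ x.2.2.2 ≠ 0 ∧ IsRelPrime x.2.2.2.1 x.2.2.2.2)}.encard ≤
      ((Nat.card K ^ (a + a + 2) * ((Nat.card K * 2 ^ a) ^ r * ((Nat.card K * 2 ^ a) ^ r *
        Nat.card K ^ m)) : ℕ) : ℕ∞) := by
    -- choose in turn `s`, the family `g`, the enlarged family, and finally `t` in the lattice of the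
    -- enlarged family, whose rank bound gains from the degree of the excess place
    refine fl_fib _ Prod.fst {s : BForm K × BForm K | (s.1.IsHomogeneous a ∧ s.2.IsHomogeneous a) ∧
      ∀ i, lin (c i) s ≠ 0} (le_trans (Set.encard_le_encard fun s hs => hs.1) (fl_VV a a))
      (fun x hx => hx.1) fun s hs => ?_
    have hdv := fl_divs (fun i => lin_homog (c i) hs.1.1 hs.1.2) hs.2
    refine fl_fib _ (fun x => x.2.1) {g : Fin r → BForm K | ∀ i, g i ∣ lin (c i) s} hdv ?_
      fun g hg => ?_
    · rintro ⟨s', x⟩ ⟨hx, rfl⟩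
      exact hx.2.1
    refine fl_fib _ (fun x => x.2.2.1) {g : Fin r → BForm K | (∀ i, g i ∣ lin (c i) s) ∧
      ∃ k', (HomG k' g ∧ (∀ i j, i ≠ j → IsRelPrime (g i) (g j)) ∧ 2 * a' + 2 ≤ ∑ i, k' i + m)}
      (le_trans (Set.encard_le_encard fun g hg => hg.1) hdv) ?_ fun g' hg' => ?_
    · rintro ⟨s', g₁, x⟩ ⟨⟨hx, rfl⟩, rfl⟩
      exact hx.2.2.1
    obtain ⟨-, k', hk', hrp', hm'⟩ := hg'
    refine le_trans (le_trans (Set.encard_le_encard ?_)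
      (Set.encard_image_le (fun t => (s, (g, (g', t)))) _))
      (fl_LatPrim (c := c') hk' hrp' hm hm')
    rintro ⟨s', g₁, g₂, t⟩ ⟨⟨⟨hx, rfl⟩, rfl⟩, rfl⟩
    exact ⟨t, hx.2.2.2, rfl⟩
  refine le_trans (le_trans (Set.encard_le_encard ?_)
    (Set.encard_image_le (fun x => (x.2.1, (x.1, x.2.2.2))) _)) h
  rintro ⟨g, s, t⟩ ⟨hg, ⟨hs, hl, hsp⟩, ⟨ht, ht0, htp⟩, i, cp, hcp, h1, h2⟩
  classical
  dsimp only at hg hs hl hsp ht ht0 htp h1 h2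
  -- enlarging `g i` by the prime form of the place preserves the divisibility conditions
  let g' : Fin r → BForm K := fun j => (if j = i then Phi cp else 1) * g j
  have hd : ∀ j, g' j ∣ lin (c j) s := fun j => by
    by_cases hj : j = i
    · subst hj; simpa [g'] using h1
    · simpa [g', hj] using hs.2.2 j
  have hd' : ∀ j, g' j ∣ lin (c' j) t := fun j => by
    by_cases hj : j = i
    · subst hj; simpa [g'] using h2
    · simpa [g', hj] using ht.2.2 j
  refine ⟨(s, (g, (g', t))), ⟨⟨⟨hs.1, hs.2.1⟩, hl⟩, hs.2.2, ⟨hd,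
    fun j => (if j = i then cpDeg cp else 0) + k j, fun j => ?_, fun j l hjl => ?_, ?_⟩,
    ⟨ht.1, ht.2.1, hd'⟩, ht0, htp⟩, rfl⟩
  · by_cases hj : j = i
    · simpa [g', hj] using (Phi_homog cp).mul (hg i)
    · simpa [g', hj] using hg j
  · intro x hx1 hx2
    exact isRelPrime_of_lin (fun e => hjl (hc e)) hsp (hx1.trans (hd j)) (hx2.trans (hd l))
  · rw [Finset.sum_add_distrib, Finset.sum_ite_eq' Finset.univ i fun _ => cpDeg cp,
      if_pos (Finset.mem_univ i)]
    omega

/-- Families of forms with a vanishing member. -/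
lemma crude_zero (k : Fin r → ℕ) (i : Fin r) :
    {g : Fin r → BForm K | HomG k g ∧ g i = 0}.encard ≤
      ((∏ j, (if j = i then 1 else Nat.card K ^ (k j + 1)) : ℕ) : ℕ∞) := by
  refine le_trans (Set.encard_le_encard ?_)
    (fl_pi (fun j => if j = i then {0} else {f : BForm K | f.IsHomogeneous (k j)}) _ fun j => ?_)
  · rintro g ⟨hg, h0⟩ j
    by_cases hj : j = i
    · subst hj; simp [h0]
    · simpa [hj] using hg j
  · by_cases hj : j = i
    · simp [hj]
    · simpa [hj] using fl_V (K := K) (k j)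

/-- Families of forms, two of which have a common zero of large degree. -/
lemma crude_pair (k : Fin r → ℕ) (T : ℕ) {i j : Fin r} (hij : i ≠ j) :
    {g : Fin r → BForm K | HomG k g ∧ g i ≠ 0 ∧ g j ≠ 0 ∧ ∃ cp : ClosedPoint K, T < cpDeg cp ∧
      ev cp (g i) = 0 ∧ ev cp (g j) = 0}.encard ≤
      ((k i * Nat.card K ^ (k i + k j + 2 - T) *
        ∏ l, (if l = i then 1 else if l = j then 1 else Nat.card K ^ (k l + 1)) : ℕ) : ℕ∞) := by
  refine fl_fib _ (fun g => (g i, g j)) _ (fl_common T (k i) (k j)) ?_ fun s hs => ?_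
  · rintro g ⟨hg, hi, hj, cp, hT, e1, e2⟩
    have h1 : ∀ {f : BForm K} {n}, f.IsHomogeneous n → f ≠ 0 → ev cp f = 0 → cpDeg cp ≤ n :=
      fun {f n} hf hf0 h => by
        by_contra hlt
        push Not at hlt
        exact hf0 (eq_zero_of_dvd_of_lt hf (Phi_homog cp) ((ev_eq_zero_iff cp hf).1 h) hlt)
    exact ⟨hg i, hg j, cp, hT, h1 (hg i) hi e1, h1 (hg j) hj e2, e1, e2⟩
  · refine le_trans (Set.encard_le_encard ?_)
      (fl_pi (fun l => if l = i then {s.1} else if l = j then {s.2} else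
        {f : BForm K | f.IsHomogeneous (k l)}) _ fun l => ?_)
    · rintro g ⟨⟨hg, -⟩, rfl⟩ l
      by_cases hl : l = i
      · subst hl; simp
      · by_cases hl' : l = j
        · subst hl'; simp [hl]
        · simpa [hl, hl'] using hg l
    · by_cases hl : l = i
      · simp [hl]
      · by_cases hl' : l = j
        · subst hl'; simp [hl]
        · simpa [hl, hl'] using fl_V (K := K) (k l)

end Crude
end ManinDP

/-! ### Averages of the local weights over families of forms -/

namespace ManinDP
open MvPolynomial

section Average

lemma W_nonneg {r : ℕ} (hr : r ≤ 7) {p : ℝ} (h0 : 0 ≤ p) (h1 : p ≤ 1 / 16) (z : ℕ) : 0 ≤ W r p z := by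
  have hr' : (r : ℝ) ≤ 7 := by exact_mod_cast hr
  unfold W
  split_ifs
  · have : (1 - p ^ 2) ^ 2 - r * p ^ 2 * (1 - p) ^ 2 = (1 - p) ^ 2 * ((1 + p) ^ 2 - r * p ^ 2) := by
      ring
    rw [this]
    refine mul_nonneg (sq_nonneg _) ?_
    have h2 : (r : ℝ) * p ^ 2 ≤ 7 * p ^ 2 := mul_le_mul_of_nonneg_right hr' (sq_nonneg _)
    nlinarith
  · exact mul_nonneg (sq_nonneg _) (by nlinarith)
  · exact le_rfl

lemma W_le_one {r : ℕ} {p : ℝ} (h0 : 0 ≤ p) (h1 : p ≤ 1 / 16) (z : ℕ) : W r p z ≤ 1 := by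
  unfold W
  split_ifs
  · have h2 : 0 ≤ (r : ℝ) * p ^ 2 * (1 - p) ^ 2 := by positivity
    have h3 : (1 - p ^ 2) ^ 2 ≤ 1 := pow_le_one₀ (by nlinarith) (by nlinarith)
    linarith
  · exact mul_le_one₀ (pow_le_one₀ (by linarith) (by linarith)) (by nlinarith) (by nlinarith)
  · exact zero_le_one

lemma W_two (r : ℕ) (p : ℝ) {z : ℕ} (hz : 2 ≤ z) : W r p z = 0 := by
  unfold W; rw [if_neg (by omega), if_neg (by omega)]

lemma tauFactor_eq (q r n : ℕ) : tauFactor q r n =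
    (1 - ((q : ℝ) ^ n)⁻¹) ^ (r + 2) * (1 + (r + 2) * ((q : ℝ) ^ n)⁻¹ + (((q : ℝ) ^ n)⁻¹) ^ 2) := by
  unfold tauFactor
  rw [mul_comm 2 n, pow_mul, inv_pow]

/-- The local Euler factor differs from `1` by `O(p ^ 2)`: the linear terms cancel. -/
lemma one_sub_tau {r : ℕ} {p : ℝ} (h0 : 0 ≤ p) (hp : (r + 2) * p ≤ 1) :
    1 - (r + 2) ^ 2 * p ^ 2 ≤ (1 - p) ^ (r + 2) * (1 + (r + 2) * p + p ^ 2) := by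
  have hr0 : (0 : ℝ) ≤ r := Nat.cast_nonneg r
  have hb := one_add_mul_le_pow (a := -p) (by nlinarith) (r + 2)
  push_cast at hb
  rw [← sub_eq_add_neg] at hb
  have h1 : 0 ≤ 1 + (r + 2) * p + p ^ 2 := by positivity
  have h2 := mul_le_mul_of_nonneg_right hb h1
  nlinarith [mul_nonneg (sub_nonneg.2 hp) (sq_nonneg p)]

/-- Averaging the local weight over the values of the `gᵢ` produces the local Euler factor. -/
lemma sum_W {F : Type} [Field F] [Fintype F] {r : ℕ} (hr : 1 ≤ r) :
    ((Fintype.card F : ℝ) ^ r)⁻¹ * ∑ y : Fin r → F,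
      W r (Fintype.card F : ℝ)⁻¹ {i | y i = 0}.ncard =
    (1 - (Fintype.card F : ℝ)⁻¹) ^ (r + 2) *
      (1 + (r + 2) * (Fintype.card F : ℝ)⁻¹ + ((Fintype.card F : ℝ)⁻¹) ^ 2) := by
  classical
  set Q := (Fintype.card F : ℝ) with hQ
  have hQ0 : Q ≠ 0 := by rw [hQ]; exact_mod_cast Fintype.card_ne_zero
  -- only the vectors with no zero coordinate, or with exactly one, contribute
  have key : ∀ y : Fin r → F, W r Q⁻¹ {i | y i = 0}.ncard =
      W r Q⁻¹ 0 * ∏ i, (if y i = 0 then (0 : ℝ) else 1) +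
      W r Q⁻¹ 1 * ∑ i, ∏ l, (if l = i then (if y l = 0 then (1 : ℝ) else 0)
        else (if y l = 0 then 0 else 1)) := by
    intro y
    by_cases h0 : ∃ i, y i = 0
    · obtain ⟨i, hi⟩ := h0
      rw [Finset.prod_eq_zero (Finset.mem_univ i) (by simp [hi]), mul_zero, zero_add]
      by_cases h1 : ∃ j, j ≠ i ∧ y j = 0
      · obtain ⟨j, hji, hj⟩ := h1
        rw [W_two, Finset.sum_eq_zero, mul_zero]
        · intro l _
          by_cases hl : l = i
          · exact Finset.prod_eq_zero (Finset.mem_univ j) (by rw [hl]; simp [hji, hj])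
          · exact Finset.prod_eq_zero (Finset.mem_univ i) (by simp [Ne.symm hl, hi])
        · rw [← Set.ncard_pair hji]
          refine Set.ncard_le_ncard ?_ (Set.toFinite _)
          rintro l (rfl | rfl)
          exacts [hj, hi]
      · push Not at h1
        have e : {l | y l = 0} = {i} := by
          ext l
          refine ⟨fun hl => by_contra fun h => h1 l h hl, fun hl => ?_⟩
          rw [Set.mem_singleton_iff] at hl; subst hl; exact hi
        rw [e, Set.ncard_singleton, Finset.sum_eq_single i, Finset.prod_eq_one, mul_one]
        · intro l _
          by_cases hl : l = i
          · simp [hl, hi]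
          · simp [hl, h1 l hl]
        · intro l _ hl
          exact Finset.prod_eq_zero (Finset.mem_univ i) (by simp [Ne.symm hl, hi])
        · simp
    · push Not at h0
      have e : {l | y l = 0} = ∅ := Set.eq_empty_of_forall_notMem fun l hl => h0 l hl
      rw [e, Set.ncard_empty, Finset.prod_eq_one (fun i _ => by simp [h0 i]), mul_one,
        Finset.sum_eq_zero, mul_zero, add_zero]
      intro i _
      exact Finset.prod_eq_zero (Finset.mem_univ i) (by simp [h0 i])
  have hsum : ∀ f : Fin r → F → ℝ, ∑ y : Fin r → F, ∏ i, f i (y i) = ∏ i, ∑ x, f i x := by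
    intro f
    rw [Finset.prod_univ_sum, Fintype.piFinset_univ]
  have s1 : ∑ x : F, (if x = 0 then (0 : ℝ) else 1) = Q - 1 := sum_ind_ne
  rw [Finset.sum_congr rfl fun y _ => key y, Finset.sum_add_distrib, ← Finset.mul_sum,
    ← Finset.mul_sum, Finset.sum_comm, hsum fun _ x => if x = 0 then (0 : ℝ) else 1,
    Finset.sum_congr rfl fun i _ => hsum fun l x => if l = i then (if x = 0 then (1 : ℝ) else 0)
      else (if x = 0 then 0 else 1)]
  have s2 : ∀ i : Fin r, ∏ l, ∑ x : F, (if l = i then (if x = 0 then (1 : ℝ) else 0)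
      else (if x = 0 then 0 else 1)) = (Q - 1) ^ (r - 1) := by
    intro i
    have : ∀ l, ∑ x : F, (if l = i then (if x = 0 then (1 : ℝ) else 0)
      else (if x = 0 then 0 else 1)) = if l = i then 1 else Q - 1 := by
      intro l
      by_cases hl : l = i
      · simp [hl]
      · simp only [hl, if_false, s1]
    rw [Finset.prod_congr rfl fun l _ => this l, ← Finset.mul_prod_erase _ _ (Finset.mem_univ i),
      if_pos rfl, one_mul, Finset.prod_congr rfl fun l hl => if_neg (Finset.ne_of_mem_erase hl)]
    simp
  rw [Finset.sum_congr rfl fun i _ => s2 i, s1]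
  simp only [Finset.prod_const, Finset.sum_const, Finset.card_univ, Fintype.card_fin, nsmul_eq_mul]
  obtain ⟨m, rfl⟩ : ∃ m, r = m + 1 := ⟨r - 1, by omega⟩
  have hp : Q - 1 = Q * (1 - Q⁻¹) := by field_simp
  rw [hp, Nat.add_sub_cancel, mul_pow, mul_pow]
  have e1 : (Q ^ (m + 1))⁻¹ * Q ^ (m + 1) = 1 := inv_mul_cancel₀ (pow_ne_zero _ hQ0)
  have e2 : (Q ^ (m + 1))⁻¹ * Q ^ m = Q⁻¹ := by rw [pow_succ]; field_simp
  have hW0 : W (m + 1) Q⁻¹ 0 =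
    (1 - Q⁻¹ ^ 2) ^ 2 - ((m + 1 : ℕ) : ℝ) * Q⁻¹ ^ 2 * (1 - Q⁻¹) ^ 2 := by
    unfold W; rw [if_pos rfl]
  have hW1 : W (m + 1) Q⁻¹ 1 = (1 - Q⁻¹) ^ 2 * (1 - Q⁻¹ ^ 2) := by
    unfold W; rw [if_neg one_ne_zero, if_pos rfl]
  rw [hW0, hW1]
  generalize Q⁻¹ = p at *
  generalize (Q ^ (m + 1))⁻¹ = A at *
  calc _ = (A * Q ^ (m + 1)) * (((1 - p ^ 2) ^ 2 - ((m + 1 : ℕ) : ℝ) * p ^ 2 * (1 - p) ^ 2) *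
        (1 - p) ^ (m + 1)) + (A * Q ^ m) * ((1 - p) ^ 2 * (1 - p ^ 2) *
        (((m + 1 : ℕ) : ℝ) * (1 - p) ^ m)) := by ring
    _ = _ := by rw [e1, e2]; push_cast; ring

variable {K : Type} [Field K] [Finite K] {r : ℕ}

/-- Weight of a family of forms at a place: the local admissible proportion. -/
def Wt (cp : ClosedPoint K) (g : Fin r → BForm K) : ℝ :=
  W r (((Nat.card K : ℝ) ^ cpDeg cp)⁻¹) {i | ev cp (g i) = 0}.ncard

/-- Families of forms of given degrees. -/
abbrev GT (K : Type) [Field K] {r : ℕ} (k : Fin r → ℕ) : Type := ∀ i, V K (k i)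

/-- The family of polynomials underlying a family of forms. -/
def gf {k : Fin r → ℕ} (g : GT K k) : Fin r → BForm K := fun i => (g i).1

lemma gf_hom {k : Fin r → ℕ} (g : GT K k) : HomG k (gf g) := fun i => (g i).2

lemma card_Fc' (cp : ClosedPoint K) : (Fintype.card (Fc cp) : ℝ) = (Nat.card K : ℝ) ^ cpDeg cp := by
  rw [← Nat.card_eq_fintype_card, card_Fc, Nat.cast_pow]

/-- Averaging over all families of forms produces a partial Euler product. -/
lemma sum_Wt (hr : 1 ≤ r) (k : Fin r → ℕ) (P : Finset (ClosedPoint K))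
    (hP : ∀ i, ∑ cp ∈ P, cpDeg cp ≤ k i + 1) :
    ∑ g : GT K k, ∏ cp ∈ P, Wt cp (gf g) = (Nat.card K : ℝ) ^ (∑ i, k i + r) *
      ∏ cp ∈ P, tauFactor (Nat.card K) r (cpDeg cp) := by
  have h := indep k P hP
    (fun cp y => W r (((Nat.card K : ℝ) ^ cpDeg cp)⁻¹) {i | y i = 0}.ncard)
  refine Eq.trans h ?_
  congr 1
  · rw [Finset.prod_pow_eq_pow_sum]; congr 1; simp [Finset.sum_add_distrib]
  · refine Finset.prod_congr rfl fun cp _ => ?_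
    have h2 := sum_W (F := Fc cp) hr
    rw [card_Fc'] at h2
    rw [Fintype.card_fin, h2, tauFactor_eq]

lemma inv_le_of_card (hq : 16 ≤ Nat.card K) (cp : ClosedPoint K) :
    ((Nat.card K : ℝ) ^ cpDeg cp)⁻¹ ≤ 1 / 16 := by
  have hq' : (16 : ℝ) ≤ Nat.card K := by exact_mod_cast hq
  have h1 : (Nat.card K : ℝ) ≤ (Nat.card K : ℝ) ^ cpDeg cp :=
    le_self_pow₀ (by linarith) (cpDeg_pos cp).ne'
  rw [one_div]
  exact inv_anti₀ (by norm_num) (hq'.trans h1)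

lemma Wt_nonneg (hr : r ≤ 7) (hq : 16 ≤ Nat.card K) (cp : ClosedPoint K) (g : Fin r → BForm K) :
    0 ≤ Wt cp g := W_nonneg hr (by positivity) (inv_le_of_card hq cp) _

lemma Wt_le_one (hq : 16 ≤ Nat.card K) (cp : ClosedPoint K) (g : Fin r → BForm K) :
    Wt cp g ≤ 1 := W_le_one (by positivity) (inv_le_of_card hq cp) _

/-- The weight kills families two of whose members vanish simultaneously; hence coprimality need
not be imposed at the places carrying a weight. -/
lemma Wt_two (cp : ClosedPoint K) (g : Fin r → BForm K) {i j : Fin r} (hij : i ≠ j)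
    (hi : ev cp (g i) = 0) (hj : ev cp (g j) = 0) : Wt cp g = 0 := by
  refine W_two _ _ ?_
  refine le_trans (Set.ncard_pair hij).ge ?_
  refine Set.ncard_le_ncard ?_ (Set.toFinite _)
  rintro l (rfl | rfl)
  exacts [hi, hj]

lemma tau_le_one (hq : 16 ≤ Nat.card K) (cp : ClosedPoint K) :
    tauFactor (Nat.card K) r (cpDeg cp) ≤ 1 := by
  have hp := inv_le_of_card hq cp
  have hp0 : 0 ≤ ((Nat.card K : ℝ) ^ cpDeg cp)⁻¹ := by positivity
  rw [tauFactor_eq]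
  generalize ((Nat.card K : ℝ) ^ cpDeg cp)⁻¹ = p at *
  have h1 : (1 + p) ^ (r + 2) * (1 - p) ^ (r + 2) ≤ 1 := by
    rw [← mul_pow]; exact pow_le_one₀ (by nlinarith) (by nlinarith)
  have h2 : 1 + (r + 2) * p + p ^ 2 ≤ (1 + p) ^ (r + 2) := by
    have h3 := one_add_mul_le_pow (a := p) (by linarith) r
    have h5 : (1 + r * p) * (1 + p) ^ 2 ≤ (1 + p) ^ r * (1 + p) ^ 2 :=
      mul_le_mul_of_nonneg_right h3 (by positivity)
    rw [pow_add]
    refine le_trans ?_ h5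
    have : 0 ≤ (r : ℝ) * p := by positivity
    nlinarith [mul_nonneg this hp0, mul_nonneg this (mul_nonneg hp0 hp0)]
  calc (1 - p) ^ (r + 2) * (1 + (r + 2) * p + p ^ 2) ≤ (1 - p) ^ (r + 2) * (1 + p) ^ (r + 2) :=
        mul_le_mul_of_nonneg_left h2 (pow_nonneg (by linarith) _)
    _ ≤ 1 := by rw [mul_comm]; exact h1

end Average
end ManinDP

/-! ### Configurations and their relation to the counting set -/

namespace ManinDP
open MvPolynomial

section Configurations
variable {K : Type} [Field K] [Finite K] {r : ℕ}

/-- Families of nonzero pairwise coprime forms of degrees `k` whose two lattices contain no short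
vector (of degree `b`, respectively `b'`). -/
def Balanced (c c' : Fin r → K) (k : Fin r → ℕ) (b b' : ℕ) (g : Fin r → BForm K) : Prop :=
  HomG k g ∧ CoPr g ∧ Lat c g b = (⊥ : Submodule K _) ∧ Lat c' g b' = (⊥ : Submodule K _)

/-- Configurations over a balanced family `g` without local obstruction at the places in `P`. -/
def AP (c c' : Fin r → K) (k : Fin r → ℕ) (a a' b b' : ℕ) (P : Finset (ClosedPoint K)) :
    Set (Cfg K r) :=
  {x | Balanced c c' k b b' x.1 ∧ x.2.1 ∈ Lat c x.1 a ∧ x.2.2 ∈ Lat c' x.1 a' ∧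
    ∀ cp ∈ P, NoErr c c' x.1 cp x.2}

/-- Elements of `M̃(a, a', 𝐤)` together with a choice of the `r` greatest common divisors. -/
def Val (c c' : Fin r → K) (k : Fin r → ℕ) (a a' : ℕ) : Set (Cfg K r) :=
  {x | HomG k x.1 ∧ (x.2.1.1, x.2.1.2, x.2.2.1, x.2.2.2) ∈ MtildeSet K r c c' a a' k ∧
    ∀ i, x.1 i ∣ lin (c i) x.2.1 ∧ x.1 i ∣ lin (c' i) x.2.2 ∧
      ∀ d, d ∣ lin (c i) x.2.1 → d ∣ lin (c' i) x.2.2 → d ∣ x.1 i}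

lemma fl_HomG (k : Fin r → ℕ) :
    {g : Fin r → BForm K | HomG k g}.encard ≤ ((Nat.card K ^ (∑ i, k i + r) : ℕ) : ℕ∞) := by
  have h := fl_pi (fun i => {f : BForm K | f.IsHomogeneous (k i)}) _ fun i => fl_V (K := K) (k i)
  refine le_trans h (le_of_eq ?_)
  rw [Finset.prod_pow_eq_pow_sum]
  simp [Finset.sum_add_distrib]

lemma fl_box (k : Fin r → ℕ) (a a' : ℕ) :
    {x : Cfg K r | HomG k x.1 ∧ (x.2.1.1.IsHomogeneous a ∧ x.2.1.2.IsHomogeneous a) ∧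
      (x.2.2.1.IsHomogeneous a' ∧ x.2.2.2.IsHomogeneous a')}.Finite := by
  have h := fl_prod (fl_HomG (K := K) k) (fl_prod (fl_VV (K := K) a a) (fl_VV (K := K) a' a'))
  exact (Set.encard_le_coe_iff_finite_ncard_le.1 h).1

variable {c c' : Fin r → K} {k : Fin r → ℕ} {a a' b b' : ℕ}

lemma AP_finite (P : Finset (ClosedPoint K)) : (AP c c' k a a' b b' P).Finite :=
  (fl_box k a a').subset fun _ hx => ⟨hx.1.1, ⟨hx.2.1.1, hx.2.1.2.1⟩, hx.2.2.1.1, hx.2.2.1.2.1⟩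

lemma Val_finite : (Val c c' k a a').Finite :=
  (fl_box k a a').subset fun _ hx => ⟨hx.1, ⟨hx.2.1.1, hx.2.1.2.1⟩, hx.2.1.2.2.1, hx.2.1.2.2.2.1⟩

lemma AP_anti {P Q : Finset (ClosedPoint K)} (h : P ⊆ Q) :
    AP c c' k a a' b b' Q ⊆ AP c c' k a a' b b' P :=
  fun _ hx => ⟨hx.1, hx.2.1, hx.2.2.1, fun cp hcp => hx.2.2.2 cp (h hcp)⟩

/-- The properties of a configuration in `Val` that the upper bound uses. -/
lemma Val_props (hc : Function.Injective c) {x : Cfg K r} (hx : x ∈ Val c c' k a a') (hr : 1 ≤ r) :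
    HomG k x.1 ∧ CoPr x.1 ∧
      (x.2.1 ∈ Lat c x.1 a ∧ x.2.1 ≠ 0 ∧ IsRelPrime x.2.1.1 x.2.1.2) ∧
      (x.2.2 ∈ Lat c' x.1 a' ∧ x.2.2 ≠ 0 ∧ IsRelPrime x.2.2.1 x.2.2.2) ∧
      ∀ cp, NoErr c c' x.1 cp x.2 := by
  obtain ⟨g, s, t⟩ := x
  obtain ⟨hg, ⟨hs1, hs2, ht1, ht2, hs, ht, hi⟩, hgcd⟩ := hx
  dsimp only at hg hs1 hs2 ht1 ht2 hs ht hi hgcd ⊢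
  have hS0 : ∀ i, lin (c i) s ≠ 0 := fun i => (hi i).1
  have hT0 : ∀ i, lin (c' i) t ≠ 0 := fun i => (hi i).2.1
  have hg0 : ∀ i, g i ≠ 0 := fun i h => hS0 i (by
    have := (hgcd i).1; rw [h, zero_dvd_iff] at this; exact this)
  have hsp : IsRelPrime s.1 s.2 := fun d h1 h2 => hs d h1 h2
  have htp : IsRelPrime t.1 t.2 := fun d h1 h2 => ht d h1 h2
  refine ⟨hg, ⟨hg0, fun i j hij => ?_⟩, ⟨⟨hs1, hs2, fun i => (hgcd i).1⟩, ?_, hsp⟩,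
    ⟨⟨ht1, ht2, fun i => (hgcd i).2.1⟩, ?_, htp⟩, fun cp => ⟨?_, ?_, ?_⟩⟩
  · intro d h1 h2
    exact isRelPrime_of_lin (fun e => hij (hc e)) hsp (h1.trans (hgcd i).1) (h2.trans (hgcd j).1)
  · rintro rfl; exact hS0 ⟨0, hr⟩ (map_zero _)
  · rintro rfl; exact hT0 ⟨0, hr⟩ (map_zero _)
  · rintro ⟨h1, h2⟩
    exact Phi_not_isUnit cp (hsp ((ev_eq_zero_iff cp hs1).1 h1) ((ev_eq_zero_iff cp hs2).1 h2))
  · rintro ⟨h1, h2⟩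
    exact Phi_not_isUnit cp (htp ((ev_eq_zero_iff cp ht1).1 h1) ((ev_eq_zero_iff cp ht2).1 h2))
  · rintro i ⟨h1, h2⟩
    have h3 := (hgcd i).2.2 _ h1 h2
    have h4 : Phi cp * g i ∣ 1 * g i := by rwa [one_mul]
    exact Phi_not_isUnit cp (isUnit_of_dvd_one ((mul_dvd_mul_iff_right (hg0 i)).1 h4))

lemma relPrime_of_noCommon {s : BForm K × BForm K} {n : ℕ} (h1 : s.1.IsHomogeneous n)
    (h2 : s.2.IsHomogeneous n) (h0 : s ≠ 0)
    (h : ∀ cp : ClosedPoint K, ¬ (ev cp s.1 = 0 ∧ ev cp s.2 = 0)) : IsRelPrime s.1 s.2 := by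
  by_cases hs : s.1 = 0
  · have hs2 : s.2 ≠ 0 := fun e => h0 (Prod.ext hs e)
    exact (isRelPrime_of_ev h2 hs2 fun cp hh => h cp hh.symm).symm
  · exact isRelPrime_of_ev h1 hs h

/-- A configuration without obstruction at any place comes from `M̃`. -/
lemma mem_Val (hc : Function.Injective c) (hc' : Function.Injective c')
    (ha : ∀ i, a + k i < ∑ j, k j) (ha' : ∀ i, a' + k i < ∑ j, k j) {x : Cfg K r}
    (hx : Balanced c c' k b b' x.1) (hs : x.2.1 ∈ Lat c x.1 a) (ht : x.2.2 ∈ Lat c' x.1 a')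
    (hs0 : x.2.1 ≠ 0) (ht0 : x.2.2 ≠ 0) (hN : ∀ cp, NoErr c c' x.1 cp x.2) :
    x ∈ Val c c' k a a' := by
  classical
  obtain ⟨g, s, t⟩ := x
  dsimp only at *
  obtain ⟨hg, ⟨hg0, hrp⟩, -, -⟩ := hx
  have hS0 : ∀ i, lin (c i) s ≠ 0 := fun i => lin_ne_zero hc hg hrp hs hs0 i (ha i)
  have hT0 : ∀ i, lin (c' i) t ≠ 0 := fun i => lin_ne_zero hc' hg hrp ht ht0 i (ha' i)
  have hsp := relPrime_of_noCommon hs.1 hs.2.1 hs0 fun cp => (hN cp).1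
  have htp := relPrime_of_noCommon ht.1 ht.2.1 ht0 fun cp => (hN cp).2.1
  have hgcd : ∀ i, ∀ d, d ∣ lin (c i) s → d ∣ lin (c' i) t → d ∣ g i := by
    intro i d hd1 hd2
    obtain ⟨σ, hσ, e1⟩ := exists_cofactor (lin_homog (c i) hs.1 hs.2.1) (hg i) (hs.2.2 i)
    obtain ⟨τ, hτ, e2⟩ := exists_cofactor (lin_homog (c' i) ht.1 ht.2.1) (hg i) (ht.2.2 i)
    have hσ0 : σ ≠ 0 := fun h => hS0 i (by rw [e1, h, mul_zero])
    have hστ : IsRelPrime σ τ := by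
      refine isRelPrime_of_ev hσ hσ0 fun cp hh => (hN cp).2.2 i ?_
      rw [ev_eq_zero_iff cp hσ, ev_eq_zero_iff cp hτ] at hh
      dsimp only
      rw [e1, e2, mul_comm (Phi cp)]
      exact ⟨mul_dvd_mul_left _ hh.1, mul_dvd_mul_left _ hh.2⟩
    let : GCDMonoid (BForm K) := UniqueFactorizationMonoid.toGCDMonoid _
    rw [e1] at hd1
    rw [e2] at hd2
    have h1 := dvd_gcd hd1 hd2
    have h2 := h1.trans (gcd_mul_left' (g i) σ τ).dvd
    have h3 : IsUnit (gcd σ τ) := hστ (gcd_dvd_left _ _) (gcd_dvd_right _ _)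
    exact (h3.dvd_mul_right).1 h2
  exact ⟨hg, ⟨hs.1, hs.2.1, ht.1, ht.2.1, fun d h1 h2 => hsp h1 h2, fun d h1 h2 => htp h1 h2,
    fun i => ⟨hS0 i, hT0 i, g i, hg i, hs.2.2 i, ht.2.2 i, hgcd i⟩⟩,
    fun i => ⟨hs.2.2 i, ht.2.2 i, hgcd i⟩⟩

lemma ncard_le_real {α : Type} {A : Set α} {m : ℕ} (h : A.encard ≤ (m : ℕ∞)) : (A.ncard : ℝ) ≤ m := by
  exact_mod_cast (Set.encard_le_coe_iff_finite_ncard_le.1 h).2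

/-- Counting configurations by their family of forms. -/
lemma ncard_fibres {A : Set (Cfg K r)} (hA : A.Finite) (h : ∀ x ∈ A, HomG k x.1)
    [Fintype (GT K k)] :
    A.ncard = ∑ g : GT K k, {y | (gf g, y) ∈ A}.ncard := by
  classical
  let φ : (Fin r → BForm K) → GT K k := fun g i => if h : (g i).IsHomogeneous (k i) then ⟨g i, h⟩
    else 0
  have hφ : ∀ g, HomG k g → gf (φ g) = g := fun g hg => by
    funext i; simp only [gf, φ, dif_pos (hg i)]
  have hφ' : ∀ g : GT K k, φ (gf g) = g := fun g => by
    funext i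
    have : (gf g i).IsHomogeneous (k i) := (g i).2
    simp only [φ, dif_pos this]; rfl
  rw [Set.ncard_eq_toFinset_card A hA, Finset.card_eq_sum_card_fiberwise (f := fun x => φ x.1)
    (t := Finset.univ) (fun _ _ => Finset.mem_coe.2 (Finset.mem_univ _))]
  refine Finset.sum_congr rfl fun g _ => ?_
  rw [← Set.ncard_coe_finset]
  symm
  refine Set.ncard_congr (fun y _ => (gf g, y)) ?_ ?_ ?_
  · intro y hy
    simp only [Finset.coe_filter, Set.Finite.mem_toFinset, Set.mem_ofPred_eq]
    exact ⟨hy, hφ' g⟩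
  · intro y z _ _ e
    exact (Prod.mk.inj e).2
  · rintro ⟨g', y⟩ hx
    simp only [Finset.coe_filter, Set.Finite.mem_toFinset, Set.mem_ofPred_eq] at hx
    have : g' = gf g := by rw [← hx.2, hφ _ (h _ hx.1)]
    subst this
    exact ⟨y, hx.1, rfl⟩

lemma ncard_GT (p : (Fin r → BForm K) → Prop) [Fintype (GT K k)] [DecidablePred p] :
    ∑ g : GT K k, (if p (gf g) then (1 : ℝ) else 0) = ({g | HomG k g ∧ p g}.ncard : ℝ) := by
  classical
  rw [Finset.sum_boole]
  congr 1
  rw [← Set.ncard_coe_finset]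
  refine Set.ncard_congr (fun g _ => gf g) ?_ ?_ ?_
  · intro g hg
    simp only [Finset.coe_filter, Finset.mem_univ, true_and, Set.mem_ofPred_eq] at hg
    exact ⟨gf_hom g, hg⟩
  · intro g g' _ _ e
    funext i
    exact Subtype.ext (congrFun e i)
  · rintro g ⟨hg, hp⟩
    refine ⟨fun i => ⟨g i, hg i⟩, ?_, rfl⟩
    simp only [Finset.coe_filter, Finset.mem_univ, true_and, Set.mem_ofPred_eq]
    exact hp

end Configurations
end ManinDP

/-! ### Absorption of the crude bounds into the main term -/

namespace ManinDP
open MvPolynomial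

section Comparison

/-- The numerical conditions under which all error terms are small: the degrees `kᵢ` and the
excesses `u = 2a - ∑ kᵢ`, `w = 2a' - ∑ kᵢ` all lie in `[8T, 9T]`. -/
structure Narrow (r : ℕ) (k : Fin r → ℕ) (a a' b b' T u w : ℕ) : Prop where
  r5 : 5 ≤ r
  r7 : r ≤ 7
  T1 : 1 ≤ T
  hu : 2 * a = ∑ i, k i + u
  hw : 2 * a' = ∑ i, k i + w
  hb : b + a = ∑ i, k i + T
  hb' : b' + a' = ∑ i, k i + T
  k8 : ∀ i, 8 * T ≤ k i
  k9 : ∀ i, k i ≤ 9 * T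
  u8 : 8 * T ≤ u
  u9 : u ≤ 9 * T
  w8 : 8 * T ≤ w
  w9 : w ≤ 9 * T

variable {r : ℕ} {k : Fin r → ℕ} {a a' b b' T u w : ℕ}

lemma Narrow.symm (h : Narrow r k a a' b b' T u w) : Narrow r k a' a b' b T w u :=
  ⟨h.r5, h.r7, h.T1, h.hw, h.hu, h.hb', h.hb, h.k8, h.k9, h.w8, h.w9, h.u8, h.u9⟩

lemma Narrow.sum_ge (h : Narrow r k a a' b b' T u w) : 40 * T ≤ ∑ i, k i := by
  have h1 := Finset.card_nsmul_le_sum (Finset.univ : Finset (Fin r)) k (8 * T) fun i _ => h.k8 i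
  rw [Finset.card_univ, Fintype.card_fin, smul_eq_mul] at h1
  have := h.r5
  nlinarith [Nat.zero_le T]

lemma Narrow.sum_le (h : Narrow r k a a' b b' T u w) : ∑ i, k i ≤ 63 * T := by
  have h1 := Finset.sum_le_card_nsmul (Finset.univ : Finset (Fin r)) k (9 * T) fun i _ => h.k9 i
  rw [Finset.card_univ, Fintype.card_fin, smul_eq_mul] at h1
  have := h.r7
  nlinarith [Nat.zero_le T]

lemma Narrow.two_k (h : Narrow r k a a' b b' T u w) (i : Fin r) : 2 * k i ≤ ∑ j, k j := by
  have := h.sum_ge; have := h.k9 i; omega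

lemma Narrow.a_le (h : Narrow r k a a' b b' T u w) : a ≤ 36 * T := by
  have := h.sum_le; have := h.u9; have := h.hu; omega

lemma Narrow.b_le (h : Narrow r k a a' b b' T u w) : b ≤ 36 * T := by
  have := h.sum_le; have := h.u8; have := h.hu; have := h.hb; omega

lemma Narrow.a_lt (h : Narrow r k a a' b b' T u w) (i : Fin r) : a + k i < ∑ j, k j := by
  have := h.sum_ge; have := h.u9; have := h.hu; have := h.k9 i; have := h.T1; omega

lemma Narrow.b_lt (h : Narrow r k a a' b b' T u w) (i : Fin r) : b + k i < ∑ j, k j := by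
  have := h.sum_ge; have := h.u8; have := h.hu; have := h.hb; have := h.k9 i; have := h.T1; omega

/-- The relative size of each error term; it tends to `0` with `T` as soon as `q > 2 ^ 504`. -/
def eta (q T : ℕ) : ℝ := (q : ℝ) ^ 7 * 2 ^ (504 * T) / (q : ℝ) ^ T

lemma eta_nonneg (q T : ℕ) : 0 ≤ eta q T := by unfold eta; positivity

/-- A quantity `A q ^ e` with `A` subexponential relative to `2 ^ (504 T)` and `e ≤ E + 7 - T` is
at most `eta` times `q ^ E`. -/
lemma absorb {q A e E T N : ℕ} (hq : 1 ≤ q) (hN : N = A * q ^ e) (hA : A ≤ 2 ^ (504 * T))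
    (he : e + T ≤ E + 7) : (N : ℝ) ≤ eta q T * (q : ℝ) ^ E := by
  have hq0 : (0 : ℝ) < q := by exact_mod_cast hq
  have h1 : N * q ^ T ≤ 2 ^ (504 * T) * q ^ (E + 7) := by
    rw [hN, mul_assoc, ← pow_add]
    exact Nat.mul_le_mul hA (Nat.pow_le_pow_right hq he)
  have h2 : (N : ℝ) * (q : ℝ) ^ T ≤ 2 ^ (504 * T) * (q : ℝ) ^ (E + 7) := by exact_mod_cast h1
  have h3 : eta q T * (q : ℝ) ^ E = (2 ^ (504 * T) * (q : ℝ) ^ (E + 7)) / (q : ℝ) ^ T := by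
    unfold eta; rw [pow_add]; ring
  rw [h3, le_div_iff₀ (by positivity)]
  exact h2

lemma absorb_bad (h : Narrow r k a a' b b' T u w) {q : ℕ} (hq : 1 ≤ q) :
    ((q ^ (2 * b + 2) * (q * 2 ^ b) ^ r : ℕ) : ℝ) ≤ eta q T * (q : ℝ) ^ (∑ i, k i + r) := by
  refine absorb (A := 2 ^ (b * r)) (e := 2 * b + 2 + r) hq ?_ ?_ ?_
  · rw [mul_pow, ← pow_mul, pow_add _ _ r]; ring
  · refine Nat.pow_le_pow_right (by norm_num) ?_
    have h1 := h.b_le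
    have h2 := h.r7
    calc b * r ≤ 36 * T * 7 := Nat.mul_le_mul h1 h2
      _ ≤ 504 * T := by omega
  · have := h.hu; have := h.hb; have := h.u8; omega

lemma sum_ite_one (k : Fin r → ℕ) (i : Fin r) :
    (∑ j, if j = i then 0 else k j + 1) + (k i + 1) = ∑ j, k j + r := by
  have h1 : ∑ j, (if j = i then k j + 1 else 0) = k i + 1 := by
    rw [Finset.sum_ite_eq' Finset.univ i fun j => k j + 1, if_pos (Finset.mem_univ i)]
  have h2 : ∑ j, k j + r = ∑ j, (k j + 1) := by simp [Finset.sum_add_distrib]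
  rw [← h1, ← Finset.sum_add_distrib, h2]
  refine Finset.sum_congr rfl fun j _ => ?_
  split_ifs <;> simp

lemma sum_ite_two (k : Fin r → ℕ) {i j : Fin r} (hij : i ≠ j) :
    (∑ l, if l = i then 0 else if l = j then 0 else k l + 1) + (k i + k j + 2) =
      ∑ j, k j + r := by
  have h1 := sum_ite_one k i
  have h2 : ∑ l, (if l = j then k l + 1 else 0) = k j + 1 := by
    rw [Finset.sum_ite_eq' Finset.univ j fun l => k l + 1, if_pos (Finset.mem_univ j)]
  have h3 : (∑ l, if l = i then 0 else if l = j then 0 else k l + 1) + (k j + 1) =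
      ∑ l, if l = i then 0 else k l + 1 := by
    rw [← h2, ← Finset.sum_add_distrib]
    refine Finset.sum_congr rfl fun l _ => ?_
    split_ifs with e1 e2
    · exact absurd (e1.symm.trans e2) hij
    all_goals simp
  omega

lemma absorb_zero (h : Narrow r k a a' b b' T u w) {q : ℕ} (hq : 1 ≤ q) (i : Fin r) :
    ((∏ j, (if j = i then 1 else q ^ (k j + 1)) : ℕ) : ℝ) ≤
      eta q T * (q : ℝ) ^ (∑ i, k i + r) := by
  refine absorb (A := 1) (e := ∑ j, if j = i then 0 else k j + 1) hq ?_
    Nat.one_le_two_pow ?_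
  · rw [one_mul, ← Finset.prod_pow_eq_pow_sum]
    refine Finset.prod_congr rfl fun j _ => ?_
    split_ifs <;> simp
  · have := sum_ite_one k i; have := h.k8 i; omega

lemma absorb_pair (h : Narrow r k a a' b b' T u w) {q : ℕ} (hq : 1 ≤ q) {i j : Fin r}
    (hij : i ≠ j) :
    ((k i * q ^ (k i + k j + 2 - T) *
        ∏ l, (if l = i then 1 else if l = j then 1 else q ^ (k l + 1)) : ℕ) : ℝ) ≤
      eta q T * (q : ℝ) ^ (∑ i, k i + r) := by
  refine absorb (A := k i) (e := (k i + k j + 2 - T) +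
    ∑ l, if l = i then 0 else if l = j then 0 else k l + 1) hq ?_ ?_ ?_
  · rw [pow_add, ← Finset.prod_pow_eq_pow_sum, mul_assoc]
    congr 2
    refine Finset.prod_congr rfl fun j _ => ?_
    split_ifs <;> simp
  · refine le_trans Nat.lt_two_pow_self.le (Nat.pow_le_pow_right (by norm_num) ?_)
    have := h.k9 i; omega
  · have := sum_ite_two k hij; have := h.k8 i; omega

lemma absorb_null (h : Narrow r k a a' b b' T u w) {q : ℕ} (hq : 1 ≤ q) :
    ((q ^ (∑ i, k i + r) * q ^ (w + 2) : ℕ) : ℝ) ≤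
      eta q T * (q : ℝ) ^ (∑ i, k i + r + (u + w + 4)) := by
  refine absorb (A := 1) (e := ∑ i, k i + r + (w + 2)) hq ?_ Nat.one_le_two_pow ?_
  · rw [one_mul, ← pow_add]
  · have := h.u8; omega

lemma absorb_i (h : Narrow r k a a' b b' T u w) {q : ℕ} (hq : 1 ≤ q) :
    ((a * q ^ (a + a + 2 - T) * ((q * 2 ^ a) ^ r * q ^ (w + 2)) : ℕ) : ℝ) ≤
      eta q T * (q : ℝ) ^ (∑ i, k i + r + (u + w + 4)) := by
  refine absorb (A := a * 2 ^ (a * r)) (e := (a + a + 2 - T) + r + (w + 2)) hq ?_ ?_ ?_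
  · rw [mul_pow, ← pow_mul, pow_add, pow_add]; ring
  · calc a * 2 ^ (a * r) ≤ 2 ^ a * 2 ^ (a * r) := Nat.mul_le_mul_right _ Nat.lt_two_pow_self.le
      _ = 2 ^ (a * (r + 1)) := by rw [← pow_add]; ring_nf
      _ ≤ 2 ^ (504 * T) := by
        refine Nat.pow_le_pow_right (by norm_num) ?_
        calc a * (r + 1) ≤ 36 * T * 8 := Nat.mul_le_mul h.a_le (by have := h.r7; omega)
          _ ≤ 504 * T := by omega
  · have := h.hu; have := h.sum_ge; have := h.u8; omega

lemma absorb_iii (h : Narrow r k a a' b b' T u w) {q : ℕ} (hq : 1 ≤ q) :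
    ((q ^ (a + a + 2) * ((q * 2 ^ a) ^ r * ((q * 2 ^ a) ^ r * q ^ (w + 1 - T))) : ℕ) : ℝ) ≤
      eta q T * (q : ℝ) ^ (∑ i, k i + r + (u + w + 4)) := by
  refine absorb (A := 2 ^ (a * r + a * r)) (e := (a + a + 2) + r + r + (w + 1 - T)) hq ?_ ?_ ?_
  · rw [mul_pow, ← pow_mul, pow_add, pow_add, pow_add 2]; ring
  · refine Nat.pow_le_pow_right (by norm_num) ?_
    have : a * r ≤ 36 * T * 7 := Nat.mul_le_mul h.a_le h.r7
    omega
  · have := h.hu; have := h.w8; have := h.T1; have := h.r7; omega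

end Comparison
end ManinDP

/-! ### Unbalanced families and obstructed configurations -/

namespace ManinDP
open MvPolynomial

section MainCompare
variable {K : Type} [Field K] [Finite K] {r : ℕ} {c c' : Fin r → K} {k : Fin r → ℕ}
  {a a' b b' T u w : ℕ}

/-- The main term: the number `q ^ (∑ kᵢ + r)` of all families of forms of degrees `k`, multiplied
by the number `q ^ (u + w + 4)` of pairs of lattice vectors over a balanced family. -/
def mainX (K : Type) [Field K] {r : ℕ} (k : Fin r → ℕ) (u w : ℕ) : ℝ :=
  (Nat.card K : ℝ) ^ (∑ i, k i + r + (u + w + 4))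

lemma card_one_le : 1 ≤ Nat.card K := card_pos_K

/-- A balanced lattice has at most `q ^ (u + 2)` vectors of degree `a`. -/
lemma Lat_encard_le (hn : Narrow r k a a' b b' T u w) (hc : Function.Injective c)
    {g : Fin r → BForm K} (hg : HomG k g) (hcp : CoPr g) (hb : Lat c g b = ⊥) :
    (Lat c g a : Set (BForm K × BForm K)).encard ≤ ((Nat.card K ^ (u + 2) : ℕ) : ℕ∞) := by
  obtain ⟨m, m', Θ, -, -, -, hm, -, -, -, hr, -⟩ :=
    lat_param hc hg hcp.1 hcp.2 hn.two_k hn.hb hb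
  have e : u = m + m' := by have := hn.hu; omega
  rw [← hr, ← Set.image_univ, e]
  refine le_trans (Set.encard_image_le _ _) ?_
  have := V_fin K m
  have := V_fin K m'
  rw [Set.encard_le_coe_iff_finite_ncard_le]
  refine ⟨Set.finite_univ, ?_⟩
  rw [Set.ncard_univ, Nat.card_prod, card_V, card_V, ← pow_add]
  exact le_of_eq (by congr 1; omega)

open Classical in
/-- The number of locally unobstructed configurations is a weighted count of balanced families. -/
lemma AP_card [Fintype (GT K k)] (hn : Narrow r k a a' b b' T u w) (hc : Function.Injective c)
    (hc' : Function.Injective c') (P : Finset (ClosedPoint K)) (hP : ∑ cp ∈ P, cpDeg cp ≤ T + 1) :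
    ((AP c c' k a a' b b' P).ncard : ℝ) = (Nat.card K : ℝ) ^ (u + w + 4) *
      ∑ g : GT K k, if Balanced c c' k b b' (gf g) then ∏ cp ∈ P, Wt cp (gf g) else 0 := by
  rw [ncard_fibres (AP_finite P) fun x hx => hx.1.1, Nat.cast_sum, Finset.mul_sum]
  refine Finset.sum_congr rfl fun g _ => ?_
  split_ifs with hg
  · have h := count_good hc hc' (by have := hn.r5; omega) hg.1 hg.2.1.1 hg.2.1.2 hn.two_k hn.hb
      hg.2.2.1 hn.hb' hg.2.2.2 hn.hu hn.hw P hP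
    refine Eq.trans ?_ h
    congr 2
    ext y
    exact ⟨fun hy => hy.2, fun hy => ⟨hg, hy⟩⟩
  · rw [mul_zero, Nat.cast_eq_zero]
    have : {y | (gf g, y) ∈ AP c c' k a a' b b' P} = ∅ :=
      Set.eq_empty_of_forall_notMem fun y hy => hg hy.1
    rw [this, Set.ncard_empty]

lemma main_avg [Fintype (GT K k)] (hn : Narrow r k a a' b b' T u w) (P : Finset (ClosedPoint K))
    (hP : ∑ cp ∈ P, cpDeg cp ≤ T + 1) :
    (Nat.card K : ℝ) ^ (u + w + 4) * ∑ g : GT K k, ∏ cp ∈ P, Wt cp (gf g) =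
      mainX K k u w * ∏ cp ∈ P, tauFactor (Nat.card K) r (cpDeg cp) := by
  have h := sum_Wt (by have := hn.r5; omega) k P fun i => by
    have := hn.k8 i; have := hn.T1; omega
  have h2 : ∑ g : GT K k, ∏ cp ∈ P, Wt cp (gf g) = (Nat.card K : ℝ) ^ (∑ i, k i + r) *
      ∏ cp ∈ P, tauFactor (Nat.card K) r (cpDeg cp) := by convert h
  rw [h2]
  unfold mainX
  rw [pow_add _ _ (u + w + 4)]; ring

lemma tau_avg [Fintype (GT K k)] (hn : Narrow r k a a' b b' T u w) (cp : ClosedPoint K)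
    (hcp : cpDeg cp ≤ T) :
    (Nat.card K : ℝ) ^ (u + w + 4) * ∑ g : GT K k, (1 - Wt cp (gf g)) =
      mainX K k u w * (1 - tauFactor (Nat.card K) r (cpDeg cp)) := by
  have h1 := main_avg hn {cp} (by rw [Finset.sum_singleton]; omega)
  have h0 := main_avg hn (∅ : Finset (ClosedPoint K)) (by simp)
  simp only [Finset.prod_singleton, Finset.prod_empty, mul_one] at h1 h0
  rw [Finset.sum_sub_distrib, mul_sub, h1, h0]; ring

/-- The possible reasons for a family to be unbalanced: it is killed by the weight at a place of
`P` or of `mid`, one of its lattices has a short vector, or it is degenerate at a place of degree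
larger than `T`. -/
lemma not_balanced_weight (P mid : Finset (ClosedPoint K)) (hmid : ∀ cp, cp ∉ P → cpDeg cp ≤ T → cp ∈ mid)
    {g : Fin r → BForm K} (hg : HomG k g) (hb : ¬ Balanced c c' k b b' g) :
    (∃ cp ∈ P, Wt cp g = 0) ∨ (∃ cp ∈ mid, Wt cp g = 0) ∨ (CoPr g ∧ Lat c g b ≠ ⊥) ∨
      (CoPr g ∧ Lat c' g b' ≠ ⊥) ∨ (∃ i, g i = 0) ∨
      ∃ i j, i ≠ j ∧ (g i ≠ 0 ∧ g j ≠ 0 ∧ ∃ cp : ClosedPoint K, T < cpDeg cp ∧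
        ev cp (g i) = 0 ∧ ev cp (g j) = 0) := by
  by_cases h0 : ∃ i, g i = 0
  · exact Or.inr (Or.inr (Or.inr (Or.inr (Or.inl h0))))
  push Not at h0
  by_cases hcp : CoPr g
  · by_cases h1 : Lat c g b = ⊥
    · have h2 : Lat c' g b' ≠ ⊥ := fun h2 => hb ⟨hg, hcp, h1, h2⟩
      exact Or.inr (Or.inr (Or.inr (Or.inl ⟨hcp, h2⟩)))
    · exact Or.inr (Or.inr (Or.inl ⟨hcp, h1⟩))
  · have : ∃ i j, i ≠ j ∧ ¬ IsRelPrime (g i) (g j) := by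
      by_contra h
      push Not at h
      exact hcp ⟨h0, h⟩
    obtain ⟨i, j, hij, hrp⟩ := this
    have : ∃ cp : ClosedPoint K, ev cp (g i) = 0 ∧ ev cp (g j) = 0 := by
      by_contra h
      push Not at h
      exact hrp (isRelPrime_of_ev (hg i) (h0 i) fun cp hh => h cp hh.1 hh.2)
    obtain ⟨cp, e1, e2⟩ := this
    have hW := Wt_two cp g hij e1 e2
    by_cases hP : cp ∈ P
    · exact Or.inl ⟨cp, hP, hW⟩
    by_cases hT : cpDeg cp ≤ T
    · exact Or.inr (Or.inl ⟨cp, hmid cp hP hT, hW⟩)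
    · exact Or.inr (Or.inr (Or.inr (Or.inr (Or.inr ⟨i, j, hij, h0 i, h0 j, cp, by omega, e1, e2⟩))))

/-- Unbalanced families contribute little to the weighted average. -/
lemma not_balanced_sum (hq : 16 ≤ Nat.card K) (hn : Narrow r k a a' b b' T u w)
    (hc : Function.Injective c) (hc' : Function.Injective c')
    (P mid : Finset (ClosedPoint K)) (hP : ∑ cp ∈ P, cpDeg cp ≤ T + 1)
    (hmid : ∀ cp, cp ∉ P → cpDeg cp ≤ T → cp ∈ mid) (hmid' : ∀ cp ∈ mid, cpDeg cp ≤ T) :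
    mainX K k u w * ∏ cp ∈ P, tauFactor (Nat.card K) r (cpDeg cp) ≤
      ((AP c c' k a a' b b' P).ncard : ℝ) + mainX K k u w *
        (∑ cp ∈ mid, (1 - tauFactor (Nat.card K) r (cpDeg cp)) + 58 * eta (Nat.card K) T) := by
  classical
  have : ∀ i, Finite (V K (k i)) := fun i => V_fin K (k i)
  have : Fintype (GT K k) := Fintype.ofFinite _
  have hr7 := hn.r7
  have hW0 := fun cp (g : Fin r → BForm K) => Wt_nonneg hr7 hq cp g
  have hW1 := fun cp (g : Fin r → BForm K) => Wt_le_one hq cp g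
  set Q : ℝ := (Nat.card K : ℝ) with hQ
  have hmidsum : mainX K k u w * ∑ cp ∈ mid, (1 - tauFactor (Nat.card K) r (cpDeg cp)) =
      Q ^ (u + w + 4) * ∑ g : GT K k, ∑ cp ∈ mid, (1 - Wt cp (gf g)) := by
    rw [Finset.sum_comm, Finset.mul_sum, Finset.mul_sum]
    exact Finset.sum_congr rfl fun cp hcp => (tau_avg hn cp (hmid' cp hcp)).symm
  rw [AP_card hn hc hc' P hP, ← main_avg hn P hP, mul_add, hmidsum]
  -- counts the reasons for imbalance that do not come from a place of `P` or of `mid`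
  let ib : (Fin r → BForm K) → ℝ := fun g =>
    (if CoPr g ∧ Lat c g b ≠ ⊥ then 1 else 0) + (if CoPr g ∧ Lat c' g b' ≠ ⊥ then 1 else 0) +
      ∑ i, (if g i = 0 then 1 else 0) + ∑ i, ∑ j, (if i ≠ j ∧ (g i ≠ 0 ∧ g j ≠ 0 ∧
        ∃ cp : ClosedPoint K, T < cpDeg cp ∧ ev cp (g i) = 0 ∧ ev cp (g j) = 0) then 1 else 0)
  have ibn : ∀ (p : Prop) [Decidable p], (0 : ℝ) ≤ if p then 1 else 0 := fun p _ => by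
    split_ifs <;> norm_num
  have pt : ∀ g : GT K k, ∏ cp ∈ P, Wt cp (gf g) ≤
      (if Balanced c c' k b b' (gf g) then ∏ cp ∈ P, Wt cp (gf g) else 0) +
      (∑ cp ∈ mid, (1 - Wt cp (gf g)) + ib (gf g)) := by
    intro g
    have hprod1 : ∏ cp ∈ P, Wt cp (gf g) ≤ 1 :=
      Finset.prod_le_one (fun cp _ => hW0 cp _) fun cp _ => hW1 cp _
    have hm0 : 0 ≤ ∑ cp ∈ mid, (1 - Wt cp (gf g)) :=
      Finset.sum_nonneg fun cp _ => sub_nonneg.2 (hW1 cp _)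
    have n3 : (0 : ℝ) ≤ ∑ i, (if gf g i = 0 then 1 else 0) := Finset.sum_nonneg fun i _ => ibn _
    have n4 : (0 : ℝ) ≤ ∑ i, ∑ j, (if i ≠ j ∧ (gf g i ≠ 0 ∧ gf g j ≠ 0 ∧
        ∃ cp : ClosedPoint K, T < cpDeg cp ∧ ev cp (gf g i) = 0 ∧ ev cp (gf g j) = 0)
        then 1 else 0) := Finset.sum_nonneg fun i _ => Finset.sum_nonneg fun j _ => ibn _
    have n1 := ibn (CoPr (gf g) ∧ Lat c (gf g) b ≠ ⊥)
    have n2 := ibn (CoPr (gf g) ∧ Lat c' (gf g) b' ≠ ⊥)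
    have hib : 0 ≤ ib (gf g) := by dsimp only [ib]; linarith
    split_ifs with hB
    · linarith
    · rw [zero_add]
      rcases not_balanced_weight P mid hmid (gf_hom g) hB with
        ⟨cp, h1, h2⟩ | ⟨cp, h1, h2⟩ | h | h | ⟨i, h⟩ | ⟨i, j, h⟩
      · rw [Finset.prod_eq_zero h1 h2]; linarith
      · have := Finset.single_le_sum (f := fun cp => 1 - Wt cp (gf g))
          (fun cp _ => sub_nonneg.2 (hW1 cp _)) h1
        simp only [h2, sub_zero] at this
        linarith
      · rw [if_pos h] at n1
        dsimp only [ib]; rw [if_pos h]; linarith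
      · dsimp only [ib]; rw [if_pos h]; linarith
      · have := Finset.single_le_sum (f := fun i => if gf g i = 0 then (1 : ℝ) else 0)
          (fun i _ => ibn _) (Finset.mem_univ i)
        rw [if_pos h] at this
        dsimp only [ib]; linarith
      · have h3 := Finset.single_le_sum (f := fun j => if i ≠ j ∧ (gf g i ≠ 0 ∧ gf g j ≠ 0 ∧
          ∃ cp : ClosedPoint K, T < cpDeg cp ∧ ev cp (gf g i) = 0 ∧ ev cp (gf g j) = 0)
          then (1 : ℝ) else 0) (fun i _ => ibn _) (Finset.mem_univ j)
        have h4 := Finset.single_le_sum (f := fun i => ∑ j, if i ≠ j ∧ (gf g i ≠ 0 ∧ gf g j ≠ 0 ∧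
          ∃ cp : ClosedPoint K, T < cpDeg cp ∧ ev cp (gf g i) = 0 ∧ ev cp (gf g j) = 0)
          then (1 : ℝ) else 0) (fun i _ => Finset.sum_nonneg fun j _ => ibn _) (Finset.mem_univ i)
        rw [if_pos h] at h3
        dsimp only [ib]; linarith
  have hq1 : 1 ≤ Nat.card K := card_one_le
  -- `58 = 1 + 1 + 7 + 7 * 7`, each reason contributing at most `E`
  have hib : ∑ g : GT K k, ib (gf g) ≤ 58 * eta (Nat.card K) T * Q ^ (∑ i, k i + r) := by
    have hE := eta_nonneg (Nat.card K) T
    set E := eta (Nat.card K) T * Q ^ (∑ i, k i + r) with hEdef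
    have hE0 : 0 ≤ E := by positivity
    have s1 : ∑ g : GT K k, (if CoPr (gf g) ∧ Lat c (gf g) b ≠ ⊥ then (1 : ℝ) else 0) ≤ E := by
      rw [ncard_GT fun g => CoPr g ∧ Lat c g b ≠ ⊥]
      exact (ncard_le_real (crude_bad hc k b hn.b_lt)).trans (absorb_bad hn hq1)
    have s2 : ∑ g : GT K k, (if CoPr (gf g) ∧ Lat c' (gf g) b' ≠ ⊥ then (1 : ℝ) else 0) ≤ E := by
      rw [ncard_GT fun g => CoPr g ∧ Lat c' g b' ≠ ⊥]
      exact (ncard_le_real (crude_bad hc' k b' hn.symm.b_lt)).trans (absorb_bad hn.symm hq1)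
    have s3 : ∀ i, ∑ g : GT K k, (if gf g i = 0 then (1 : ℝ) else 0) ≤ E := by
      intro i
      rw [ncard_GT fun g => g i = 0]
      exact (ncard_le_real (crude_zero k i)).trans (absorb_zero hn hq1 i)
    have s4 : ∀ i j, ∑ g : GT K k, (if i ≠ j ∧ (gf g i ≠ 0 ∧ gf g j ≠ 0 ∧
        ∃ cp : ClosedPoint K, T < cpDeg cp ∧ ev cp (gf g i) = 0 ∧ ev cp (gf g j) = 0)
        then (1 : ℝ) else 0) ≤ E := by
      intro i j
      by_cases hij : i = j
      · simp only [hij, ne_eq, not_true_eq_false, false_and, if_false, Finset.sum_const_zero]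
        exact hE0
      · simp only [ne_eq, hij, not_false_eq_true, true_and]
        rw [ncard_GT fun g => (¬ g i = 0 ∧ ¬ g j = 0 ∧
          ∃ cp : ClosedPoint K, T < cpDeg cp ∧ ev cp (g i) = 0 ∧ ev cp (g j) = 0)]
        exact (ncard_le_real (crude_pair k T hij)).trans (absorb_pair hn hq1 hij)
    have hr' : (r : ℝ) ≤ 7 := by exact_mod_cast hr7
    have hr0 : (0 : ℝ) ≤ r := Nat.cast_nonneg r
    dsimp only [ib]
    rw [Finset.sum_add_distrib, Finset.sum_add_distrib, Finset.sum_add_distrib, Finset.sum_comm,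
      Finset.sum_comm (s := Finset.univ (α := GT K k))]
    have t3 : ∑ i, ∑ g : GT K k, (if gf g i = 0 then (1 : ℝ) else 0) ≤ r * E := by
      refine (Finset.sum_le_card_nsmul _ _ E fun i _ => s3 i).trans (le_of_eq ?_)
      simp
    have t4 : ∑ i, ∑ g : GT K k, ∑ j, (if i ≠ j ∧ (gf g i ≠ 0 ∧ gf g j ≠ 0 ∧
        ∃ cp : ClosedPoint K, T < cpDeg cp ∧ ev cp (gf g i) = 0 ∧ ev cp (gf g j) = 0)
        then (1 : ℝ) else 0) ≤ r * (r * E) := by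
      refine (Finset.sum_le_card_nsmul _ _ (r * E) fun i _ => ?_).trans (le_of_eq ?_)
      · rw [Finset.sum_comm]
        refine (Finset.sum_le_card_nsmul _ _ E fun j _ => s4 i j).trans (le_of_eq ?_)
        simp
      · simp
    have : (r : ℝ) * E ≤ 7 * E := mul_le_mul_of_nonneg_right hr' hE0
    have : (r : ℝ) * (r * E) ≤ 7 * (7 * E) := mul_le_mul hr' this (by positivity) (by norm_num)
    linarith
  have hQ0 : 0 ≤ Q ^ (u + w + 4) := by positivity
  have hfin : mainX K k u w * (58 * eta (Nat.card K) T) =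
      Q ^ (u + w + 4) * (58 * eta (Nat.card K) T * Q ^ (∑ i, k i + r)) := by
    unfold mainX; rw [pow_add _ _ (u + w + 4)]; ring
  rw [hfin, ← mul_add, ← mul_add]
  refine mul_le_mul_of_nonneg_left ?_ hQ0
  calc _ ≤ _ := Finset.sum_le_sum fun g _ => pt g
    _ ≤ _ := by
      rw [Finset.sum_add_distrib, Finset.sum_add_distrib]
      linarith

/-- Few configurations are obstructed at a given place. -/
lemma AP_diff (hq : 16 ≤ Nat.card K) (hn : Narrow r k a a' b b' T u w)
    (hc : Function.Injective c) (hc' : Function.Injective c') (cp : ClosedPoint K)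
    (hcp : cpDeg cp ≤ T) :
    ((AP c c' k a a' b b' ∅ \ AP c c' k a a' b b' {cp}).ncard : ℝ) ≤
      mainX K k u w * (1 - tauFactor (Nat.card K) r (cpDeg cp)) := by
  classical
  have : ∀ i, Finite (V K (k i)) := fun i => V_fin K (k i)
  have : Fintype (GT K k) := Fintype.ofFinite _
  rw [Set.cast_ncard_sdiff (AP_anti (Finset.empty_subset _)) (AP_finite _),
    AP_card hn hc hc' ∅ (by simp), AP_card hn hc hc' {cp} (by rw [Finset.sum_singleton]; omega),
    ← mul_sub, ← Finset.sum_sub_distrib, ← tau_avg hn cp hcp]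
  refine mul_le_mul_of_nonneg_left (Finset.sum_le_sum fun g _ => ?_) (by positivity)
  have := Wt_le_one hq cp (gf g)
  split_ifs
  · simp
  · simpa using this

end MainCompare
end ManinDP

/-! ### Upper and lower bounds for the number of configurations -/

namespace ManinDP
open MvPolynomial

section Final
variable {K : Type} [Field K] [Finite K] {r : ℕ} {c c' : Fin r → K} {k : Fin r → ℕ}
  {a a' b b' T u w : ℕ}

lemma mainX_pos : 0 < mainX K k u w := by
  have : (0 : ℝ) < Nat.card K := by exact_mod_cast card_pos_K
  unfold mainX; positivity

lemma mainX_symm : mainX K k w u = mainX K k u w := by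
  unfold mainX; congr 1; omega

/-- Bounding by the average over all families, since the weights are nonnegative. -/
lemma AP_le (hq : 16 ≤ Nat.card K) (hn : Narrow r k a a' b b' T u w)
    (hc : Function.Injective c) (hc' : Function.Injective c')
    (P : Finset (ClosedPoint K)) (hP : ∑ cp ∈ P, cpDeg cp ≤ T + 1) :
    ((AP c c' k a a' b b' P).ncard : ℝ) ≤
      mainX K k u w * ∏ cp ∈ P, tauFactor (Nat.card K) r (cpDeg cp) := by
  classical
  have : ∀ i, Finite (V K (k i)) := fun i => V_fin K (k i)
  let : Fintype (GT K k) := Fintype.ofFinite _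
  rw [AP_card hn hc hc' P hP, ← main_avg hn P hP]
  refine mul_le_mul_of_nonneg_left (Finset.sum_le_sum fun g _ => ?_) (by positivity)
  split_ifs
  · exact le_rfl
  · exact Finset.prod_nonneg fun cp _ => Wt_nonneg hn.r7 hq cp _

/-- Upper bound for `Val`: a configuration in `Val` is unobstructed everywhere, and those over
unbalanced families are few. -/
lemma Val_le (hn : Narrow r k a a' b b' T u w)
    (hc : Function.Injective c) (hc' : Function.Injective c') (P : Finset (ClosedPoint K)) :
    ((Val c c' k a a').ncard : ℝ) ≤ ((AP c c' k a a' b b' P).ncard : ℝ) +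
      2 * (mainX K k u w * eta (Nat.card K) T) := by
  have hr1 : 1 ≤ r := by have := hn.r5; omega
  let E : Set (Fin r → BForm K) → Set (Cfg K r) := fun B => {x : Cfg K r | x.1 ∈ B ∧
    (x.2.1 ∈ Lat c x.1 a ∧ x.2.1 ≠ 0 ∧ IsRelPrime x.2.1.1 x.2.1.2) ∧
    x.2.2 ∈ Lat c' x.1 a' ∧ x.2.2 ≠ 0 ∧ IsRelPrime x.2.2.1 x.2.2.2}
  have h1 := crude_B hn.hu hn.hw (crude_bad hc k b hn.b_lt) (fun g hg => ⟨hg.1, hg.2.1⟩)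
    (c := c) (c' := c')
  have h2 := crude_B hn.hu hn.hw (crude_bad hc' k b' hn.symm.b_lt) (fun g hg => ⟨hg.1, hg.2.1⟩)
    (c := c) (c' := c')
  have hsub : Val c c' k a a' ⊆ AP c c' k a a' b b' P ∪
      (E {g | HomG k g ∧ CoPr g ∧ Lat c g b ≠ ⊥} ∪ E {g | HomG k g ∧ CoPr g ∧ Lat c' g b' ≠ ⊥}) := by
    intro x hx
    obtain ⟨hg, hcp, hs, ht, hN⟩ := Val_props hc hx hr1
    by_cases e1 : Lat c x.1 b = ⊥
    · by_cases e2 : Lat c' x.1 b' = ⊥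
      · exact Or.inl ⟨⟨hg, hcp, e1, e2⟩, hs.1, ht.1, fun cp _ => hN cp⟩
      · exact Or.inr (Or.inr ⟨⟨hg, hcp, e2⟩, hs, ht⟩)
    · exact Or.inr (Or.inl ⟨⟨hg, hcp, e1⟩, hs, ht⟩)
  have f1 := (Set.encard_le_coe_iff_finite_ncard_le.1 h1).1
  have f2 := (Set.encard_le_coe_iff_finite_ncard_le.1 h2).1
  have h3 : (Val c c' k a a').ncard ≤ (AP c c' k a a' b b' P).ncard +
      ((E {g | HomG k g ∧ CoPr g ∧ Lat c g b ≠ ⊥}).ncard +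
      (E {g | HomG k g ∧ CoPr g ∧ Lat c' g b' ≠ ⊥}).ncard) :=
    (Set.ncard_le_ncard hsub ((AP_finite P).union (f1.union f2))).trans
      ((Set.ncard_union_le _ _).trans (Nat.add_le_add_left (Set.ncard_union_le _ _) _))
  have h3' : ((Val c c' k a a').ncard : ℝ) ≤ (AP c c' k a a' b b' P).ncard +
      ((E {g | HomG k g ∧ CoPr g ∧ Lat c g b ≠ ⊥}).ncard +
      (E {g | HomG k g ∧ CoPr g ∧ Lat c' g b' ≠ ⊥}).ncard) := by exact_mod_cast h3
  have key : ∀ N : ℕ, (N : ℝ) ≤ eta (Nat.card K) T * (Nat.card K : ℝ) ^ (∑ i, k i + r) →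
      ((N * Nat.card K ^ (u + w + 4) : ℕ) : ℝ) ≤ mainX K k u w * eta (Nat.card K) T := by
    intro N hN
    unfold mainX
    rw [pow_add _ _ (u + w + 4)]
    push_cast
    calc (N : ℝ) * (Nat.card K : ℝ) ^ (u + w + 4) ≤
        (eta (Nat.card K) T * (Nat.card K : ℝ) ^ (∑ i, k i + r)) * (Nat.card K : ℝ) ^ (u + w + 4) :=
          mul_le_mul_of_nonneg_right hN (by positivity)
      _ = _ := by ring
  have g1 := (ncard_le_real h1).trans (key _ (absorb_bad hn card_one_le))
  have g2 := (ncard_le_real h2).trans (key _ (absorb_bad hn.symm card_one_le))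
  have g1' : ((E {g | HomG k g ∧ CoPr g ∧ Lat c g b ≠ ⊥}).ncard : ℝ) ≤ _ := g1
  have g2' : ((E {g | HomG k g ∧ CoPr g ∧ Lat c' g b' ≠ ⊥}).ncard : ℝ) ≤ _ := g2
  linarith

/-- Balanced configurations whose first pair is zero are few. -/
lemma null_le (hn : Narrow r k a a' b b' T u w) (hc' : Function.Injective c') :
    {x : Cfg K r | Balanced c c' k b b' x.1 ∧ x.2.1 = 0 ∧ x.2.2 ∈ Lat c' x.1 a'}.encard ≤
      ((Nat.card K ^ (∑ i, k i + r) * Nat.card K ^ (w + 2) : ℕ) : ℕ∞) := by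
  refine fl_fib _ Prod.fst {g | HomG k g ∧ Balanced c c' k b b' g}
    (le_trans (Set.encard_le_encard fun g hg => hg.1) (fl_HomG k)) (fun x hx => ⟨hx.1.1, hx.1⟩)
    fun g hg => ?_
  refine le_trans (le_trans (Set.encard_le_encard ?_) (Set.encard_image_le
    (fun t => ((g, ((0 : BForm K × BForm K), t)) : Cfg K r)) (Lat c' g a' : Set _)))
    (Lat_encard_le hn.symm hc' hg.1 hg.2.2.1 hg.2.2.2.2)
  rintro ⟨g', s, t⟩ ⟨⟨hx, hs, ht⟩, rfl⟩
  dsimp only at hs ht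
  subst hs
  exact ⟨t, ht, rfl⟩

/-- Balanced configurations whose first pair vanishes at a place of degree larger than `T`. -/
lemma large_le (hn : Narrow r k a a' b b' T u w) (hc : Function.Injective c)
    (hc' : Function.Injective c') :
    {x : Cfg K r | Balanced c c' k b b' x.1 ∧ x.2.1 ∈ Lat c x.1 a ∧ x.2.1 ≠ 0 ∧
      (∃ cp : ClosedPoint K, T < cpDeg cp ∧ ev cp x.2.1.1 = 0 ∧ ev cp x.2.1.2 = 0) ∧
      x.2.2 ∈ Lat c' x.1 a'}.encard ≤
      ((a * Nat.card K ^ (a + a + 2 - T) * ((Nat.card K * 2 ^ a) ^ r * Nat.card K ^ (w + 2)) : ℕ) :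
        ℕ∞) := by
  refine le_trans (Set.encard_le_encard fun x hx => ?_)
    (crude_i hc k a T (Nat.card K ^ (w + 2)) (fun g => (Lat c' g a' : Set _)) hn.a_lt)
  exact ⟨hx.1.1, hx.1.2.1, Lat_encard_le hn.symm hc' hx.1.1 hx.1.2.1 hx.1.2.2.2, hx.2⟩

/-- Interchanging the two sections of a configuration. -/
def swapCfg (x : Cfg K r) : Cfg K r := (x.1, x.2.swap)

lemma encard_swap {A B : Set (Cfg K r)} {m : ℕ} (h : ∀ x ∈ A, swapCfg x ∈ B)
    (hB : B.encard ≤ (m : ℕ∞)) : A.encard ≤ (m : ℕ∞) := by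
  refine le_trans (le_trans (Set.encard_le_encard fun x hx => ?_) (Set.encard_image_le swapCfg B)) hB
  exact ⟨swapCfg x, h x hx, rfl⟩

/-- Lower bound for `Val`: an unobstructed configuration at `P` can fail to lie in `Val` because of
a zero pair, an obstruction at a place of `mid`, or one at a place of degree larger than `T`. -/
lemma AP_le_Val (hq : 16 ≤ Nat.card K) (hn : Narrow r k a a' b b' T u w)
    (hc : Function.Injective c) (hc' : Function.Injective c')
    (P mid : Finset (ClosedPoint K))
    (hmid : ∀ cp, cp ∉ P → cpDeg cp ≤ T → cp ∈ mid) (hmid' : ∀ cp ∈ mid, cpDeg cp ≤ T) :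
    ((AP c c' k a a' b b' P).ncard : ℝ) ≤ ((Val c c' k a a').ncard : ℝ) + mainX K k u w *
        (∑ cp ∈ mid, (1 - tauFactor (Nat.card K) r (cpDeg cp)) + 5 * eta (Nat.card K) T) := by
  -- `A1`, `A2`: a pair vanishes; `A3`, `A4`: a pair is not primitive at a place of large degree;
  -- `A5`: some `gᵢ` can be enlarged at such a place; `M`: an obstruction at a place of `mid`
  let A1 : Set (Cfg K r) := {x | Balanced c c' k b b' x.1 ∧ x.2.1 = 0 ∧ x.2.2 ∈ Lat c' x.1 a'}
  let A2 : Set (Cfg K r) := {x | Balanced c c' k b b' x.1 ∧ x.2.2 = 0 ∧ x.2.1 ∈ Lat c x.1 a}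
  let A3 : Set (Cfg K r) := {x | Balanced c c' k b b' x.1 ∧ x.2.1 ∈ Lat c x.1 a ∧ x.2.1 ≠ 0 ∧
      (∃ cp : ClosedPoint K, T < cpDeg cp ∧ ev cp x.2.1.1 = 0 ∧ ev cp x.2.1.2 = 0) ∧
      x.2.2 ∈ Lat c' x.1 a'}
  let A4 : Set (Cfg K r) := {x | Balanced c c' k b b' x.1 ∧ x.2.2 ∈ Lat c' x.1 a' ∧ x.2.2 ≠ 0 ∧
      (∃ cp : ClosedPoint K, T < cpDeg cp ∧ ev cp x.2.2.1 = 0 ∧ ev cp x.2.2.2 = 0) ∧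
      x.2.1 ∈ Lat c x.1 a}
  let A5 : Set (Cfg K r) := {x | HomG k x.1 ∧ (x.2.1 ∈ Lat c x.1 a ∧ (∀ i, lin (c i) x.2.1 ≠ 0) ∧
      IsRelPrime x.2.1.1 x.2.1.2) ∧
      (x.2.2 ∈ Lat c' x.1 a' ∧ x.2.2 ≠ 0 ∧ IsRelPrime x.2.2.1 x.2.2.2) ∧
      ∃ (i : Fin r) (cp : ClosedPoint K), T < cpDeg cp ∧ Phi cp * x.1 i ∣ lin (c i) x.2.1 ∧
        Phi cp * x.1 i ∣ lin (c' i) x.2.2}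
  let M : Set (Cfg K r) := ⋃ cp ∈ mid, AP c c' k a a' b b' ∅ \ AP c c' k a a' b b' {cp}
  have sw : ∀ g : Fin r → BForm K, Balanced c c' k b b' g → Balanced c' c k b' b g :=
    fun g hg => ⟨hg.1, hg.2.1, hg.2.2.2, hg.2.2.1⟩
  have hq1 : 1 ≤ Nat.card K := card_one_le
  have e1 := null_le (K := K) (c := c) hn hc'
  have e2' := null_le (K := K) (c := c') hn.symm hc
  have e2 := encard_swap (A := A2) (B := {x | Balanced c' c k b' b x.1 ∧ x.2.1 = 0 ∧ x.2.2 ∈ Lat c x.1 a})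
    (fun x hx => ⟨sw _ hx.1, hx.2⟩) e2'
  have e3 := large_le (K := K) hn hc hc'
  have e4' := large_le (K := K) hn.symm hc' hc
  have e4 := encard_swap (A := A4) (B := {x | Balanced c' c k b' b x.1 ∧ x.2.1 ∈ Lat c' x.1 a' ∧ x.2.1 ≠ 0 ∧
      (∃ cp : ClosedPoint K, T < cpDeg cp ∧ ev cp x.2.1.1 = 0 ∧ ev cp x.2.1.2 = 0) ∧
      x.2.2 ∈ Lat c x.1 a})
    (fun x hx => ⟨sw _ hx.1, hx.2⟩) e4'
  have e5 := crude_iii (c' := c') hc k a a' T (w + 1 - T) w hn.hw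
    (by have := hn.w8; omega) (by have := hn.w8; omega)
  have f1 := (Set.encard_le_coe_iff_finite_ncard_le.1 e1).1
  have f2 := (Set.encard_le_coe_iff_finite_ncard_le.1 e2).1
  have f3 := (Set.encard_le_coe_iff_finite_ncard_le.1 e3).1
  have f4 := (Set.encard_le_coe_iff_finite_ncard_le.1 e4).1
  have f5 := (Set.encard_le_coe_iff_finite_ncard_le.1 e5).1
  have mX : eta (Nat.card K) T * (Nat.card K : ℝ) ^ (∑ i, k i + r + (u + w + 4)) =
      mainX K k u w * eta (Nat.card K) T := by unfold mainX; ring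
  have mX' : eta (Nat.card K) T * (Nat.card K : ℝ) ^ (∑ i, k i + r + (w + u + 4)) =
      mainX K k u w * eta (Nat.card K) T := by rw [← mainX_symm]; unfold mainX; ring
  have g1 : (A1.ncard : ℝ) ≤ mainX K k u w * eta (Nat.card K) T :=
    mX ▸ (ncard_le_real e1).trans (absorb_null hn hq1)
  have g2 : (A2.ncard : ℝ) ≤ mainX K k u w * eta (Nat.card K) T :=
    mX' ▸ (ncard_le_real e2).trans (absorb_null hn.symm hq1)
  have g3 : (A3.ncard : ℝ) ≤ mainX K k u w * eta (Nat.card K) T :=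
    mX ▸ (ncard_le_real e3).trans (absorb_i hn hq1)
  have g4 : (A4.ncard : ℝ) ≤ mainX K k u w * eta (Nat.card K) T :=
    mX' ▸ (ncard_le_real e4).trans (absorb_i hn.symm hq1)
  have g5 : (A5.ncard : ℝ) ≤ mainX K k u w * eta (Nat.card K) T :=
    mX ▸ (ncard_le_real e5).trans (absorb_iii hn hq1)
  have fM : M.Finite := Set.Finite.biUnion mid.finite_toSet fun cp _ => (AP_finite _).sdiff
  have gM : (M.ncard : ℝ) ≤
      mainX K k u w * ∑ cp ∈ mid, (1 - tauFactor (Nat.card K) r (cpDeg cp)) := by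
    have h1 : M.ncard ≤ ∑ cp ∈ mid, (AP c c' k a a' b b' ∅ \ AP c c' k a a' b b' {cp}).ncard :=
      Finset.set_ncard_biUnion_le _ _
    rw [Finset.mul_sum]
    have h2 : (M.ncard : ℝ) ≤
        ∑ cp ∈ mid, ((AP c c' k a a' b b' ∅ \ AP c c' k a a' b b' {cp}).ncard : ℝ) := by
      exact_mod_cast h1
    exact h2.trans (Finset.sum_le_sum fun cp hcp => AP_diff hq hn hc hc' cp (hmid' cp hcp))
  have hsub : AP c c' k a a' b b' P ⊆ Val c c' k a a' ∪ (M ∪ (A1 ∪ (A2 ∪ (A3 ∪ (A4 ∪ A5))))) := by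
    intro x hx
    by_cases z1 : x.2.1 = 0
    · exact Or.inr (Or.inr (Or.inl ⟨hx.1, z1, hx.2.2.1⟩))
    by_cases z2 : x.2.2 = 0
    · exact Or.inr (Or.inr (Or.inr (Or.inl ⟨hx.1, z2, hx.2.1⟩)))
    by_cases zM : ∃ cp ∈ mid, ¬ NoErr c c' x.1 cp x.2
    · obtain ⟨cp, h1, h2⟩ := zM
      refine Or.inr (Or.inl (Set.mem_biUnion h1 ⟨AP_anti (Finset.empty_subset P) hx, fun h => ?_⟩))
      exact h2 (h.2.2.2 cp (Finset.mem_singleton_self cp))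
    push Not at zM
    have hsm : ∀ cp, cpDeg cp ≤ T → NoErr c c' x.1 cp x.2 := fun cp h => by
      by_cases hcp : cp ∈ P
      · exact hx.2.2.2 cp hcp
      · exact zM cp (hmid cp hcp h)
    by_cases z3 : ∃ cp : ClosedPoint K, T < cpDeg cp ∧ ev cp x.2.1.1 = 0 ∧ ev cp x.2.1.2 = 0
    · exact Or.inr (Or.inr (Or.inr (Or.inr (Or.inl ⟨hx.1, hx.2.1, z1, z3, hx.2.2.1⟩))))
    by_cases z4 : ∃ cp : ClosedPoint K, T < cpDeg cp ∧ ev cp x.2.2.1 = 0 ∧ ev cp x.2.2.2 = 0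
    · exact Or.inr (Or.inr (Or.inr (Or.inr (Or.inr (Or.inl ⟨hx.1, hx.2.2.1, z2, z4, hx.2.1⟩)))))
    have hs : ∀ cp : ClosedPoint K, ¬ (ev cp x.2.1.1 = 0 ∧ ev cp x.2.1.2 = 0) := fun cp h => by
      by_cases hcp : cpDeg cp ≤ T
      · exact (hsm cp hcp).1 h
      · exact z3 ⟨cp, by omega, h⟩
    have ht : ∀ cp : ClosedPoint K, ¬ (ev cp x.2.2.1 = 0 ∧ ev cp x.2.2.2 = 0) := fun cp h => by
      by_cases hcp : cpDeg cp ≤ T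
      · exact (hsm cp hcp).2.1 h
      · exact z4 ⟨cp, by omega, h⟩
    by_cases z5 : ∃ (i : Fin r) (cp : ClosedPoint K), T < cpDeg cp ∧
        Phi cp * x.1 i ∣ lin (c i) x.2.1 ∧ Phi cp * x.1 i ∣ lin (c' i) x.2.2
    · refine Or.inr (Or.inr (Or.inr (Or.inr (Or.inr (Or.inr ⟨hx.1.1, ⟨hx.2.1, fun i => ?_, ?_⟩,
        ⟨hx.2.2.1, z2, ?_⟩, z5⟩)))))
      · exact lin_ne_zero hc hx.1.1 hx.1.2.1.2 hx.2.1 z1 i (hn.a_lt i)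
      · exact relPrime_of_noCommon hx.2.1.1 hx.2.1.2.1 z1 hs
      · exact relPrime_of_noCommon hx.2.2.1.1 hx.2.2.1.2.1 z2 ht
    · refine Or.inl (mem_Val hc hc' hn.a_lt hn.symm.a_lt hx.1 hx.2.1 hx.2.2.1 z1 z2 fun cp =>
        ⟨hs cp, ht cp, fun i h => ?_⟩)
      by_cases hcp : cpDeg cp ≤ T
      · exact (hsm cp hcp).2.2 i h
      · exact z5 ⟨i, cp, by omega, h⟩
  have hfin := (Val_finite (c := c) (c' := c') (k := k) (a := a) (a' := a')).union
    (fM.union (f1.union (f2.union (f3.union (f4.union f5)))))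
  have h1 : (AP c c' k a a' b b' P).ncard ≤ (Val c c' k a a').ncard + (M.ncard + (A1.ncard +
      (A2.ncard + (A3.ncard + (A4.ncard + A5.ncard))))) := by
    refine (Set.ncard_le_ncard hsub hfin).trans ((Set.ncard_union_le _ _).trans
      (Nat.add_le_add_left ((Set.ncard_union_le _ _).trans
      (Nat.add_le_add_left ((Set.ncard_union_le _ _).trans
      (Nat.add_le_add_left ((Set.ncard_union_le _ _).trans
      (Nat.add_le_add_left ((Set.ncard_union_le _ _).trans
      (Nat.add_le_add_left (Set.ncard_union_le _ _) _)) _)) _)) _)) _))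
  have h2 : ((AP c c' k a a' b b' P).ncard : ℝ) ≤ (Val c c' k a a').ncard + (M.ncard + (A1.ncard +
      (A2.ncard + (A3.ncard + (A4.ncard + A5.ncard))))) := by exact_mod_cast h1
  linarith

/-- The count of elements of `Val` agrees with the truncated Euler product up to small errors. -/
lemma Val_main (hq : 16 ≤ Nat.card K) (hn : Narrow r k a a' b b' T u w)
    (hc : Function.Injective c) (hc' : Function.Injective c')
    (P mid : Finset (ClosedPoint K)) (hP : ∑ cp ∈ P, cpDeg cp ≤ T + 1)
    (hmid : ∀ cp, cp ∉ P → cpDeg cp ≤ T → cp ∈ mid) (hmid' : ∀ cp ∈ mid, cpDeg cp ≤ T) :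
    |((Val c c' k a a').ncard : ℝ) / mainX K k u w -
      ∏ cp ∈ P, tauFactor (Nat.card K) r (cpDeg cp)| ≤
      2 * ∑ cp ∈ mid, (1 - tauFactor (Nat.card K) r (cpDeg cp)) + 63 * eta (Nat.card K) T := by
  have hX := mainX_pos (K := K) (k := k) (u := u) (w := w)
  have h1 := not_balanced_sum hq hn hc hc' P mid hP hmid hmid'
  have h2 := AP_le_Val hq hn hc hc' P mid hmid hmid'
  have h3 := AP_le hq hn hc hc' P hP
  have h4 := Val_le hn hc hc' P
  have hS : 0 ≤ ∑ cp ∈ mid, (1 - tauFactor (Nat.card K) r (cpDeg cp)) :=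
    Finset.sum_nonneg fun cp _ => sub_nonneg.2 (tau_le_one hq cp)
  have hE := eta_nonneg (Nat.card K) T
  set X := mainX K k u w
  set Y : ℝ := ((Val c c' k a a').ncard : ℝ)
  set S := ∑ cp ∈ mid, (1 - tauFactor (Nat.card K) r (cpDeg cp))
  set Pr := ∏ cp ∈ P, tauFactor (Nat.card K) r (cpDeg cp)
  rw [abs_le]
  constructor
  · rw [le_sub_iff_add_le, le_div_iff₀ hX]
    linarith
  · rw [sub_le_iff_le_add, div_le_iff₀ hX]
    have := mul_nonneg hX.le hS
    have := mul_nonneg hX.le hE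
    linarith

end Final
end ManinDP

/-! ### Passing from configurations to morphisms -/

namespace ManinDP
open MvPolynomial

section Fibre
variable {K : Type} [Field K] [Finite K] {r : ℕ} {c c' : Fin r → K}
  {a a' : ℕ} {k : Fin r → ℕ}

/-- Each morphism lifts to exactly `(q-1)^r` points of `Val`: the gcds are determined up to
nonzero constants. -/
lemma Val_ncard : (Val c c' k a a').ncard =
    (Nat.card K - 1) ^ r * (MtildeSet K r c c' a a' k).ncard := by
  classical
  choose g hg using fun m : MtildeSet K r c c' a a' k => fun i : Fin r =>
    (m.2.2.2.2.2.2.2 i).2.2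
  have hg0 : ∀ m i, g m i ≠ 0 := fun m i h =>
    (m.2.2.2.2.2.2.2 i).1 (zero_dvd_iff.1 (h ▸ (hg m i).2.1))
  let F : MtildeSet K r c c' a a' k × (Fin r → Kˣ) → Val c c' k a a' := fun p =>
    ⟨(fun i => C (p.2 i : K) * g p.1 i, ((p.1.1.1, p.1.1.2.1), (p.1.1.2.2.1, p.1.1.2.2.2))), by
      have hu : ∀ i, IsUnit (C (p.2 i : K) : BForm K) := fun i => (p.2 i).isUnit.map C
      refine ⟨fun i => ?_, p.1.2, fun i => ⟨?_, ?_, fun d h1 h2 => ?_⟩⟩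
      · exact (hg p.1 i).1.C_mul _
      · exact (hu i).mul_left_dvd.2 (hg p.1 i).2.1
      · exact (hu i).mul_left_dvd.2 (hg p.1 i).2.2.1
      · exact (hu i).dvd_mul_left.2 ((hg p.1 i).2.2.2 d h1 h2)⟩
  have hF : Function.Bijective F := by
    constructor
    · rintro ⟨m, l⟩ ⟨m', l'⟩ h
      have h' := congrArg Subtype.val h
      simp only [F, Prod.mk.injEq] at h'
      have hm : m = m' := Subtype.ext (Prod.ext h'.2.1.1 (Prod.ext h'.2.1.2
        (Prod.ext h'.2.2.1 h'.2.2.2)))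
      subst hm
      refine Prod.ext rfl (funext fun i => Units.ext ?_)
      exact C_injective _ _ (mul_right_cancel₀ (hg0 m i) (congrFun h'.1 i))
    · rintro ⟨x, hx⟩
      let m : MtildeSet K r c c' a a' k := ⟨_, hx.2.1⟩
      have : ∀ i, ∃ l : Kˣ, C (l : K) * g m i = x.1 i := fun i => by
        have h1 : g m i ∣ x.1 i := (hx.2.2 i).2.2 _ (hg m i).2.1 (hg m i).2.2.1
        have h2 : x.1 i ∣ g m i := (hg m i).2.2.2 _ (hx.2.2 i).1 (hx.2.2 i).2.1
        obtain ⟨v, hv⟩ := associated_of_dvd_dvd h1 h2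
        obtain ⟨t, ht, h⟩ := MvPolynomial.isUnit_iff_eq_C_of_isReduced.1 v.isUnit
        refine ⟨ht.unit, ?_⟩
        rw [← hv, h, mul_comm]; rfl
      choose l hl using this
      exact ⟨(m, l), Subtype.ext (Prod.ext (funext hl) rfl)⟩
  have h := Nat.card_congr (Equiv.ofBijective F hF)
  rw [Nat.card_prod, Nat.card_pi, Finset.prod_const, Finset.card_univ, Fintype.card_fin,
    Nat.card_units, Nat.card_coe_set_eq, Nat.card_coe_set_eq] at h
  rw [← h, mul_comm]

end Fibre
end ManinDP

/-! ### Convergence of the Euler product -/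

namespace ManinDP
open MvPolynomial

section Euler
variable {K : Type} [Field K] [Finite K] {r : ℕ}

lemma Phi_injective : Function.Injective (Phi : ClosedPoint K → BForm K) := by
  intro x y h
  by_contra hne
  exact ev_Phi_ne hne (h ▸ (ev_eq_zero_iff y (Phi_homog y)).2 dvd_rfl)

/-- There are at most `q^{n+1}` closed points of degree `n`. -/
lemma encard_deg_le (n : ℕ) : {cp : ClosedPoint K | cpDeg cp = n}.encard ≤
    ((Nat.card K ^ (n + 1) : ℕ) : ℕ∞) := by
  refine le_trans ?_ (fl_V (K := K) n)
  exact Set.encard_le_encard_of_injOn (f := Phi) (fun cp h => h ▸ Phi_homog cp)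
    Phi_injective.injOn

lemma finite_deg_le (T : ℕ) : {cp : ClosedPoint K | cpDeg cp ≤ T}.Finite := by
  have : {cp : ClosedPoint K | cpDeg cp ≤ T} ⊆
      ⋃ n ∈ Finset.range (T + 1), {cp : ClosedPoint K | cpDeg cp = n} := fun cp h =>
    Set.mem_biUnion (Finset.mem_range.2 (Nat.lt_succ_of_le h)) rfl
  exact (Set.Finite.biUnion (Finset.finite_toSet _) fun n _ =>
    Set.finite_of_encard_le_coe (encard_deg_le n)).subset this

/-- There are `O(q ^ n)` closed points of degree `n`, so `∑ q ^ (-2 |c|)` converges. -/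
lemma cp_summable (hq : 2 ≤ Nat.card K) :
    Summable fun cp : ClosedPoint K => (((Nat.card K : ℝ) ^ cpDeg cp)⁻¹) ^ 2 := by
  classical
  set q : ℝ := ((Nat.card K : ℕ) : ℝ) with hqd
  have hq2 : (2 : ℝ) ≤ q := by rw [hqd]; exact_mod_cast hq
  have hq0 : 0 < q := by linarith
  have hgeo : Summable fun n : ℕ => q * q⁻¹ ^ n :=
    (summable_geometric_of_lt_one (by positivity)
      (inv_lt_one_of_one_lt₀ (by linarith))).mul_left q
  refine summable_of_sum_le (c := ∑' n : ℕ, q * q⁻¹ ^ n) (fun cp => by positivity) fun s => ?_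
  rw [← Finset.sum_fiberwise_of_maps_to (t := s.image cpDeg) (g := cpDeg)
    (fun x hx => Finset.mem_image_of_mem _ hx)]
  refine le_trans (Finset.sum_le_sum fun n _ => ?_)
    (hgeo.sum_le_tsum (s.image cpDeg) fun n _ => by positivity)
  have h1 : ∀ cp ∈ s.filter (fun cp => cpDeg cp = n), ((q ^ cpDeg cp)⁻¹) ^ 2 = ((q ^ n)⁻¹) ^ 2 :=
    fun cp h => by rw [(Finset.mem_filter.1 h).2]
  rw [Finset.sum_congr rfl h1, Finset.sum_const, nsmul_eq_mul]
  have h2 : (s.filter (fun cp => cpDeg cp = n)).card ≤ Nat.card K ^ (n + 1) := by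
    have := (Set.encard_le_encard (t := {cp : ClosedPoint K | cpDeg cp = n})
      (s := (s.filter (fun cp => cpDeg cp = n) : Finset _)) fun cp h => by
        simpa using (Finset.mem_filter.1 h).2).trans (encard_deg_le n)
    rw [Set.encard_coe_eq_coe_finsetCard] at this
    exact_mod_cast this
  have h3 : ((s.filter (fun cp => cpDeg cp = n)).card : ℝ) ≤ q ^ (n + 1) := by
    rw [hqd]; exact_mod_cast h2
  calc _ ≤ q ^ (n + 1) * ((q ^ n)⁻¹) ^ 2 := by gcongr
    _ = q * q⁻¹ ^ n := by
      rw [inv_pow q n, pow_succ]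
      have := (pow_pos hq0 n).ne'
      generalize q ^ n = y at *
      field_simp

lemma tau_summable (hq : 16 ≤ Nat.card K) (hr : r ≤ 7) :
    Summable fun cp : ClosedPoint K => 1 - tauFactor (Nat.card K) r (cpDeg cp) := by
  refine Summable.of_nonneg_of_le (fun cp => sub_nonneg.2 (tau_le_one hq cp)) (fun cp => ?_)
    ((cp_summable (K := K) (by omega)).mul_left (((r : ℝ) + 2) ^ 2))
  have hp := inv_le_of_card hq cp
  have hp0 : 0 ≤ ((Nat.card K : ℝ) ^ cpDeg cp)⁻¹ := by positivity
  rw [tauFactor_eq]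
  have hr' : (r : ℝ) ≤ 7 := by exact_mod_cast hr
  have := one_sub_tau (r := r) hp0 (by nlinarith)
  linarith

lemma tau_multipliable (hq : 16 ≤ Nat.card K) (hr : r ≤ 7) :
    Multipliable fun cp : ClosedPoint K => tauFactor (Nat.card K) r (cpDeg cp) := by
  have h := Real.multipliable_one_add_of_summable (tau_summable (K := K) hq hr).neg.norm.of_norm
  simpa using h

lemma eta_tendsto {q : ℕ} (hq : 2 ^ 504 < q) : Tendsto (eta q) atTop (nhds 0) := by
  have hq' : (2 : ℝ) ^ 504 < q := by exact_mod_cast hq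
  have hq0 : (0 : ℝ) < q := lt_trans (by positivity) hq'
  have h := (tendsto_pow_atTop_nhds_zero_of_lt_one (r := (2 : ℝ) ^ 504 / q) (by positivity)
    ((div_lt_one hq0).2 hq')).const_mul ((q : ℝ) ^ 7)
  rw [mul_zero] at h
  refine h.congr fun T => ?_
  rw [eta, div_pow, ← pow_mul, mul_div_assoc]

/-- The normalized count of `Val` converges to the Euler product, uniformly over narrow
parameters, as the width `T` grows. -/
lemma Val_limit (hq : 2 ^ 504 < Nat.card K) (hr : r ≤ 7) {δ : ℝ} (hδ : 0 < δ) :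
    ∃ T0 : ℕ, ∀ (c c' : Fin r → K), Function.Injective c → Function.Injective c' →
      ∀ (k : Fin r → ℕ) (a a' b b' T u w : ℕ), T0 ≤ T → Narrow r k a a' b b' T u w →
      |((Val c c' k a a').ncard : ℝ) / mainX K k u w -
        ∏' cp : ClosedPoint K, tauFactor (Nat.card K) r (cpDeg cp)| ≤ δ := by
  classical
  have hq16 : 16 ≤ Nat.card K := by
    have h := Nat.pow_le_pow_right (n := 2) (by norm_num) (show 4 ≤ 504 by norm_num)
    rw [show 16 = 2 ^ 4 by norm_num]
    exact h.trans hq.le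
  have h1 := (tau_multipliable (K := K) hq16 hr).hasProd
  have h1' := Metric.tendsto_atTop.1 h1 (δ / 4) (by positivity)
  obtain ⟨P1, hP1⟩ := h1'
  obtain ⟨P2, hP2⟩ := summable_iff_vanishing_norm.1 (tau_summable (K := K) hq16 hr) (δ / 8)
    (by positivity)
  obtain ⟨T1, hT1⟩ := Metric.tendsto_atTop.1 (eta_tendsto hq) (δ / 252) (by positivity)
  -- `P` is a fixed set of places capturing the product up to `δ / 4`; all further places of degree
  -- at most `T` together contribute at most `δ / 8`
  let P := P1 ∪ P2
  refine ⟨max T1 (∑ cp ∈ P, cpDeg cp), fun c c' hc hc' k a a' b b' T u w hT hn => ?_⟩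
  have hTa := le_trans (le_max_left _ _) hT
  have hTb := le_trans (le_max_right _ _) hT
  let mid := (finite_deg_le (K := K) T).toFinset \ P
  have hm := Val_main hq16 hn hc hc' P mid (by omega)
    (fun cp h h' => Finset.mem_sdiff.2 ⟨by simpa using h', h⟩)
    (fun cp h => by simpa using (Finset.mem_sdiff.1 h).1)
  have e1 := hP1 P Finset.subset_union_left
  rw [Real.dist_eq] at e1
  have e2 := hP2 mid (Finset.disjoint_of_subset_right Finset.subset_union_right
    Finset.sdiff_disjoint)
  have e3 := hT1 T hTa
  rw [Real.dist_eq, sub_zero] at e3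
  have e2' := (abs_lt.1 e2).2
  have e3' := (abs_lt.1 e3).2
  have := abs_sub_le (((Val c c' k a a').ncard : ℝ) / mainX K k u w)
    (∏ cp ∈ P, tauFactor (Nat.card K) r (cpDeg cp))
    (∏' cp : ClosedPoint K, tauFactor (Nat.card K) r (cpDeg cp))
  simp only at e1
  linarith

end Euler
end ManinDP

/-! ### The cone and its nefness -/

namespace ManinDP

section Cone
variable {r : ℕ}

/-- The opening `ε = (1 - 1/1000)/(r+2)` of the cone: close enough to the largest possible value
`1/(r+2)` to force all coordinates `2a - Σk`, `2a' - Σk`, `kᵢ` to be nearly equal. -/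
def eps (r : ℕ) : ℚ := 999 / (1000 * ((r : ℚ) + 2))

lemma eps_pos : 0 < eps r := by unfold eps; positivity

/-- The inequalities defining the cone, over the natural numbers: `u = 2a - Σk` and
`w = 2a' - Σk` together with the `kᵢ` are the coordinates of the cone, with sum the height. -/
def InCone (r : ℕ) (x : ℕ × ℕ × (Fin r → ℕ)) (u w : ℕ) : Prop :=
  2 * x.1 = ∑ i, x.2.2 i + u ∧ 2 * x.2.1 = ∑ i, x.2.2 i + w ∧
  999 * (u + w + ∑ i, x.2.2 i) ≤ 1000 * (r + 2) * u ∧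
  999 * (u + w + ∑ i, x.2.2 i) ≤ 1000 * (r + 2) * w ∧
  ∀ i, 999 * (u + w + ∑ i, x.2.2 i) ≤ 1000 * (r + 2) * x.2.2 i

lemma InCone.hN_eq {x : ℕ × ℕ × (Fin r → ℕ)} {u w : ℕ} (h : InCone r x u w) :
    hN r x = u + w + ∑ i, x.2.2 i := by
  obtain ⟨h1, h2, -⟩ := h
  unfold hN
  omega

lemma InCone.hQ_eq {x : ℕ × ℕ × (Fin r → ℕ)} {u w : ℕ} (h : InCone r x u w) :
    hQ r x = hN r x := by
  rw [h.hN_eq]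
  obtain ⟨h1, h2, -⟩ := h
  have h1' : (2 : ℚ) * x.1 = ∑ i, (x.2.2 i : ℚ) + u := by exact_mod_cast h1
  have h2' : (2 : ℚ) * x.2.1 = ∑ i, (x.2.2 i : ℚ) + w := by exact_mod_cast h2
  unfold hQ
  push_cast
  linarith

lemma sum_filter_two {M : Type*} [AddCommMonoid M] (f : Fin (r + 2) → M) :
    ∑ i ∈ Finset.univ.filter (fun i : Fin (r + 2) => 2 ≤ (i : ℕ)), f i =
      ∑ i : Fin r, f i.succ.succ := by
  rw [Finset.sum_filter, Fin.sum_univ_succ, Fin.sum_univ_succ]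
  simp

lemma vecOf_zero (a a' : ℕ) (k : Fin r → ℕ) : vecOf r a a' k 0 = a' := by simp [vecOf]

lemma vecOf_one (a a' : ℕ) (k : Fin r → ℕ) : vecOf r a a' k 1 = a := by simp [vecOf]

lemma vecOf_succ (a a' : ℕ) (k : Fin r → ℕ) (i : Fin r) :
    vecOf r a a' k i.succ.succ = -(k i : ℤ) := by simp [vecOf]

/-- Bounds for the coordinates of `(-1)`-classes on a blow-up of `ℙ¹ × ℙ¹` in at most
seven points. -/
lemma minusOne_bounds (hr7 : r ≤ 7) {x y : ℤ} {m : Fin r → ℤ}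
    (h1 : 2 * (x * y) + 1 = ∑ i, m i ^ 2) (h2 : ∑ i, m i = 1 - 2 * (x + y)) :
    0 ≤ x ∧ 0 ≤ y ∧ ∀ i, -(x + y + 1) ≤ m i := by
  have hS : 0 ≤ ∑ i, m i ^ 2 := Finset.sum_nonneg fun i _ => sq_nonneg _
  have hxy : 0 ≤ x * y := by omega
  have hcs := sq_sum_le_card_mul_sum_sq (s := (Finset.univ : Finset (Fin r))) (f := m)
  rw [h2, ← h1, Finset.card_univ, Fintype.card_fin] at hcs
  have hr7' : (r : ℤ) ≤ 7 := by exact_mod_cast hr7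
  have h4 : 4 * (x * y) ≤ (x + y) ^ 2 := by nlinarith [sq_nonneg (x - y)]
  have h5 : (1 - 2 * (x + y)) ^ 2 ≤ 7 * (2 * (x * y) + 1) :=
    hcs.trans (mul_le_mul_of_nonneg_right hr7' (by omega))
  have hn : 0 ≤ x + y := by
    by_contra hneg
    push Not at hneg
    have h6 : -1 ≤ x + y := by nlinarith
    have h7 : x + y = -1 := by omega
    rw [h7] at h4 h5
    have : x * y = 0 := by omega
    rw [this] at h5
    norm_num at h5
  have hx : 0 ≤ x := by
    by_contra hneg
    push Not at hneg
    have : 0 < y := by omega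
    nlinarith
  have hy : 0 ≤ y := by
    by_contra hneg
    push Not at hneg
    have : 0 < x := by omega
    nlinarith
  refine ⟨hx, hy, fun i => ?_⟩
  have h8 : m i ^ 2 ≤ ∑ i, m i ^ 2 :=
    Finset.single_le_sum (fun i _ => sq_nonneg (m i)) (Finset.mem_univ i)
  have h9 : m i ^ 2 ≤ (x + y + 1) ^ 2 := by nlinarith
  exact (abs_le_of_sq_le_sq' h9 (by omega)).1

/-- In the cone, nefness is automatic. -/
lemma InCone.nef (hr5 : 5 ≤ r) (hr7 : r ≤ 7) {x : ℕ × ℕ × (Fin r → ℕ)} {u w : ℕ}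
    (h : InCone r x u w) : nefVec r (vecOf r x.1 x.2.1 x.2.2) := by
  obtain ⟨a, a', k⟩ := x
  intro v hv
  obtain ⟨hv1, hv2⟩ := hv
  obtain ⟨h1, h2, h3, h4, h5⟩ := h
  simp only [inter, sum_filter_two, vecOf_zero, vecOf_one, vecOf_succ] at hv1 hv2 h1 h2 h3 h4 h5 ⊢
  simp only [antiK] at hv2
  simp at hv2
  set X := v 0
  set Y := v 1
  set m : Fin r → ℤ := fun i => v i.succ.succ with hm
  have e1 : 2 * (X * Y) + 1 = ∑ i, m i ^ 2 := by
    simp only [hm, sq]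
    linarith [mul_comm X Y]
  have e2 : ∑ i, m i = 1 - 2 * (X + Y) := by
    simp only [hm]
    linarith
  obtain ⟨hx, hy, hb⟩ := minusOne_bounds hr7 e1 e2
  simp only [neg_mul, Finset.sum_neg_distrib, sub_neg_eq_add]
  change 0 ≤ (a' : ℤ) * Y + a * X + ∑ i, (k i : ℤ) * m i
  have H : (0 : ℤ) ≤ u + w + ∑ i, (k i : ℤ) := by positivity
  set S : ℤ := ∑ i, (k i : ℤ) with hS
  have h1' : 2 * (a : ℤ) = S + u := by rw [hS]; exact_mod_cast h1
  have h2' : 2 * (a' : ℤ) = S + w := by rw [hS]; exact_mod_cast h2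
  set R : ℤ := 1000 * ((r : ℤ) + 2) with hR
  have h3' : 999 * (u + w + S) ≤ R * u := by rw [hS, hR]; exact_mod_cast h3
  have h4' : 999 * (u + w + S) ≤ R * w := by rw [hS, hR]; exact_mod_cast h4
  have h5' : ∀ i, 999 * (u + w + S) ≤ R * k i := fun i => by
    have := h5 i; rw [hS, hR]; exact_mod_cast this
  set E : ℤ := 999 * (u + w + S) with hE
  -- the excess of `kᵢ` over its minimal value, weighted by the lower bound for `m i`
  have h6 : ∑ i, (R * k i - E) * (-(X + Y + 1)) ≤ ∑ i, (R * k i - E) * m i :=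
    Finset.sum_le_sum fun i _ => mul_le_mul_of_nonneg_left (hb i) (sub_nonneg.2 (h5' i))
  have h7 : ∑ i, (R * (k i : ℤ) - E) = R * S - r * E := by
    rw [Finset.sum_sub_distrib, ← Finset.mul_sum]; simp [hS]
  rw [← Finset.sum_mul, h7] at h6
  have h8 : ∑ i, (R * (k i : ℤ) - E) * m i = R * ∑ i, (k i : ℤ) * m i - E * (1 - 2 * (X + Y)) := by
    rw [← e2, Finset.mul_sum, Finset.mul_sum, ← Finset.sum_sub_distrib]
    exact Finset.sum_congr rfl fun i _ => by ring
  rw [h8] at h6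
  have hr5' : (5 : ℤ) ≤ r := by exact_mod_cast hr5
  have hr7' : (r : ℤ) ≤ 7 := by exact_mod_cast hr7
  have hRpos : 0 < R := by rw [hR]; omega
  have h9 : 0 ≤ (R * u - E) * X := mul_nonneg (by linarith) hx
  have h10 : 0 ≤ (R * w - E) * Y := mul_nonneg (by linarith) hy
  -- the total excess is a thousandth of `R` times the height
  have h11 : R * S - r * E ≤ R * (u + w + S) - (r + 2) * E := by linarith
  have h12 : 0 ≤ R * S - r * E := by
    rw [← h7]
    exact Finset.sum_nonneg fun i _ => sub_nonneg.2 (h5' i)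
  have h13 : R * (u + w + S) - (r + 2) * E = (r + 2) * (u + w + S) := by rw [hR, hE]; ring
  have h14 : (r + 2) * (u + w + S) ≤ E := by rw [hE]; nlinarith
  have hn : 0 ≤ X + Y := by omega
  have hE0 : 0 ≤ E := by rw [hE]; positivity
  clear_value E R S m X Y
  have key : 0 ≤ R * (2 * (a' * Y + a * X + ∑ i, (k i : ℤ) * m i)) := by
    have : R * (2 * (a' * Y + a * X + ∑ i, (k i : ℤ) * m i)) =
        (R * S - r * E) * (X + Y) + (R * w - E) * Y + (R * u - E) * X +
        (r + 1) * E * (X + Y) + 2 * (R * ∑ i, (k i : ℤ) * m i) := by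
      linear_combination R * Y * h2' + R * X * h1'
    rw [this]
    have h15 : 0 ≤ (R * S - r * E) * (X + Y) := mul_nonneg h12 hn
    have h16 : (R * S - r * E) * (X + Y + 1) ≤ E * (X + Y + 1) :=
      mul_le_mul_of_nonneg_right (by linarith) (by omega)
    have h17 : 0 ≤ E * (X + Y) := mul_nonneg hE0 hn
    have h18 : 0 ≤ (r - 5 : ℤ) * (E * (X + Y)) := mul_nonneg (by omega) h17
    linarith
  have := (mul_nonneg_iff_of_pos_left hRpos).1 key
  linarith

/-- For this opening the cone is given by the inequalities of `InCone` alone: nefness follows from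
them. -/
lemma mem_coneSet (hr5 : 5 ≤ r) (hr7 : r ≤ 7) {x : ℕ × ℕ × (Fin r → ℕ)} {d : ℕ} :
    x ∈ coneSet r (eps r) (eps r) d ↔
      (∃ u w, InCone r x u w) ∧ 0 < hN r x ∧ hN r x ≤ d := by
  have hD : (0 : ℚ) < 1000 * ((r : ℚ) + 2) := by positivity
  have he : ∀ t y : ℚ, eps r * t ≤ y ↔ 999 * t ≤ 1000 * ((r : ℚ) + 2) * y := fun t y => by
    rw [eps, div_mul_eq_mul_div, div_le_iff₀ hD, mul_comm y]
  constructor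
  · rintro ⟨-, h1, h2, h3, h4, h5⟩
    have e1 : (0 : ℚ) ≤ 2 * x.1 - ∑ i, (x.2.2 i : ℚ) :=
      le_trans (mul_nonneg eps_pos.le h4.le) h1
    have e2 : (0 : ℚ) ≤ 2 * x.2.1 - ∑ i, (x.2.2 i : ℚ) :=
      le_trans (mul_nonneg eps_pos.le h4.le) h2
    have e1' : ∑ i, x.2.2 i ≤ 2 * x.1 := by
      have : ((∑ i, x.2.2 i : ℕ) : ℚ) ≤ ((2 * x.1 : ℕ) : ℚ) := by push_cast; linarith
      exact_mod_cast this
    have e2' : ∑ i, x.2.2 i ≤ 2 * x.2.1 := by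
      have : ((∑ i, x.2.2 i : ℕ) : ℚ) ≤ ((2 * x.2.1 : ℕ) : ℚ) := by push_cast; linarith
      exact_mod_cast this
    obtain ⟨u, hu⟩ := Nat.exists_eq_add_of_le e1'
    obtain ⟨w, hw⟩ := Nat.exists_eq_add_of_le e2'
    have hu' : 2 * (x.1 : ℚ) = ∑ i, (x.2.2 i : ℚ) + u := by exact_mod_cast hu
    have hw' : 2 * (x.2.1 : ℚ) = ∑ i, (x.2.2 i : ℚ) + w := by exact_mod_cast hw
    have hh : hQ r x = u + w + ∑ i, (x.2.2 i : ℚ) := by unfold hQ; linarith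
    rw [he, hh] at h1 h2
    have hc : InCone r x u w := by
      refine ⟨hu, hw, ?_, ?_, fun i => ?_⟩
      · rw [hu', add_sub_cancel_left] at h1; exact_mod_cast h1
      · rw [hw', add_sub_cancel_left] at h2; exact_mod_cast h2
      · have := h3 i; rw [he, hh] at this; exact_mod_cast this
    rw [hc.hQ_eq] at h4 h5
    exact ⟨⟨u, w, hc⟩, by exact_mod_cast h4, by exact_mod_cast h5⟩
  · rintro ⟨⟨u, w, h⟩, h4, h5⟩
    have hu' : 2 * (x.1 : ℚ) = ∑ i, (x.2.2 i : ℚ) + u := by exact_mod_cast h.1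
    have hw' : 2 * (x.2.1 : ℚ) = ∑ i, (x.2.2 i : ℚ) + w := by exact_mod_cast h.2.1
    refine ⟨h.nef hr5 hr7, ?_, ?_, fun i => ?_, ?_, ?_⟩
    · rw [he, h.hQ_eq, h.hN_eq, hu', add_sub_cancel_left]; exact_mod_cast h.2.2.1
    · rw [he, h.hQ_eq, h.hN_eq, hw', add_sub_cancel_left]; exact_mod_cast h.2.2.2.1
    · rw [he, h.hQ_eq, h.hN_eq]; exact_mod_cast h.2.2.2.2 i
    · rw [h.hQ_eq]; exact_mod_cast h4
    · rw [h.hQ_eq]; exact_mod_cast h5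

end Cone
end ManinDP

/-! ### Pointwise asymptotics in the cone -/

namespace ManinDP

section Pointwise
variable {r : ℕ}

/-- The coordinates of a point of the cone of large height lie in a window `[8T, 9T]`. -/
lemma InCone.narrow (hr5 : 5 ≤ r) (hr7 : r ≤ 7) {x : ℕ × ℕ × (Fin r → ℕ)} {u w T0 : ℕ}
    (h : InCone r x u w) (hT0 : 1 ≤ T0) (hH : 1000 * T0 ≤ hN r x) :
    ∃ T b b', T0 ≤ T ∧ Narrow r x.2.2 x.1 x.2.1 b b' T u w := by
  obtain ⟨a, a', k⟩ := x
  rw [h.hN_eq] at hH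
  obtain ⟨h1, h2, h3, h4, h5⟩ := h
  simp only at h1 h2 h3 h4 h5 hH ⊢
  have hr : r = 5 ∨ r = 6 ∨ r = 7 := by omega
  have hup : ∀ i, 1000 * (r + 2) * k i + r * (999 * (u + w + ∑ i, k i)) ≤
      1000 * (r + 2) * ∑ i, k i + 999 * (u + w + ∑ i, k i) := by
    intro i
    have e1 := Finset.single_le_sum (f := fun j => 1000 * ((r : ℤ) + 2) * k j -
      999 * (u + w + ∑ i, (k i : ℤ))) (fun j _ => sub_nonneg.2 (by exact_mod_cast h5 j))
      (Finset.mem_univ i)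
    rw [Finset.sum_sub_distrib, ← Finset.mul_sum] at e1
    simp only [Finset.sum_const, Finset.card_univ, Fintype.card_fin, nsmul_eq_mul] at e1
    have e2 : 1000 * ((r : ℤ) + 2) * k i + r * (999 * (u + w + ∑ i, (k i : ℤ))) ≤
      1000 * (r + 2) * ∑ i, (k i : ℤ) + 999 * (u + w + ∑ i, (k i : ℤ)) := by linarith
    exact_mod_cast e2
  have hlow : r * (999 * (u + w + ∑ i, k i)) ≤ 1000 * (r + 2) * ∑ i, k i := by
    have e1 := Finset.sum_le_sum fun (i : Fin r) (_ : i ∈ Finset.univ) => h5 i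
    rw [Finset.sum_const, Finset.card_univ, Fintype.card_fin, smul_eq_mul,
      ← Finset.mul_sum] at e1
    exact e1
  generalize hK : ∑ i, k i = S at *
  -- an eighth of the common lower bound for `u`, `w` and the `k i`
  obtain ⟨T, hT⟩ : ∃ T, T = 999 * (u + w + S) / (8000 * (r + 2)) := ⟨_, rfl⟩
  have hu8 : 8 * T ≤ u := by rcases hr with rfl | rfl | rfl <;> omega
  have hw8 : 8 * T ≤ w := by rcases hr with rfl | rfl | rfl <;> omega
  have hk8 : ∀ i, 8 * T ≤ k i := fun i => by
    have := h5 i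
    rcases hr with rfl | rfl | rfl <;> omega
  have hu9 : u ≤ 9 * T := by rcases hr with rfl | rfl | rfl <;> omega
  have hw9 : w ≤ 9 * T := by rcases hr with rfl | rfl | rfl <;> omega
  have hk9 : ∀ i, k i ≤ 9 * T := fun i => by
    have := hup i
    rcases hr with rfl | rfl | rfl <;> omega
  have hTT : T0 ≤ T := by rcases hr with rfl | rfl | rfl <;> omega
  have hS : 9 * T ≤ S := by rcases hr with rfl | rfl | rfl <;> omega
  refine ⟨T, S + T - a, S + T - a', hTT, ⟨hr5, hr7, by omega, ?_, ?_, ?_, ?_, hk8, hk9, hu8, hu9,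
    hw8, hw9⟩⟩ <;> rw [hK] <;> omega

variable {K : Type} [Field K] [Finite K]

/-- The number of morphisms of a given class `α`, normalized by `q ^ h(α)`. -/
def nrm (c c' : Fin r → K) (x : ℕ × ℕ × (Fin r → ℕ)) : ℝ :=
  (((Nat.card K : ℝ) - 1) ^ 2)⁻¹ * ((MtildeSet K r c c' x.1 x.2.1 x.2.2).ncard : ℝ) /
    (Nat.card K : ℝ) ^ hN r x

lemma nrm_nonneg (c c' : Fin r → K) (x : ℕ × ℕ × (Fin r → ℕ)) : 0 ≤ nrm c c' x := by
  unfold nrm; positivity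

/-- The normalized number of morphisms of a class in the cone tends to the Tamagawa number as
the height grows. -/
lemma nrm_limit (hq : 2 ^ 504 < Nat.card K) (hr5 : 5 ≤ r) (hr7 : r ≤ 7) {δ : ℝ} (hδ : 0 < δ) :
    ∃ H : ℕ, ∀ (c c' : Fin r → K), Function.Injective c → Function.Injective c' →
      ∀ (x : ℕ × ℕ × (Fin r → ℕ)) (u w : ℕ), InCone r x u w → H ≤ hN r x →
      |nrm c c' x - (Nat.card K : ℝ) ^ 2 * ((1 - (Nat.card K : ℝ)⁻¹) ^ (r + 2))⁻¹ *
        ∏' cp : ClosedPoint K, tauFactor (Nat.card K) r (cpDeg cp)| ≤ δ := by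
  have hq1' : 1 < Nat.card K := lt_of_le_of_lt Nat.one_le_two_pow hq
  have hq1 : (1 : ℝ) < Nat.card K := by exact_mod_cast hq1'
  have hqm : ((Nat.card K - 1 : ℕ) : ℝ) = (Nat.card K : ℝ) - 1 := by
    rw [Nat.cast_sub hq1'.le]; simp
  set q : ℝ := ((Nat.card K : ℕ) : ℝ) with hqd
  have hq0 : 0 < q := by linarith
  have hqp : 0 < q - 1 := by linarith
  set D : ℝ := q ^ 2 * ((1 - q⁻¹) ^ (r + 2))⁻¹ with hD
  have hDeq : D = q ^ (r + 4) / (q - 1) ^ (r + 2) := by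
    have : 1 - q⁻¹ = (q - 1) / q := by field_simp
    rw [hD, this, div_pow, inv_div, show r + 4 = 2 + (r + 2) by omega, pow_add q 2,
      mul_div_assoc]
  have hDpos : 0 < D := by rw [hDeq]; positivity
  obtain ⟨T0, hT0⟩ := Val_limit (K := K) (r := r) hq hr7 (δ := δ / D) (by positivity)
  refine ⟨1000 * (T0 + 1), fun c c' hc hc' x u w hx hH => ?_⟩
  obtain ⟨T, b, b', hT, hn⟩ := hx.narrow hr5 hr7 (by omega) hH
  have key := hT0 c c' hc hc' x.2.2 x.1 x.2.1 b b' T u w (by omega) hn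
  have e : nrm c c' x = D * (((Val c c' x.2.2 x.1 x.2.1).ncard : ℝ) / mainX K x.2.2 u w) := by
    rw [Val_ncard, hDeq, mainX, nrm, hx.hN_eq, ← hqd, Nat.cast_mul, Nat.cast_pow, hqm,
      show ∑ i, x.2.2 i + r + (u + w + 4) = (r + 4) + (u + w + ∑ i, x.2.2 i) by omega,
      pow_add q (r + 4), pow_add (q - 1) r 2]
    field_simp
  rw [e, ← mul_sub, abs_mul, abs_of_pos hDpos]
  calc _ ≤ D * (δ / D) := by gcongr
    _ = δ := by field_simp

end Pointwise
end ManinDP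

/-! ### Lattice points on the slices of the cone -/

namespace ManinDP
open MeasureTheory

section Lattice

/-- Lattice points of dilates of a bounded closed convex set are counted by its volume. -/
lemma lattice_count {ι : Type} [Fintype ι] (s : Set (ι → ℝ)) (hb : Bornology.IsBounded s)
    (hcl : IsClosed s) (hcv : Convex ℝ s) :
    Tendsto (fun n : ℕ => ({z : ι → ℤ | (fun i => (z i : ℝ) / n) ∈ s}.ncard : ℝ) /
      (n : ℝ) ^ Fintype.card ι) atTop (nhds (volume.real s)) := by
  refine (tendsto_card_div_pow_atTop_volume s hb hcl.measurableSet
    (hcv.addHaar_frontier volume)).congr' ?_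
  filter_upwards [eventually_ge_atTop 1] with n hn
  have hn0 : (n : ℝ) ≠ 0 := by positivity
  congr 2
  rw [Nat.card_coe_set_eq]
  have hinj : Function.Injective fun (z : ι → ℤ) (i : ι) => (z i : ℝ) / n := by
    intro z z' h
    funext i
    have := congrFun h i
    simp only [div_left_inj' hn0] at this
    exact_mod_cast this
  rw [← Set.ncard_image_of_injective _ hinj]
  congr 1
  ext y
  rw [Set.mem_inter_iff, Set.mem_inv_smul_set_iff₀ hn0, SetLike.mem_coe,
    Module.Basis.mem_span_iff_repr_mem]
  constructor
  · rintro ⟨hy, h⟩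
    choose z hz using h
    have : (fun i => (z i : ℝ) / n) = y := by
      funext i
      have := hz i
      simp only [Pi.basisFun_repr, Pi.smul_apply, smul_eq_mul] at this
      rw [div_eq_iff hn0, mul_comm, ← this]; rfl
    exact ⟨z, by rw [Set.mem_ofPred_eq, this]; exact hy, this⟩
  · rintro ⟨z, hz, rfl⟩
    refine ⟨hz, fun i => ⟨z i, ?_⟩⟩
    simp only [Pi.basisFun_repr, Pi.smul_apply, smul_eq_mul]
    rw [mul_div_cancel₀ _ hn0]; rfl

variable (m : ℕ)

/-- The lower bound for the coordinates on the slice of height one, as a real number. -/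
def epsR (m : ℕ) : ℝ := 999 / (1000 * ((m : ℝ) + 3))

/-- The slice of height one of the cone, in the coordinates `a`, `a'`, `k₁, …, k_m`
(the remaining coordinate `k₀` being determined by the height). -/
def Slab (m : ℕ) : Set (Fin 2 ⊕ Fin m → ℝ) :=
  {y | y (Sum.inl 0) ≤ (1 - epsR m) / 2 ∧ y (Sum.inl 1) ≤ (1 - epsR m) / 2 ∧
    (∀ j, epsR m ≤ y (Sum.inr j)) ∧
    epsR m ≤ 2 * y (Sum.inl 0) + 2 * y (Sum.inl 1) - 1 - ∑ j, y (Sum.inr j)}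

lemma epsR_pos : 0 < epsR m := by unfold epsR; positivity

lemma Slab_closed : IsClosed (Slab m) := by
  have : Slab m = {y | y (Sum.inl 0) ≤ (1 - epsR m) / 2} ∩ ({y | y (Sum.inl 1) ≤ (1 - epsR m) / 2} ∩
    ((⋂ j, {y | epsR m ≤ y (Sum.inr j)}) ∩
    {y | epsR m ≤ 2 * y (Sum.inl 0) + 2 * y (Sum.inl 1) - 1 - ∑ j, y (Sum.inr j)})) := by
    ext y; simp [Slab]
  rw [this]
  refine (isClosed_le (by fun_prop) (by fun_prop)).inter
    ((isClosed_le (by fun_prop) (by fun_prop)).inter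
    ((isClosed_iInter fun j => isClosed_le (by fun_prop) (by fun_prop)).inter
    (isClosed_le (by fun_prop) (by fun_prop))))

lemma Slab_bounds {y : Fin 2 ⊕ Fin m → ℝ} (hy : y ∈ Slab m) : ∀ i, 0 ≤ y i ∧ y i ≤ 1 := by
  obtain ⟨h0, h1, h2, h3⟩ := hy
  have he := epsR_pos m
  have hs : ∀ j, 0 ≤ y (Sum.inr j) := fun j => he.le.trans (h2 j)
  have hS : 0 ≤ ∑ j, y (Sum.inr j) := Finset.sum_nonneg fun j _ => hs j
  rintro (i | j)
  · fin_cases i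
    · change 0 ≤ y (Sum.inl 0) ∧ y (Sum.inl 0) ≤ 1
      constructor <;> linarith
    · change 0 ≤ y (Sum.inl 1) ∧ y (Sum.inl 1) ≤ 1
      constructor <;> linarith
  · have : y (Sum.inr j) ≤ ∑ j, y (Sum.inr j) :=
      Finset.single_le_sum (f := fun j => y (Sum.inr j)) (fun j _ => hs j) (Finset.mem_univ j)
    exact ⟨hs j, by linarith⟩

lemma Slab_bounded : Bornology.IsBounded (Slab m) :=
  (Metric.isBounded_Icc (0 : Fin 2 ⊕ Fin m → ℝ) 1).subset fun _ hy =>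
    ⟨fun i => (Slab_bounds m hy i).1, fun i => (Slab_bounds m hy i).2⟩

lemma Slab_convex : Convex ℝ (Slab m) := by
  intro x hx y hy s t hs ht hst
  obtain ⟨h0, h1, h2, h3⟩ := hx
  obtain ⟨g0, g1, g2, g3⟩ := hy
  obtain rfl : t = 1 - s := by linarith
  refine ⟨?_, ?_, fun j => ?_, ?_⟩
  all_goals simp only [Pi.add_apply, Pi.smul_apply, smul_eq_mul]
  · nlinarith
  · nlinarith
  · have := h2 j; have := g2 j; nlinarith
  · rw [Finset.sum_add_distrib, ← Finset.mul_sum, ← Finset.mul_sum]; nlinarith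

/-- The slice has nonempty interior: it contains a neighbourhood of its barycentre. -/
lemma Slab_volume : 0 < volume.real (Slab m) := by
  let U : Set (Fin 2 ⊕ Fin m → ℝ) :=
    {y | y (Sum.inl 0) < (1 - epsR m) / 2} ∩ ({y | y (Sum.inl 1) < (1 - epsR m) / 2} ∩
    ((⋂ j, {y | epsR m < y (Sum.inr j)}) ∩
    {y | epsR m < 2 * y (Sum.inl 0) + 2 * y (Sum.inl 1) - 1 - ∑ j, y (Sum.inr j)}))
  have hU : IsOpen U :=
    (isOpen_lt (by fun_prop) (by fun_prop)).inter
      ((isOpen_lt (by fun_prop) (by fun_prop)).inter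
      ((isOpen_iInter_of_finite fun j => isOpen_lt (by fun_prop) (by fun_prop)).inter
      (isOpen_lt (by fun_prop) (by fun_prop))))
  have hsub : U ⊆ Slab m := fun y hy =>
    ⟨le_of_lt hy.1, le_of_lt hy.2.1, fun j => le_of_lt (Set.mem_iInter.1 hy.2.2.1 j),
      le_of_lt hy.2.2.2⟩
  have hm : (0 : ℝ) < (m : ℝ) + 3 := by positivity
  have hlt : epsR m < 1 / ((m : ℝ) + 3) := by
    unfold epsR; rw [div_lt_div_iff₀ (by positivity) hm]; linarith
  -- the barycentre: all cone coordinates are equal to `1/(m+3)`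
  have hne : U.Nonempty := by
    refine ⟨Sum.elim (fun _ => (1 - 1 / ((m : ℝ) + 3)) / 2) (fun _ => 1 / ((m : ℝ) + 3)),
      ?_, ?_, Set.mem_iInter.2 fun j => ?_, ?_⟩
    · simp only [Set.mem_ofPred_eq, Sum.elim_inl]; linarith
    · simp only [Set.mem_ofPred_eq, Sum.elim_inl]; linarith
    · simpa only [Set.mem_ofPred_eq, Sum.elim_inr] using hlt
    · simp only [Set.mem_ofPred_eq, Sum.elim_inl, Sum.elim_inr, Finset.sum_const, Finset.card_univ,
        Fintype.card_fin, nsmul_eq_mul]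
      refine hlt.trans_le (le_of_eq ?_)
      field_simp
      ring
  have h1 : 0 < volume (Slab m) := lt_of_lt_of_le (hU.measure_pos volume hne) (measure_mono hsub)
  exact ENNReal.toReal_pos h1.ne' (Slab_bounded m).measure_lt_top.ne

end Lattice

section Slices
variable {m : ℕ}

/-- The lattice points of the cone of height `n`. -/
def sliceSet (r n : ℕ) : Set (ℕ × ℕ × (Fin r → ℕ)) :=
  {x | (∃ u w, InCone r x u w) ∧ hN r x = n}

lemma mem_slice {r n : ℕ} {x : ℕ × ℕ × (Fin r → ℕ)} (hn : 0 < n) :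
    x ∈ sliceSet r n ↔ 2 * (x.1 : ℤ) + 2 * x.2.1 - ∑ i, (x.2.2 i : ℤ) = n ∧
      999 * (n : ℤ) ≤ 1000 * (r + 2) * (n - 2 * x.2.1) ∧
      999 * (n : ℤ) ≤ 1000 * (r + 2) * (n - 2 * x.1) ∧
      ∀ i, 999 * (n : ℤ) ≤ 1000 * (r + 2) * x.2.2 i := by
  constructor
  · rintro ⟨⟨u, w, h⟩, rfl⟩
    rw [h.hN_eq]
    obtain ⟨h1, h2, h3, h4, h5⟩ := h
    have h1' : 2 * (x.1 : ℤ) = ∑ i, (x.2.2 i : ℤ) + u := by exact_mod_cast h1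
    have h2' : 2 * (x.2.1 : ℤ) = ∑ i, (x.2.2 i : ℤ) + w := by exact_mod_cast h2
    push_cast
    refine ⟨by linarith, ?_, ?_, fun i => by exact_mod_cast h5 i⟩
    · rw [show (u : ℤ) + w + ∑ i, (x.2.2 i : ℤ) - 2 * x.2.1 = u by linarith]; exact_mod_cast h3
    · rw [show (u : ℤ) + w + ∑ i, (x.2.2 i : ℤ) - 2 * x.1 = w by linarith]; exact_mod_cast h4
  · rintro ⟨h1, h2, h3, h4⟩
    have hn' : (0 : ℤ) < n := by exact_mod_cast hn
    have hM : (0 : ℤ) < 1000 * (r + 2) := by positivity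
    have g2 : 0 ≤ (n : ℤ) - 2 * x.2.1 := by
      by_contra hneg
      push Not at hneg
      have := mul_neg_of_pos_of_neg hM hneg
      linarith
    have g3 : 0 ≤ (n : ℤ) - 2 * x.1 := by
      by_contra hneg
      push Not at hneg
      have := mul_neg_of_pos_of_neg hM hneg
      linarith
    obtain ⟨u, hu⟩ := Int.eq_ofNat_of_zero_le g2
    obtain ⟨w, hw⟩ := Int.eq_ofNat_of_zero_le g3
    have hnn : (n : ℤ) = u + w + ∑ i, (x.2.2 i : ℤ) := by linarith
    rw [hu, hnn] at h2
    rw [hw, hnn] at h3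
    have hc : InCone r x u w := by
      refine ⟨?_, ?_, by exact_mod_cast h2, by exact_mod_cast h3, fun i => ?_⟩
      · have : 2 * (x.1 : ℤ) = ∑ i, (x.2.2 i : ℤ) + u := by linarith
        exact_mod_cast this
      · have : 2 * (x.2.1 : ℤ) = ∑ i, (x.2.2 i : ℤ) + w := by linarith
        exact_mod_cast this
      · have := h4 i; rw [hnn] at this; exact_mod_cast this
    refine ⟨⟨u, w, hc⟩, ?_⟩
    rw [hc.hN_eq]
    exact_mod_cast hnn.symm

lemma slab_iff {n : ℕ} (hn : 0 < n) (z : Fin 2 ⊕ Fin m → ℤ) :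
    (fun i => (z i : ℝ) / n) ∈ Slab m ↔
      999 * (n : ℤ) ≤ 1000 * ((m + 1 : ℕ) + 2) * (n - 2 * z (Sum.inl 1)) ∧
      999 * (n : ℤ) ≤ 1000 * ((m + 1 : ℕ) + 2) * (n - 2 * z (Sum.inl 0)) ∧
      (∀ j, 999 * (n : ℤ) ≤ 1000 * ((m + 1 : ℕ) + 2) * z (Sum.inr j)) ∧
      999 * (n : ℤ) ≤ 1000 * ((m + 1 : ℕ) + 2) *
        (2 * z (Sum.inl 0) + 2 * z (Sum.inl 1) - n - ∑ j, z (Sum.inr j)) := by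
  have hn' : (0 : ℝ) < n := by exact_mod_cast hn
  have hM : (0 : ℝ) < 1000 * ((m : ℝ) + 3) := by positivity
  have key : ∀ t : ℝ, ∀ s : ℤ, t * n = s →
      (epsR m ≤ t ↔ 999 * (n : ℤ) ≤ 1000 * ((m + 1 : ℕ) + 2) * s) := by
    intro t s h
    rw [epsR, div_le_iff₀ hM]
    have : (999 * (n : ℤ) ≤ 1000 * ((m + 1 : ℕ) + 2) * s) ↔
        ((999 * n : ℝ) ≤ t * (1000 * (m + 3)) * n) := by
      rw [show t * (1000 * ((m : ℝ) + 3)) * n = 1000 * (m + 3) * (t * n) by ring, h,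
        ← Int.cast_le (R := ℝ)]
      push_cast
      rw [show ((m : ℝ) + 1 + 2) = m + 3 by ring]
    rw [this, mul_le_mul_iff_left₀ hn']
  have k0 : (z (Sum.inl 0) : ℝ) / n ≤ (1 - epsR m) / 2 ↔
      epsR m ≤ 1 - 2 * ((z (Sum.inl 0) : ℝ) / n) := by constructor <;> intro h <;> linarith
  have k1 : (z (Sum.inl 1) : ℝ) / n ≤ (1 - epsR m) / 2 ↔
      epsR m ≤ 1 - 2 * ((z (Sum.inl 1) : ℝ) / n) := by constructor <;> intro h <;> linarith
  rw [Slab, Set.mem_ofPred_eq, k0, k1,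
    key _ (n - 2 * z (Sum.inl 0)) (by push_cast; field_simp),
    key _ (n - 2 * z (Sum.inl 1)) (by push_cast; field_simp),
    key _ (2 * z (Sum.inl 0) + 2 * z (Sum.inl 1) - n - ∑ j, z (Sum.inr j))
      (by rw [← Finset.sum_div]; push_cast; field_simp)]
  have k2 : ∀ j, epsR m ≤ (z (Sum.inr j) : ℝ) / n ↔
      999 * (n : ℤ) ≤ 1000 * ((m + 1 : ℕ) + 2) * z (Sum.inr j) := fun j =>
    key _ _ (by field_simp)
  simp only [k2]
  tauto

/-- The projection of a class to the coordinates used for `Slab`. -/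
def slabCoord (x : ℕ × ℕ × (Fin (m + 1) → ℕ)) : Fin 2 ⊕ Fin m → ℤ :=
  Sum.elim ![(x.1 : ℤ), (x.2.1 : ℤ)] fun j => (x.2.2 j.succ : ℤ)

/-- Omitting the coordinate `k₀`, which is determined by the height, identifies the classes of
height `n` with the integral points of `n • Slab`. -/
lemma slice_ncard {n : ℕ} (hn : 0 < n) : (sliceSet (m + 1) n).ncard =
    {z : Fin 2 ⊕ Fin m → ℤ | (fun i => (z i : ℝ) / n) ∈ Slab m}.ncard := by
  refine Set.ncard_congr (fun x _ => slabCoord x) ?_ ?_ ?_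
  · intro x hx
    obtain ⟨h1, h2, h3, h4⟩ := (mem_slice hn).1 hx
    rw [Set.mem_ofPred_eq, slab_iff hn]
    rw [Fin.sum_univ_succ] at h1
    have e : 2 * (x.1 : ℤ) + 2 * x.2.1 - n - ∑ i : Fin m, (x.2.2 i.succ : ℤ) = x.2.2 0 := by
      linarith
    simp only [slabCoord, Sum.elim_inl, Sum.elim_inr, Matrix.cons_val_zero, Matrix.cons_val_one]
    rw [e]
    exact ⟨h2, h3, fun j => h4 _, h4 0⟩
  · intro x y hx hy h
    have h1 := ((mem_slice hn).1 hx).1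
    have h2 := ((mem_slice hn).1 hy).1
    rw [Fin.sum_univ_succ] at h1 h2
    have a0 : (x.1 : ℤ) = y.1 := congrFun h (Sum.inl 0)
    have a1 : (x.2.1 : ℤ) = y.2.1 := congrFun h (Sum.inl 1)
    have a2 : ∀ j : Fin m, (x.2.2 j.succ : ℤ) = y.2.2 j.succ := fun j => congrFun h (Sum.inr j)
    rw [Finset.sum_congr rfl fun j _ => a2 j] at h1
    refine Prod.ext (by exact_mod_cast a0) (Prod.ext (by exact_mod_cast a1) (funext fun i => ?_))
    refine Fin.cases ?_ (fun j => ?_) i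
    · have : (x.2.2 0 : ℤ) = y.2.2 0 := by linarith
      exact_mod_cast this
    · exact_mod_cast a2 j
  · intro z hz
    have hzS : (fun i => (z i : ℝ) / n) ∈ Slab m := hz
    have hb := fun i => (Slab_bounds m hzS i).1
    have hn' : (0 : ℝ) < n := by exact_mod_cast hn
    have hz0 : ∀ i, 0 ≤ z i := fun i => by
      have := mul_nonneg (hb i) hn'.le
      rw [div_mul_cancel₀ _ hn'.ne'] at this
      exact_mod_cast this
    obtain ⟨h1, h2, h3, h4⟩ := (slab_iff hn z).1 hz
    have hk0 : 0 ≤ 2 * z (Sum.inl 0) + 2 * z (Sum.inl 1) - n - ∑ j, z (Sum.inr j) := by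
      by_contra hneg
      push Not at hneg
      have := mul_neg_of_pos_of_neg (a := 1000 * (((m + 1 : ℕ) : ℤ) + 2)) (by positivity) hneg
      omega
    have hz' : ∀ i, ((z i).toNat : ℤ) = z i := fun i => Int.toNat_of_nonneg (hz0 i)
    refine ⟨((z (Sum.inl 0)).toNat, (z (Sum.inl 1)).toNat, Fin.cons
      (2 * z (Sum.inl 0) + 2 * z (Sum.inl 1) - n - ∑ j, z (Sum.inr j)).toNat
      fun j => (z (Sum.inr j)).toNat), ?_, ?_⟩
    · rw [mem_slice hn, Fin.sum_univ_succ]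
      simp only [Fin.cons_zero, Fin.cons_succ, hz', Int.toNat_of_nonneg hk0]
      refine ⟨by ring, h1, h2, fun i => ?_⟩
      refine Fin.cases ?_ (fun j => ?_) i
      · simp only [Fin.cons_zero, Int.toNat_of_nonneg hk0]; exact h4
      · simp only [Fin.cons_succ, hz']; exact h3 j
    · funext i
      rcases i with i | j
      · fin_cases i
        · exact hz' _
        · exact hz' _
      · exact hz' _

lemma slice_finite {r n : ℕ} (hn : 0 < n) : (sliceSet r n).Finite := by
  refine ((Set.finite_Iic n).prod ((Set.finite_Iic n).prod
    (Set.Finite.pi' fun _ : Fin r => Set.finite_Iic n))).subset ?_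
  rintro x ⟨⟨u, w, h⟩, h'⟩
  rw [h.hN_eq] at h'
  have hk : ∀ i, x.2.2 i ≤ ∑ i, x.2.2 i := fun i =>
    Finset.single_le_sum (fun _ _ => Nat.zero_le _) (Finset.mem_univ i)
  obtain ⟨h1, h2, -⟩ := h
  refine ⟨?_, ?_, fun i => ?_⟩
  · change x.1 ≤ n; omega
  · change x.2.1 ≤ n; omega
  · have := hk i
    change x.2.2 i ≤ n; omega

/-- The number of lattice points on the slices of the cone grows like a positive multiple
of `n^{r+1}`. -/
lemma slice_limit {r : ℕ} (hr : 1 ≤ r) : ∃ V : ℝ, 0 < V ∧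
    Tendsto (fun n : ℕ => ((sliceSet r n).ncard : ℝ) / (n : ℝ) ^ (r + 1)) atTop (nhds V) := by
  obtain ⟨m, rfl⟩ : ∃ m, r = m + 1 := ⟨r - 1, by omega⟩
  refine ⟨_, Slab_volume m, ?_⟩
  refine (lattice_count (Slab m) (Slab_bounded m) (Slab_closed m) (Slab_convex m)).congr' ?_
  filter_upwards [eventually_gt_atTop 0] with n hn
  rw [slice_ncard hn]
  congr 2
  simp; omega

end Slices
end ManinDP

/-! ### Summation against a geometric weight -/

namespace ManinDP

/-- If `b n ~ β n ^ p`, then `∑ q ^ n b n` over `1 ≤ n ≤ d` is dominated by the terms with `n`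
close to `d`: substituting `n = d - j`, dominated convergence against `C q ^ (-j)` gives the
geometric factor `∑ q ^ (-j) = (1 - q⁻¹)⁻¹`. -/
lemma geom_weight_limit {q : ℝ} (hq : 1 < q) (p : ℕ) {b : ℕ → ℝ} {β : ℝ}
    (hb : Tendsto (fun n : ℕ => b n / (n : ℝ) ^ p) atTop (nhds β)) :
    Tendsto (fun d : ℕ => (q ^ d)⁻¹ * ((d : ℝ) ^ p)⁻¹ * ∑ n ∈ Finset.Icc 1 d, q ^ n * b n)
      atTop (nhds ((1 - q⁻¹)⁻¹ * β)) := by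
  have hq0 : 0 < q := by linarith
  have hqi : q⁻¹ < 1 := inv_lt_one_of_one_lt₀ hq
  have hqi0 : 0 ≤ q⁻¹ := by positivity
  obtain ⟨C, hC⟩ : ∃ C, ∀ n : ℕ, |b n / (n : ℝ) ^ p| ≤ C := by
    obtain ⟨C, hC⟩ := (hb.abs.bddAbove_range)
    exact ⟨C, fun n => hC ⟨n, rfl⟩⟩
  -- substitute `n = d - j` and pass to the limit under the sum over `j`
  let F : ℕ → ℕ → ℝ := fun d j =>
    if j < d then q⁻¹ ^ j * (b (d - j) / ((d - j : ℕ) : ℝ) ^ p * (((d - j : ℕ) : ℝ) / d) ^ p)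
    else 0
  have key : Tendsto (fun d => ∑' j, F d j) atTop (nhds (∑' j, q⁻¹ ^ j * (β * 1 ^ p))) := by
    refine tendsto_tsum_of_dominated_convergence (bound := fun j => q⁻¹ ^ j * C)
      ((summable_geometric_of_lt_one hqi0 hqi).mul_right C) (fun j => ?_)
      (Eventually.of_forall fun d j => ?_)
    · have h1 : Tendsto (fun d : ℕ => b (d - j) / ((d - j : ℕ) : ℝ) ^ p) atTop (nhds β) :=
        hb.comp (tendsto_sub_atTop_nat j)
      have h2 : Tendsto (fun d : ℕ => ((d - j : ℕ) : ℝ) / d) atTop (nhds 1) := by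
        have h3 : Tendsto (fun d : ℕ => 1 - (j : ℝ) / d) atTop (nhds (1 - 0)) :=
          tendsto_const_nhds.sub (tendsto_const_div_atTop_nhds_zero_nat _)
        rw [sub_zero] at h3
        refine h3.congr' ?_
        filter_upwards [eventually_gt_atTop j] with d hd
        have : (d : ℝ) ≠ 0 := by
          have : 0 < d := by omega
          positivity
        rw [Nat.cast_sub hd.le]
        field_simp
      refine ((h1.mul (h2.pow p)).const_mul (q⁻¹ ^ j)).congr' ?_
      filter_upwards [eventually_gt_atTop j] with d hd
      simp only [F, if_pos hd]
    · simp only [F]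
      split_ifs with hd
      · rw [Real.norm_eq_abs, abs_mul, abs_of_nonneg (pow_nonneg hqi0 j), abs_mul]
        refine mul_le_mul_of_nonneg_left ?_ (pow_nonneg hqi0 j)
        have h0 : 0 ≤ ((d - j : ℕ) : ℝ) / d := by positivity
        have h1 : ((d - j : ℕ) : ℝ) / d ≤ 1 :=
          div_le_one_of_le₀ (by exact_mod_cast Nat.sub_le d j) (by positivity)
        rw [abs_of_nonneg (pow_nonneg h0 p)]
        calc _ ≤ C * 1 := mul_le_mul (hC _) (pow_le_one₀ h0 h1) (pow_nonneg h0 p)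
              ((abs_nonneg _).trans (hC 0))
          _ = C := mul_one C
      · rw [norm_zero]
        exact mul_nonneg (pow_nonneg hqi0 j) ((abs_nonneg _).trans (hC 0))
  rw [tsum_mul_right, tsum_geometric_of_lt_one hqi0 hqi, one_pow, mul_one] at key
  refine key.congr fun d => ?_
  rw [tsum_eq_sum (s := Finset.range d) (fun j hj => by
    simp only [F, if_neg (fun h => hj (Finset.mem_range.2 h))]), Finset.mul_sum]
  refine Finset.sum_bij' (fun j _ => d - j) (fun n _ => d - n) ?_ ?_ ?_ ?_ ?_
  · intro j hj; simp only [Finset.mem_range, Finset.mem_Icc] at *; omega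
  · intro j hj; simp only [Finset.mem_range, Finset.mem_Icc] at *; omega
  · intro j hj; simp only [Finset.mem_range] at *; omega
  · intro j hj; simp only [Finset.mem_Icc] at *; omega
  · intro j hj
    rw [Finset.mem_range] at hj
    have h0 : ((d - j : ℕ) : ℝ) ≠ 0 := by
      have : 0 < d - j := by omega
      positivity
    have h1 : (d : ℝ) ≠ 0 := by
      have : 0 < d := by omega
      positivity
    have h2 : q ^ d = q ^ j * q ^ (d - j) := by rw [← pow_add]; congr 1; omega
    simp only [F, if_pos hj]
    rw [h2, div_pow, inv_pow]
    field_simp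

/-- Averages of `g` over finite sets `S n` of size `~ V n ^ p` inherit a uniform limit of `g`. -/
lemma sum_limit {α : Type*} {S : ℕ → Finset α} {p : ℕ} {V t : ℝ} {g : α → ℝ}
    (hS : Tendsto (fun n : ℕ => ((S n).card : ℝ) / (n : ℝ) ^ p) atTop (nhds V))
    (hg : ∀ δ : ℝ, 0 < δ → ∃ H : ℕ, ∀ n, H ≤ n → ∀ x ∈ S n, |g x - t| ≤ δ) :
    Tendsto (fun n : ℕ => (∑ x ∈ S n, g x) / (n : ℝ) ^ p) atTop (nhds (V * t)) := by
  obtain ⟨C, hC⟩ : ∃ C, ∀ n : ℕ, |((S n).card : ℝ) / (n : ℝ) ^ p| ≤ C := by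
    obtain ⟨C, hC⟩ := (hS.abs.bddAbove_range)
    exact ⟨C, fun n => hC ⟨n, rfl⟩⟩
  have hC0 : 0 ≤ C := (abs_nonneg _).trans (hC 0)
  have hdiff : Tendsto (fun n : ℕ => (∑ x ∈ S n, (g x - t)) / (n : ℝ) ^ p) atTop (nhds 0) := by
    rw [Metric.tendsto_atTop]
    intro e he
    obtain ⟨H, hH⟩ := hg (e / (C + 1)) (by positivity)
    refine ⟨H, fun n hn => ?_⟩
    rw [Real.dist_eq, sub_zero, abs_div, abs_of_nonneg (a := (n : ℝ) ^ p) (by positivity)]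
    calc |∑ x ∈ S n, (g x - t)| / (n : ℝ) ^ p
        ≤ ((S n).card * (e / (C + 1))) / (n : ℝ) ^ p := by
          refine div_le_div_of_nonneg_right ?_ (by positivity)
          refine (Finset.abs_sum_le_sum_abs _ _).trans ?_
          refine (Finset.sum_le_sum fun x hx => hH n hn x hx).trans ?_
          rw [Finset.sum_const, nsmul_eq_mul]
      _ = (S n).card / (n : ℝ) ^ p * (e / (C + 1)) := by ring
      _ ≤ C * (e / (C + 1)) := by
          exact mul_le_mul_of_nonneg_right ((le_abs_self _).trans (hC n)) (by positivity)
      _ < e := by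
          rw [mul_div_assoc', div_lt_iff₀ (by positivity)]
          nlinarith
  have := hdiff.add (hS.mul_const t)
  rw [zero_add] at this
  refine this.congr fun n => ?_
  rw [Finset.sum_sub_distrib, Finset.sum_const, nsmul_eq_mul]
  ring

end ManinDP

/-! ### Assembling the sums over the cone -/

namespace ManinDP

variable {r : ℕ}

/-- The lattice points of the slice `h = n` of the cone as a finset (empty for `n = 0`). -/
noncomputable def slice (r n : ℕ) : Finset (ℕ × ℕ × (Fin r → ℕ)) :=
  if h : 0 < n then (slice_finite (r := r) h).toFinset else ∅

lemma mem_slice_iff {n : ℕ} (hn : 0 < n) {x : ℕ × ℕ × (Fin r → ℕ)} :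
    x ∈ slice r n ↔ (∃ u w, InCone r x u w) ∧ hN r x = n := by
  rw [slice, dif_pos hn, Set.Finite.mem_toFinset]; rfl

lemma slice_card {n : ℕ} (hn : 0 < n) : (slice r n).card = (sliceSet r n).ncard := by
  rw [slice, dif_pos hn, Set.ncard_eq_toFinset_card _ (slice_finite hn)]

lemma finsum_cone (hr5 : 5 ≤ r) (hr7 : r ≤ 7) (d : ℕ) (F : ℕ × ℕ × (Fin r → ℕ) → ℝ) :
    ∑ᶠ x ∈ coneSet r (eps r) (eps r) d, F x = ∑ n ∈ Finset.Icc 1 d, ∑ x ∈ slice r n, F x := by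
  classical
  have hset : coneSet r (eps r) (eps r) d = ↑((Finset.Icc 1 d).biUnion (slice r)) := by
    ext x
    rw [mem_coneSet hr5 hr7, Finset.mem_coe, Finset.mem_biUnion]
    constructor
    · rintro ⟨h1, h2, h3⟩
      exact ⟨hN r x, Finset.mem_Icc.2 ⟨h2, h3⟩, (mem_slice_iff h2).2 ⟨h1, rfl⟩⟩
    · rintro ⟨n, hn, hx⟩
      obtain ⟨h2, h3⟩ := Finset.mem_Icc.1 hn
      obtain ⟨h1, h4⟩ := (mem_slice_iff h2).1 hx
      exact ⟨h1, by omega, by omega⟩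
  rw [hset, finsum_mem_coe_finset, Finset.sum_biUnion]
  intro n hn m hm hnm
  rw [Function.onFun, Finset.disjoint_left]
  intro x hx hx'
  exact hnm (((mem_slice_iff (Finset.mem_Icc.1 hn).1).1 hx).2.symm.trans
    ((mem_slice_iff (Finset.mem_Icc.1 hm).1).1 hx').2)

lemma slice_card_limit (hr : 1 ≤ r) : ∃ V, 0 < V ∧
    Tendsto (fun n : ℕ => ((slice r n).card : ℝ) / (n : ℝ) ^ (r + 1)) atTop (nhds V) := by
  obtain ⟨V, hV, h⟩ := slice_limit hr
  refine ⟨V, hV, h.congr' ?_⟩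
  filter_upwards [eventually_gt_atTop 0] with n hn
  rw [slice_card hn]

end ManinDP

theorem manin_lower_bound_low_degree_delPezzo (r : ℕ)
    (hr : r ∈ ({5, 6, 7} : Set ℕ)) :
    ∃ Cr : ℝ, 1 ≤ Cr ∧
      ∀ (K : Type) [Field K] [Fintype K], Cr < (Fintype.card K : ℝ) →
      ∀ (c c' : Fin r → K), Function.Injective c → Function.Injective c' →
      ∃ ε : ℚ, 0 < ε ∧ ∃ A : ℝ, 0 < A ∧
        Tendsto (fun d : ℕ =>
            ((Fintype.card K : ℝ) ^ d)⁻¹ * ((d : ℝ) ^ (r + 1))⁻¹ *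
              ∑ᶠ x ∈ coneSet r ε ε d, (Fintype.card K : ℝ) ^ (hN r x))
          atTop (nhds A) ∧
        Tendsto (fun d : ℕ =>
            (((Fintype.card K : ℝ) - 1) ^ 2)⁻¹ *
              (∑ᶠ x ∈ coneSet r ε ε d,
                ((MtildeSet K r c c' x.1 x.2.1 x.2.2).ncard : ℝ)) /
              ((Fintype.card K : ℝ) ^ d * (d : ℝ) ^ (r + 1)))
          atTop (nhds (A * tauNumber K r)) := by
  have hr5 : 5 ≤ r := by
    rcases hr with rfl | rfl | rfl <;> decide
  have hr7 : r ≤ 7 := by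
    rcases hr with rfl | rfl | rfl <;> decide
  -- `504 = 2 * 7 * 36`: the `2 r` divisors of forms of degree at most `36 T` cost `2 ^ (504 T)`,
  -- against a saving of `q ^ T`
  refine ⟨2 ^ 504, one_le_pow₀ one_le_two, ?_⟩
  intro K _ _ hK c c' hc hc'
  refine ⟨ManinDP.eps r, ManinDP.eps_pos, ?_⟩
  have hcard : Nat.card K = Fintype.card K := Nat.card_eq_fintype_card
  have hKN : 2 ^ 504 < Nat.card K := by
    rw [hcard]; exact_mod_cast hK
  have hq : (1 : ℝ) < (Fintype.card K : ℝ) := lt_of_le_of_lt (one_le_pow₀ one_le_two) hK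
  obtain ⟨V, hV, hS⟩ := ManinDP.slice_card_limit (r := r) (by omega)
  have hqi : (Fintype.card K : ℝ)⁻¹ < 1 := inv_lt_one_of_one_lt₀ hq
  refine ⟨(1 - (Fintype.card K : ℝ)⁻¹)⁻¹ * V, mul_pos (inv_pos.2 (by linarith)) hV, ?_, ?_⟩
  -- the volume of the cone: every class on the slice of height `n` has weight `q ^ n`
  · refine (ManinDP.geom_weight_limit hq (r + 1) hS).congr fun d => ?_
    rw [ManinDP.finsum_cone hr5 hr7]
    congr 1
    refine Finset.sum_congr rfl fun n hn => ?_
    rw [Finset.sum_congr rfl (g := fun _ => (Fintype.card K : ℝ) ^ n) fun x hx => by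
      rw [((ManinDP.mem_slice_iff (Finset.mem_Icc.1 hn).1).1 hx).2],
      Finset.sum_const, nsmul_eq_mul, mul_comm]
  -- normalized counts converge to `τ` uniformly on the slices, hence so do their averages
  · have hlim := ManinDP.sum_limit (g := ManinDP.nrm c c') (t := tauNumber K r) hS
      fun δ hδ => by
        obtain ⟨H, hH⟩ := ManinDP.nrm_limit (K := K) hKN hr5 hr7 hδ
        refine ⟨H + 1, fun n hn x hx => ?_⟩
        obtain ⟨⟨u, w, hx1⟩, hx2⟩ := (ManinDP.mem_slice_iff (by omega)).1 hx
        have := hH c c' hc hc' x u w hx1 (by omega)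
        rwa [hcard] at this
    have hmain := ManinDP.geom_weight_limit hq (r + 1) hlim
    rw [← mul_assoc] at hmain
    refine hmain.congr fun d => ?_
    rw [ManinDP.finsum_cone hr5 hr7, div_eq_mul_inv, mul_inv, mul_comm, Finset.mul_sum]
    congr 1
    refine Finset.sum_congr rfl fun n hn => ?_
    rw [Finset.mul_sum, Finset.mul_sum]
    refine Finset.sum_congr rfl fun x hx => ?_
    rw [ManinDP.nrm, hcard, ((ManinDP.mem_slice_iff (Finset.mem_Icc.1 hn).1).1 hx).2]
    have : (Fintype.card K : ℝ) ^ n ≠ 0 := pow_ne_zero _ (zero_lt_one.trans hq).ne'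
    field_simp

end
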